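/- Let η_♥(t) = e^{−t²/2}, let δ ∈ ℝ, and let F_δ be the Mellin transform of η_♥(t)e(δt). Let χ be a primitive Dirichlet character mod q, q ≥ 1. Assume all nontrivial zeros ρ of L(s,χ) with |Im(ρ)| ≤ T₀ satisfy Re(ρ) = 1/2, where T₀ ≥ max(4π²|δ|, 100). Then ∑_{ρ nontrivial, |Im(ρ)| > T₀} |F_δ(ρ)| ≤ log(qT₀/2π) · (4.329 e^{−0.1598 T₀} + 0.802 |δ| e^{−0.1065 (T₀/(π|δ|))²}). -/

import Mathlib

open MeasureTheory Set

/-- `e(t) = e^{2πit}`. -/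
noncomputable def e2pi (t : ℝ) : ℂ := Complex.exp (2 * Real.pi * Complex.I * t)

/-- `F_δ`, the Mellin transform of `η♥(t) e(δt)` with `η♥(t) = e^{-t²/2}`. -/
noncomputable def Fdelta (δ : ℝ) (s : ℂ) : ℂ :=
  mellin (fun t => (Real.exp (-t^2 / 2) : ℂ) * e2pi (δ * t)) s

/-!
On the ray `arg t = θ` the factor `t ^ (i γ)` gains the decay `exp (-θ γ)`, while `exp (i l t)` with
`l = 2πδ` can grow. Rotating the contour of the Mellin integral to a ray with `0 < θ < π / 4`
therefore bounds `|F_δ(β + iγ)|` by `exp (-θ γ) / γ` times moments of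
`exp (-cos (2θ) r² / 2 + b r)`.
The bound is affine in `β`, so averaging over `ρ` and `1 - conj ρ`, which have the same multiplicity
by the functional equation, makes it independent of `β`.

It remains to sum `exp (-θ (γ - T))` over the zeros with `γ > T`. Jensen's formula on discs centred
at `2 + i t` bounds the number of zeros near height `t`, and a geometric superposition of such
estimates over `t = T + 4.5 k` dominates the exponential. Finally `θ` is optimised in terms of
`u = l² / T`: the largest angle serves for small `u`, an angle proportional to `T / l²` for large
`u`, and finitely many cells of `u` with fixed rational data cover the transition. Zeros below the
real axis are zeros of `L(s, χ⁻¹)` above it, with `-l` in place of `l`.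
-/

namespace HighZeros
open Complex (I)
open scoped Real ComplexConjugate

/-! ### Dirichlet `L`-functions away from the critical strip -/

section LFunctionEdges

lemma norm_LSeries_le {f : ℕ → ℂ} (hf : ∀ n, ‖f n‖ ≤ 1) {s : ℂ} (hs : 2 ≤ s.re) :
    ‖LSeries f s‖ ≤ π ^ 2 / 6 := by
  refine tsum_of_norm_bounded hasSum_zeta_two fun n ↦ ?_
  rcases eq_or_ne n 0 with rfl | hn
  · simp
  · rw [LSeries.norm_term_eq, if_neg hn]
    have one_le_n : (1 : ℝ) ≤ n := by exact_mod_cast Nat.one_le_iff_ne_zero.mpr hn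
    have : (n : ℝ) ^ 2 ≤ (n : ℝ) ^ s.re := by
      rw [← Real.rpow_two]
      exact Real.rpow_le_rpow_of_exponent_le one_le_n hs
    gcongr
    exact hf n

variable {q : ℕ} [NeZero q] {χ : DirichletCharacter ℂ q}

lemma norm_LFunction_le (χ : DirichletCharacter ℂ q) {s : ℂ} (hs : 2 ≤ s.re) :
    ‖χ.LFunction s‖ ≤ π ^ 2 / 6 := by
  rw [χ.LFunction_eq_LSeries (by linarith)]
  exact norm_LSeries_le (fun n ↦ χ.norm_le_one _) hs

lemma one_le_norm_LFunction_mul (χ : DirichletCharacter ℂ q) {s : ℂ} (hs : 2 ≤ s.re) :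
    1 ≤ ‖χ.LFunction s‖ * (π ^ 2 / 6) := by
  rw [χ.LFunction_eq_LSeries (by linarith)]
  have norm_mul_moebius :=
    congrArg norm (DirichletCharacter.LSeries.mul_mu_eq_one χ (s := s) (by linarith))
  rw [norm_mul, norm_one] at norm_mul_moebius
  rw [← norm_mul_moebius]
  refine mul_le_mul_of_nonneg_left (norm_LSeries_le (fun n ↦ ?_) hs) (norm_nonneg _)
  rw [Pi.mul_apply, norm_mul]
  refine mul_le_one₀ (χ.norm_le_one _) (norm_nonneg _) ?_
  rw [Complex.norm_intCast]
  exact_mod_cast ArithmeticFunction.abs_moebius_le_one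

lemma dft_of_isPrimitive (hχ : χ.IsPrimitive) :
    ZMod.dft (χ : ZMod q → ℂ) =
      fun k ↦ χ⁻¹ (-1) * gaussSum χ ZMod.stdAddChar * χ⁻¹ k := by
  ext k
  rw [hχ.fourierTransform_eq_inv_mul_gaussSum k, ← neg_one_mul k, map_mul]
  ring

lemma norm_gaussSum (hχ : χ.IsPrimitive) :
    ‖gaussSum χ (ZMod.stdAddChar (N := q))‖ = √q := by
  have dft_dft := congrFun (ZMod.dft_dft (χ : ZMod q → ℂ)) (-1)
  rw [funext hχ.fourierTransform_eq_inv_mul_gaussSum, ZMod.dft_apply] at dft_dft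
  have sum_eq : ∑ j : ZMod q, ZMod.stdAddChar (-(j * -1)) •
        (χ⁻¹ (-j) * gaussSum χ ZMod.stdAddChar) =
      gaussSum χ⁻¹ (ZMod.stdAddChar (N := q))⁻¹ * gaussSum χ ZMod.stdAddChar := by
    rw [gaussSum.eq_1 χ⁻¹, Finset.sum_mul, ← Equiv.sum_comp (Equiv.neg (ZMod q))]
    refine Finset.sum_congr rfl fun j _ ↦ ?_
    simp only [Equiv.neg_apply, neg_neg, mul_neg, mul_one, AddChar.inv_apply, smul_eq_mul]
    ring
  rw [sum_eq, ← star_gaussSum_eq] at dft_dft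
  simp only [neg_neg, map_one, smul_eq_mul, mul_one] at dft_dft
  have norm_sq := congrArg norm dft_dft
  rw [norm_mul, norm_star, Complex.norm_natCast] at norm_sq
  rw [eq_comm, Real.sqrt_eq_iff_mul_self_eq (by positivity) (norm_nonneg _)]
  exact norm_sq.symm

lemma LFunction_const_mul (c : ℂ) (Φ : ZMod q → ℂ) (s : ℂ) :
    ZMod.LFunction (fun k ↦ c * Φ k) s = c * ZMod.LFunction Φ s := by
  simp only [ZMod.LFunction, mul_assoc, Finset.mul_sum]
  exact Finset.sum_congr rfl fun j _ ↦ by ring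

lemma LFunction_one_sub (hχ : χ.IsPrimitive) {s : ℂ} (hs : 1 < s.re) :
    χ.LFunction (1 - s) = q ^ (s - 1) * (2 * π) ^ (-s) * Complex.Gamma s *
      ((Complex.exp (π * I * s / 2) + χ (-1) * Complex.exp (-π * I * s / 2)) *
        (χ⁻¹ (-1) * gaussSum χ ZMod.stdAddChar * χ⁻¹.LFunction s)) := by
  have s_ne_neg (n : ℕ) : s ≠ -n := by
    rintro rfl
    simp only [Complex.neg_re, Complex.natCast_re] at hs
    linarith [(n.cast_nonneg : (0 : ℝ) ≤ n)]
  have s_ne_one : s ≠ 1 := by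
    rintro rfl
    simp at hs
  have dft_neg : ZMod.dft (fun x ↦ χ (-x)) =
      fun k ↦ χ (-1) * (χ⁻¹ (-1) * gaussSum χ ZMod.stdAddChar) * χ⁻¹ k := by
    have : (fun x ↦ χ (-x)) = χ (-1) • (χ : ZMod q → ℂ) := by
      ext x
      rw [← neg_one_mul x, map_mul]
      rfl
    rw [this, map_smul, dft_of_isPrimitive hχ]
    ext k
    simp only [Pi.smul_apply, smul_eq_mul]
    ring
  rw [DirichletCharacter.LFunction, ZMod.LFunction_one_sub _ s_ne_neg (Or.inr s_ne_one),
    dft_of_isPrimitive hχ, dft_neg, LFunction_const_mul, LFunction_const_mul]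
  simp only [DirichletCharacter.LFunction]
  ring

lemma norm_exp_add_exp_le (s : ℂ) {ε : ℂ} (hε : ‖ε‖ ≤ 1) :
    ‖Complex.exp (π * I * s / 2) + ε * Complex.exp (-π * I * s / 2)‖ ≤
      2 * Real.cosh (π * s.im / 2) := by
  have norm_pos : ‖Complex.exp (π * I * s / 2)‖ = Real.exp (-(π * s.im / 2)) := by
    rw [Complex.norm_exp]
    congr 1
    simp
    ring
  have norm_neg : ‖Complex.exp (-π * I * s / 2)‖ = Real.exp (π * s.im / 2) := by
    rw [Complex.norm_exp]
    congr 1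
    simp
  calc _ ≤ ‖Complex.exp (π * I * s / 2)‖ + ‖ε * Complex.exp (-π * I * s / 2)‖ := norm_add_le _ _
    _ ≤ Real.exp (-(π * s.im / 2)) + 1 * Real.exp (π * s.im / 2) := by
      rw [norm_mul, norm_pos, norm_neg]
      gcongr
    _ = 2 * Real.cosh (π * s.im / 2) := by
      rw [Real.cosh_eq]
      ring

lemma norm_LFunction_one_sub_le (hχ : χ.IsPrimitive) {s : ℂ} (hs : 2 ≤ s.re) :
    ‖χ.LFunction (1 - s)‖ ≤ (q : ℝ) ^ (s.re - 1 / 2) * (2 * π) ^ (-s.re) *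
      (‖Complex.Gamma s‖ * (2 * Real.cosh (π * s.im / 2))) * (π ^ 2 / 6) := by
  have q_pos : (0 : ℝ) < q := by exact_mod_cast NeZero.pos q
  have norm_q_cpow : ‖(q : ℂ) ^ (s - 1)‖ = (q : ℝ) ^ (s.re - 1) := by
    rw [← Complex.ofReal_natCast, Complex.norm_cpow_eq_rpow_re_of_pos q_pos]
    simp
  have norm_two_pi_cpow : ‖(2 * π : ℂ) ^ (-s)‖ = (2 * π) ^ (-s.re) := by
    rw [show (2 * π : ℂ) = ((2 * π : ℝ) : ℂ) by push_cast; rfl,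
      Complex.norm_cpow_eq_rpow_re_of_pos (by positivity), Complex.neg_re]
  have q_rpow : (q : ℝ) ^ (s.re - 1 / 2) = (q : ℝ) ^ (s.re - 1) * √q := by
    rw [Real.sqrt_eq_rpow, ← Real.rpow_add q_pos]
    ring_nf
  rw [LFunction_one_sub hχ (by linarith), norm_mul, norm_mul, norm_mul, norm_q_cpow,
    norm_two_pi_cpow, norm_mul, norm_mul, norm_mul, norm_gaussSum hχ]
  calc _ ≤ (q : ℝ) ^ (s.re - 1) * (2 * π) ^ (-s.re) * ‖Complex.Gamma s‖ *
        (2 * Real.cosh (π * s.im / 2) * (1 * √q * (π ^ 2 / 6))) := by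
        gcongr
        · exact norm_exp_add_exp_le s (χ.norm_le_one _)
        · exact χ⁻¹.norm_le_one _
        · exact norm_LFunction_le _ hs
    _ = _ := by
        rw [q_rpow]
        ring

end LFunctionEdges

section Gamma

lemma norm_Gamma_one_add_mul_I_sq (u : ℝ) :
    ‖Complex.Gamma (1 + u * I)‖ ^ 2 * Real.sinh (π * u) = π * u := by
  rcases eq_or_ne u 0 with rfl | hu
  · simp
  have uI_ne_zero : (u * I : ℂ) ≠ 0 := by simp [hu]
  have sin_eq : Complex.sin (π * (u * I)) = Real.sinh (π * u) * I := by
    rw [← mul_assoc, Complex.sin_mul_I]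
    push_cast
    rfl
  have sin_ne_zero : Complex.sin (π * (u * I)) ≠ 0 := by
    rw [sin_eq]
    refine mul_ne_zero (Complex.ofReal_ne_zero.mpr ?_) Complex.I_ne_zero
    rw [Ne, Real.sinh_eq_zero]
    exact mul_ne_zero Real.pi_ne_zero hu
  have Gamma_conj_eq : Complex.Gamma (1 - u * I) = conj (Complex.Gamma (1 + u * I)) := by
    rw [← Complex.Gamma_conj]
    simp [sub_eq_add_neg]
  have reflection :
      Complex.Gamma (1 + u * I) * Complex.Gamma (1 - u * I) * Complex.sin (π * (u * I)) =
        u * I * π := by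
    have := (eq_div_iff sin_ne_zero).mp (Complex.Gamma_mul_Gamma_one_sub (u * I))
    rw [add_comm, Complex.Gamma_add_one _ uI_ne_zero]
    linear_combination u * I * this
  rw [Gamma_conj_eq, Complex.mul_conj, sin_eq, Complex.normSq_eq_norm_sq] at reflection
  have : ((‖Complex.Gamma (1 + u * I)‖ ^ 2 * Real.sinh (π * u) : ℝ) : ℂ) * I =
      ((π * u : ℝ) : ℂ) * I := by
    push_cast at reflection ⊢
    linear_combination reflection
  exact_mod_cast mul_right_cancel₀ Complex.I_ne_zero this

lemma mul_cosh_le_add_one_mul_sinh {x : ℝ} (hx : 0 ≤ x) :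
    x * Real.cosh x ≤ (x + 1) * Real.sinh x := by
  have exp_two_mul : Real.exp x = Real.exp (2 * x) * Real.exp (-x) := by
    rw [← Real.exp_add]
    ring_nf
  nlinarith [Real.add_one_le_exp (2 * x), Real.cosh_sub_sinh x, Real.sinh_eq x,
    Real.exp_pos (-x)]

lemma norm_Gamma_one_add_mul_I_neg (u : ℝ) :
    ‖Complex.Gamma (1 + (-u : ℝ) * I)‖ = ‖Complex.Gamma (1 + u * I)‖ := by
  rw [← Complex.norm_conj, ← Complex.Gamma_conj]
  simp

lemma norm_Gamma_one_add_mul_I_mul_cosh_sq_le (u : ℝ) :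
    (‖Complex.Gamma (1 + u * I)‖ * (2 * Real.cosh (π * u / 2))) ^ 2 ≤ 2 * π * (|u| + 1) := by
  wlog hu : 0 ≤ u with H
  · have := H (-u) (by linarith)
    rwa [abs_neg, norm_Gamma_one_add_mul_I_neg, mul_neg, neg_div, Real.cosh_neg] at this
  have pi_gt := Real.pi_gt_three
  rw [abs_of_nonneg hu]
  rcases hu.eq_or_lt with rfl | u_pos
  · norm_num
    linarith
  have sinh_two_mul : Real.sinh (π * u) =
      2 * Real.sinh (π * u / 2) * Real.cosh (π * u / 2) := by
    rw [← Real.sinh_two_mul]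
    ring_nf
  have sinh_pos : 0 < Real.sinh (π * u / 2) := Real.sinh_pos_iff.mpr (by positivity)
  have mul_sinh_eq : (‖Complex.Gamma (1 + u * I)‖ * (2 * Real.cosh (π * u / 2))) ^ 2 *
      Real.sinh (π * u / 2) = 2 * π * u * Real.cosh (π * u / 2) := by
    have := norm_Gamma_one_add_mul_I_sq u
    rw [sinh_two_mul] at this
    linear_combination (2 * Real.cosh (π * u / 2)) * this
  refine le_of_mul_le_mul_right ?_ sinh_pos
  rw [mul_sinh_eq]
  nlinarith [mul_cosh_le_add_one_mul_sinh (x := π * u / 2) (by positivity)]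

lemma norm_natCast_add_mul_I_le (k : ℕ) (u : ℝ) : ‖(k + u * I : ℂ)‖ ≤ |u| + k := by
  refine (norm_add_le _ _).trans_eq ?_
  simp [add_comm]

lemma norm_Gamma_natCast_add_one_mul_cosh_le {k : ℕ} (hk : 1 ≤ k) (u : ℝ) :
    ‖Complex.Gamma (k + 1 + u * I)‖ * (2 * Real.cosh (π * u / 2)) ≤
      √(2 * π) * (|u| + k) ^ (k + 1 / 2 : ℝ) := by
  have Gamma_succ {k : ℕ} (hk : 1 ≤ k) : Complex.Gamma (k + 1 + u * I) =
      (k + u * I) * Complex.Gamma (k + u * I) := by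
    rw [show (k + 1 + u * I : ℂ) = k + u * I + 1 by ring]
    refine Complex.Gamma_add_one _ fun h ↦ ?_
    have := congrArg Complex.re h
    simp at this
    omega
  induction k, hk using Nat.le_induction with
  | base =>
    have sqrt_bound : ‖Complex.Gamma (1 + u * I)‖ * (2 * Real.cosh (π * u / 2)) ≤
        √(2 * π) * (|u| + 1) ^ (1 / 2 : ℝ) := by
      rw [← Real.sqrt_eq_rpow, ← Real.sqrt_mul (by positivity)]
      exact Real.le_sqrt_of_sq_le (norm_Gamma_one_add_mul_I_mul_cosh_sq_le u)
    rw [Gamma_succ le_rfl, norm_mul, Nat.cast_one, Nat.cast_one, mul_assoc,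
      Real.rpow_add (by positivity), Real.rpow_one, mul_left_comm √(2 * π)]
    refine mul_le_mul ?_ sqrt_bound (by positivity) (by positivity)
    simpa only [Nat.cast_one] using norm_natCast_add_mul_I_le 1 u
  | succ k hk ih =>
    rw [Gamma_succ (by omega), norm_mul, mul_assoc]
    push_cast
    rw [show (k + 1 + 1 / 2 : ℝ) = 1 + (k + 1 / 2) by ring, Real.rpow_add (by positivity),
      Real.rpow_one, mul_left_comm √(2 * π)]
    refine mul_le_mul ?_ ?_ (by positivity) (by positivity)
    · simpa only [Nat.cast_add_one] using norm_natCast_add_mul_I_le (k + 1) u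
    · refine ih.trans ?_
      gcongr
      linarith

end Gamma

section LeftEdge

variable {q : ℕ} [NeZero q] {χ : DirichletCharacter ℂ q}

lemma norm_LFunction_neg_natCast_add_le (hχ : χ.IsPrimitive) {k : ℕ} (hk : 1 ≤ k) (u : ℝ) :
    ‖χ.LFunction (-k + u * I)‖ ≤
      (q * (|u| + k) / (2 * π)) ^ (k + 1 / 2 : ℝ) * (π ^ 2 / 6) := by
  have q_pos : (0 : ℝ) < q := by exact_mod_cast NeZero.pos q
  have one_le_k : (1 : ℝ) ≤ k := by exact_mod_cast hk
  set s : ℂ := k + 1 + (-u : ℝ) * I with hs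
  have s_re : s.re = k + 1 := by simp [hs]
  have s_im : s.im = -u := by simp [hs]
  have Gamma_le : ‖Complex.Gamma s‖ * (2 * Real.cosh (π * -u / 2)) ≤
      √(2 * π) * (|u| + k) ^ (k + 1 / 2 : ℝ) := by
    simpa only [abs_neg] using norm_Gamma_natCast_add_one_mul_cosh_le hk (-u)
  have bound := norm_LFunction_one_sub_le hχ (s := s) (by rw [s_re]; linarith)
  rw [s_re, s_im] at bound
  calc ‖χ.LFunction (-k + u * I)‖ = ‖χ.LFunction (1 - s)‖ := by
        congr 2
        rw [hs]
        push_cast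
        ring
    _ ≤ (q : ℝ) ^ (k + 1 - 1 / 2 : ℝ) * (2 * π) ^ (-(k + 1) : ℝ) *
        (√(2 * π) * (|u| + k) ^ (k + 1 / 2 : ℝ)) * (π ^ 2 / 6) := by
        refine bound.trans ?_
        gcongr
    _ = _ := by
        rw [Real.div_rpow (by positivity) (by positivity),
          Real.mul_rpow (x := (q : ℝ)) (by positivity) (by positivity),
          show (k + 1 - 1 / 2 : ℝ) = k + 1 / 2 by ring, Real.sqrt_eq_rpow,
          div_eq_mul_inv _ ((2 * π) ^ _), ← Real.rpow_neg (by positivity),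
          show (-(k + 1 / 2) : ℝ) = -(k + 1) + 1 / 2 by ring,
          Real.rpow_add (by positivity : 0 < 2 * π)]
        ring

end LeftEdge

/-! ### Growth of L-functions on vertical strips -/

section VerticalStrips

lemma exists_norm_mellin_le {f : ℝ → ℂ} {a b : ℝ}
    (hf : ∀ s : ℂ, a ≤ s.re → s.re ≤ b → MellinConvergent f s) :
    ∃ K, ∀ s : ℂ, a ≤ s.re → s.re ≤ b → ‖mellin f s‖ ≤ K := by
  have norm_integrand (s : ℂ) : ∀ t ∈ Ioi (0 : ℝ),
      ‖(t : ℂ) ^ (s - 1) • f t‖ = t ^ (s.re - 1) * ‖f t‖ := by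
    intro t ht
    rw [norm_smul, Complex.norm_cpow_eq_rpow_re_of_pos ht, Complex.sub_re, Complex.one_re]
  have integrable {s : ℂ} (hs : a ≤ s.re) (hs' : s.re ≤ b) :
      IntegrableOn (fun t : ℝ ↦ t ^ (s.re - 1) * ‖f t‖) (Ioi 0) :=
    IntegrableOn.congr_fun (hf s hs hs').norm (norm_integrand s) measurableSet_Ioi
  refine ⟨∫ t in Ioi (0 : ℝ), (t ^ (a - 1) * ‖f t‖ + t ^ (b - 1) * ‖f t‖), fun s hs hs' ↦ ?_⟩
  have integrable_left := integrable (s := a) le_rfl (hs.trans hs')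
  have integrable_right := integrable (s := b) (hs.trans hs') le_rfl
  refine (norm_integral_le_integral_norm _).trans ?_
  rw [setIntegral_congr_fun measurableSet_Ioi (norm_integrand s)]
  refine setIntegral_mono_on (integrable hs hs') (integrable_left.add integrable_right)
    measurableSet_Ioi fun t (ht : 0 < t) ↦ ?_
  rw [← add_mul]
  gcongr
  rcases le_total 1 t with h | h
  · exact (Real.rpow_le_rpow_of_exponent_le h (by linarith)).trans
      (le_add_of_nonneg_left (Real.rpow_nonneg ht.le _))
  · exact (Real.rpow_le_rpow_of_exponent_ge ht h (by linarith)).trans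
      (le_add_of_nonneg_right (Real.rpow_nonneg ht.le _))

lemma exists_norm_Λ_le {P : WeakFEPair ℂ} (hP : IsStrongFEPair P) (a b : ℝ) :
    ∃ K, ∀ s : ℂ, a ≤ s.re → s.re ≤ b → ‖P.Λ s‖ ≤ K := by
  obtain ⟨K, hK⟩ := exists_norm_mellin_le (a := a) (b := b) fun s _ _ ↦ (hP.hasMellin s).1
  exact ⟨K, fun s hs hs' ↦ (hP.hasMellin s).2 ▸ hK s hs hs'⟩

lemma exists_norm_Λ₀_le (P : WeakFEPair ℂ) (a b : ℝ) :
    ∃ K, ∀ s : ℂ, a ≤ s.re → s.re ≤ b → ‖P.Λ₀ s‖ ≤ K := by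
  obtain ⟨K, hK⟩ := exists_norm_Λ_le P.isStrongFEPair_toStrongFEPair a b
  rw [P.isStrongFEPair_toStrongFEPair.Λ_eq] at hK
  exact ⟨K, hK⟩

lemma norm_sum_mul_le_of_norm_le {ι : Type*} [Fintype ι] {c f : ι → ℂ} {K : ι → ℝ}
    (hf : ∀ j, ‖f j‖ ≤ K j) : ‖∑ j, c j * f j‖ ≤ ∑ j, ‖c j‖ * K j :=
  norm_sum_le_of_le _ fun j _ ↦ by
    rw [norm_mul]
    gcongr
    exact hf j

lemma exists_norm_completedLFunction_le {q : ℕ} [NeZero q] (χ : DirichletCharacter ℂ q)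
    (a b : ℝ) :
    ∃ K, ∀ s : ℂ, a ≤ s.re → s.re ≤ b → 1 ≤ |s.im| → ‖χ.completedLFunction s‖ ≤ K := by
  have q_pos : (0 : ℝ) < q := by exact_mod_cast NeZero.pos q
  have one_le_q : (1 : ℝ) ≤ q := by exact_mod_cast NeZero.pos q
  choose KE hKE using fun j : ZMod q ↦
    exists_norm_Λ₀_le (HurwitzZeta.hurwitzEvenFEPair (ZMod.toAddCircle j)) (a / 2) (b / 2)
  choose KO hKO using fun j : ZMod q ↦
    exists_norm_Λ_le (HurwitzZeta.isStrong_hurwitzOddFEPair (ZMod.toAddCircle j))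
      ((a + 1) / 2) ((b + 1) / 2)
  refine ⟨(q : ℝ) ^ (-a) * ∑ j, ‖χ j‖ * (KE j / 2) + (q : ℝ) ^ (-a) * ∑ j, ‖χ j‖ * (KO j / 2)
    + (q : ℝ) ^ (-a) * ‖χ 0‖ + (q : ℝ) ^ (-a) * ‖∑ j, χ j‖, fun s hsa hsb hs_im ↦ ?_⟩
  have norm_q_cpow_le : ‖(q : ℂ) ^ (-s)‖ ≤ (q : ℝ) ^ (-a) := by
    rw [← Complex.ofReal_natCast, Complex.norm_cpow_eq_rpow_re_of_pos q_pos]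
    exact Real.rpow_le_rpow_of_exponent_le one_le_q (by simpa using hsa)
  have one_le_norm : 1 ≤ ‖s‖ := hs_im.trans (Complex.abs_im_le_norm s)
  have one_le_norm_one_sub : 1 ≤ ‖1 - s‖ :=
    le_trans (by simpa using hs_im) (Complex.abs_im_le_norm (1 - s))
  rw [DirichletCharacter.completedLFunction, ZMod.completedLFunction_eq, ZMod.completedLFunction₀]
  refine norm_sub_le_of_le (norm_sub_le_of_le (norm_add_le_of_le ?even ?odd) ?zero) ?one
  case even =>
    rw [norm_mul]
    refine mul_le_mul norm_q_cpow_le (norm_sum_mul_le_of_norm_le fun j ↦ ?_) (by positivity)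
      (by positivity)
    rw [HurwitzZeta.completedHurwitzZetaEven₀, norm_div, Complex.norm_ofNat]
    gcongr
    exact hKE j _ (by simpa using by linarith) (by simpa using by linarith)
  case odd =>
    rw [norm_mul]
    refine mul_le_mul norm_q_cpow_le (norm_sum_mul_le_of_norm_le fun j ↦ ?_) (by positivity)
      (by positivity)
    rw [HurwitzZeta.completedHurwitzZetaOdd, norm_div, Complex.norm_ofNat]
    gcongr
    exact hKO j _ (by simpa using by linarith) (by simpa using by linarith)
  case zero =>
    rw [norm_div, norm_mul]
    exact (div_le_self (by positivity) one_le_norm).trans (by gcongr)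
  case one =>
    rw [norm_div, norm_mul]
    exact (div_le_self (by positivity) one_le_norm_one_sub).trans (by gcongr)

lemma norm_sin_le_exp_abs_im (w : ℂ) : ‖Complex.sin w‖ ≤ Real.exp |w.im| := by
  rw [Complex.sin, norm_div, norm_mul, Complex.norm_I, Complex.norm_ofNat, mul_one]
  have triangle := norm_sub_le (Complex.exp (-w * I)) (Complex.exp (w * I))
  rw [Complex.norm_exp, Complex.norm_exp] at triangle
  have left_le : Real.exp (-w * I).re ≤ Real.exp |w.im| :=
    Real.exp_le_exp.mpr (by simpa using le_abs_self _)
  have right_le : Real.exp (w * I).re ≤ Real.exp |w.im| :=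
    Real.exp_le_exp.mpr (by simpa using neg_le_abs _)
  linarith

lemma norm_Gamma_le_Gamma_re {s : ℂ} (hs : 0 < s.re) : ‖Complex.Gamma s‖ ≤ Real.Gamma s.re := by
  rw [Complex.Gamma_eq_integral hs, Real.Gamma_eq_integral hs, Complex.GammaIntegral]
  refine (norm_integral_le_integral_norm _).trans_eq
    (setIntegral_congr_fun measurableSet_Ioi fun t (ht : 0 < t) ↦ ?_)
  simp only [norm_mul, Complex.norm_cpow_eq_rpow_re_of_pos ht, Complex.norm_real,
    Real.norm_eq_abs, Real.abs_exp, Complex.sub_re, Complex.one_re]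

lemma inv_Gamma_eq {z : ℂ} (hz : z.im ≠ 0) :
    (Complex.Gamma z)⁻¹ =
      (z - 1)⁻¹ * (Complex.Gamma (2 - z) * Complex.sin (π * (z - 1)) / π) := by
  have z_sub_one_ne : z - 1 ≠ 0 := fun h ↦ hz (by simp [sub_eq_zero.mp h])
  have sin_ne : Complex.sin (π * (z - 1)) ≠ 0 := by
    rw [Ne, Complex.sin_eq_zero_iff]
    rintro ⟨k, hk⟩
    have := congrArg Complex.im hk
    simp [Real.pi_ne_zero, hz] at this
  have pi_ne : (π : ℂ) ≠ 0 := by exact_mod_cast Real.pi_ne_zero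
  have reflection := Complex.Gamma_mul_Gamma_one_sub (z - 1)
  rw [show 1 - (z - 1) = 2 - z by ring, eq_div_iff sin_ne] at reflection
  have Gamma_ne : Complex.Gamma (z - 1) ≠ 0 := fun h ↦ pi_ne (by simpa [h] using reflection.symm)
  have shift := Complex.Gamma_add_one (z - 1) z_sub_one_ne
  rw [sub_add_cancel] at shift
  rw [shift, mul_inv]
  congr 1
  rw [eq_div_iff pi_ne, inv_mul_eq_iff_eq_mul₀ Gamma_ne, ← mul_assoc, reflection]

lemma exists_norm_inv_Gamma_le (a : ℝ) :
    ∃ K, 0 ≤ K ∧ ∀ z : ℂ, a ≤ z.re → z.re ≤ 3 / 2 → 1 / 2 ≤ |z.im| →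
      ‖(Complex.Gamma z)⁻¹‖ ≤ K * Real.exp (π * |z.im|) := by
  have continuousOn_Gamma : ContinuousOn Real.Gamma (Icc (1 / 2) (2 - a)) := fun x hx ↦
    Real.differentiableOn_Gamma_Ioi.continuousOn.continuousAt
      (Ioi_mem_nhds (by linarith [hx.1])) |>.continuousWithinAt
  obtain ⟨K, hK⟩ := isCompact_Icc.exists_bound_of_continuousOn continuousOn_Gamma
  refine ⟨2 * |K|, by positivity, fun z hza hzb hz_im ↦ ?_⟩
  have im_ne : z.im ≠ 0 := abs_pos.mp (by linarith)
  have inv_le : ‖z - 1‖⁻¹ ≤ 2 := by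
    have : 1 / 2 ≤ ‖z - 1‖ := le_trans (by simpa using hz_im) (Complex.abs_im_le_norm (z - 1))
    rw [inv_le_comm₀ (by linarith) (by norm_num)]
    linarith
  have Gamma_le : ‖Complex.Gamma (2 - z)‖ ≤ |K| := by
    have re_eq : (2 - z).re = 2 - z.re := by simp
    refine (norm_Gamma_le_Gamma_re (by rw [re_eq]; linarith)).trans ?_
    rw [re_eq]
    exact (le_abs_self _).trans ((hK _ ⟨by linarith, by linarith⟩).trans (le_abs_self K))
  have sin_le : ‖Complex.sin (π * (z - 1))‖ ≤ Real.exp (π * |z.im|) := by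
    simpa [abs_mul, abs_of_pos Real.pi_pos] using norm_sin_le_exp_abs_im (π * (z - 1))
  have norm_pi : ‖(π : ℂ)‖ = π := by simp [abs_of_pos Real.pi_pos]
  rw [inv_Gamma_eq im_ne, norm_mul, norm_inv, norm_div, norm_mul, norm_pi, mul_assoc 2]
  refine mul_le_mul inv_le ?_ (by positivity) (by norm_num)
  exact (div_le_self (by positivity) (by linarith [Real.pi_gt_three])).trans (by gcongr)

lemma exists_norm_inv_Gammaℝ_le (a : ℝ) :
    ∃ K, 0 ≤ K ∧ ∀ z : ℂ, a ≤ z.re → z.re ≤ 3 → 1 ≤ |z.im| →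
      ‖(Complex.Gammaℝ z)⁻¹‖ ≤ K * Real.exp (2 * |z.im|) := by
  obtain ⟨K, K_nonneg, hK⟩ := exists_norm_inv_Gamma_le (a / 2)
  refine ⟨π ^ (3 / 2 : ℝ) * K, by positivity, fun z hza hzb hz_im ↦ ?_⟩
  have one_le_pi : 1 ≤ π := by linarith [Real.pi_gt_three]
  have abs_half_im : |(z / 2).im| = |z.im| / 2 := by simp [abs_div]
  have inv_Gamma_le : ‖(Complex.Gamma (z / 2))⁻¹‖ ≤ K * Real.exp (2 * |z.im|) := by
    refine (hK (z / 2) (by simpa using by linarith) (by simpa using by linarith)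
      (by rw [abs_half_im]; linarith)).trans ?_
    rw [abs_half_im]
    refine mul_le_mul_of_nonneg_left (Real.exp_le_exp.mpr ?_) K_nonneg
    nlinarith [Real.pi_lt_four, abs_nonneg z.im]
  rw [Complex.Gammaℝ_def, mul_inv, norm_mul, norm_inv,
    Complex.norm_cpow_eq_rpow_re_of_pos Real.pi_pos, ← Real.rpow_neg Real.pi_pos.le, mul_assoc]
  gcongr
  rw [← Complex.ofReal_ofNat, Complex.div_ofReal_re, Complex.neg_re]
  linarith

lemma exists_norm_inv_gammaFactor_le {q : ℕ} (χ : DirichletCharacter ℂ q) (a : ℝ) :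
    ∃ K, 0 ≤ K ∧ ∀ z : ℂ, a ≤ z.re → z.re ≤ 2 → 1 ≤ |z.im| →
      ‖(χ.gammaFactor z)⁻¹‖ ≤ K * Real.exp (2 * |z.im|) := by
  obtain ⟨K, K_nonneg, hK⟩ := exists_norm_inv_Gammaℝ_le a
  refine ⟨K, K_nonneg, fun z hza hzb hz_im ↦ ?_⟩
  rcases χ.even_or_odd with he | ho
  · rw [he.gammaFactor_def]
    exact hK z hza (by linarith) hz_im
  · rw [ho.gammaFactor_def]
    simpa using hK (z + 1) (by simpa using by linarith) (by simpa using by linarith)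
      (by simpa using hz_im)

section Entire

variable {q : ℕ} [NeZero q] (χ : DirichletCharacter ℂ q)

lemma exists_differentiable_eq_sub_one_mul_LFunction :
    ∃ g : ℂ → ℂ, Differentiable ℂ g ∧ ∀ z, z ≠ 1 → g z = (z - 1) * χ.LFunction z := by
  rcases eq_or_ne χ 1 with rfl | h
  · exact ⟨_, DirichletCharacter.differentiable_LFunctionTrivChar₁ q,
      fun z hz ↦ Function.update_of_ne hz _ _⟩
  · exact ⟨fun z ↦ (z - 1) * χ.LFunction z,
      (differentiable_id.sub_const 1).mul (DirichletCharacter.differentiable_LFunction h),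
      fun z _ ↦ rfl⟩

lemma exists_norm_LFunction_le_exp (a : ℝ) :
    ∃ K, 0 ≤ K ∧ ∀ z : ℂ, a ≤ z.re → z.re ≤ 2 → 1 ≤ |z.im| →
      ‖χ.LFunction z‖ ≤ K * Real.exp (2 * |z.im|) := by
  obtain ⟨KΛ, hKΛ⟩ := exists_norm_completedLFunction_le χ a 2
  obtain ⟨KΓ, KΓ_nonneg, hKΓ⟩ := exists_norm_inv_gammaFactor_le χ a
  refine ⟨|KΛ| * KΓ, by positivity, fun z hza hzb hz_im ↦ ?_⟩
  have z_ne_zero : z ≠ 0 := by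
    rintro rfl
    norm_num at hz_im
  rw [χ.LFunction_eq_completed_div_gammaFactor z (Or.inl z_ne_zero), div_eq_mul_inv, norm_mul,
    mul_assoc]
  exact mul_le_mul ((hKΛ z hza hzb hz_im).trans (le_abs_self _)) (hKΓ z hza hzb hz_im)
    (by positivity) (by positivity)

variable {χ} in
lemma exists_norm_le_exp_of_eq_sub_one_mul_LFunction {g : ℂ → ℂ} (hg : Differentiable ℂ g)
    (hgL : ∀ z, z ≠ 1 → g z = (z - 1) * χ.LFunction z) (a : ℝ) :
    ∃ K, 0 ≤ K ∧ ∀ z : ℂ, a ≤ z.re → z.re ≤ 2 → ‖g z‖ ≤ K * Real.exp (3 * |z.im|) := by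
  obtain ⟨KL, KL_nonneg, hKL⟩ := exists_norm_LFunction_le_exp χ a
  obtain ⟨Kg, hKg⟩ := (isCompact_Icc.reProdIm isCompact_Icc :
    IsCompact (Icc a 2 ×ℂ Icc (-1) 1)).exists_bound_of_continuousOn hg.continuous.continuousOn
  refine ⟨(|a| + 3) * KL + |Kg|, by positivity, fun z hza hzb ↦ ?_⟩
  have one_le_exp : 1 ≤ Real.exp (3 * |z.im|) := Real.one_le_exp (by positivity)
  rw [add_mul]
  rcases le_total |z.im| 1 with low | high
  · calc ‖g z‖ ≤ |Kg| * 1 := by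
          rw [mul_one]
          exact (hKg z ⟨⟨hza, hzb⟩, abs_le.mp low⟩).trans (le_abs_self _)
      _ ≤ _ := le_add_of_nonneg_of_le (by positivity) (by gcongr)
  · have z_ne_one : z ≠ 1 := by
      rintro rfl
      norm_num at high
    have norm_sub_one_le : ‖z - 1‖ ≤ (|a| + 3) * Real.exp |z.im| := by
      have re_le : |(z - 1).re| ≤ |a| + 2 := by
        rw [Complex.sub_re, Complex.one_re, abs_le]
        constructor <;> linarith [neg_abs_le a, abs_nonneg a]
      have im_eq : |(z - 1).im| = |z.im| := by simp
      have := Complex.norm_le_abs_re_add_abs_im (z - 1)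
      nlinarith [Real.add_one_le_exp |z.im|, abs_nonneg z.im, abs_nonneg a]
    calc ‖g z‖ = ‖z - 1‖ * ‖χ.LFunction z‖ := by rw [hgL z z_ne_one, norm_mul]
      _ ≤ ((|a| + 3) * Real.exp |z.im|) * (KL * Real.exp (2 * |z.im|)) := by
          gcongr
          exact hKL z hza hzb high
      _ = (|a| + 3) * KL * Real.exp (3 * |z.im|) := by
          rw [show 3 * |z.im| = |z.im| + 2 * |z.im| by ring, Real.exp_add]
          ring
      _ ≤ _ := le_add_of_nonneg_right (by positivity)

end Entire

end VerticalStrips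

/-! ### A convexity bound at large height -/

section Convexity

open Complex.HadamardThreeLines

/-- Three-lines comparison function for `L(z, χ)` near a point `s`: here `g z = (z - 1) L(z, χ)`,
the factor `1 / (z - 3)` undoes the multiplication by `z - 1` up to a constant, `X ^ (0.7 (z - 2))`
compensates the growth of `L` at the left edge, and the Gaussian factor localizes at height
`Im s`. -/
noncomputable def localizedLFunction (g : ℂ → ℂ) (X : ℝ) (s z : ℂ) : ℂ :=
  g z / (z - 3) * (X : ℂ) ^ (((7 / 10 : ℝ) : ℂ) * (z - 2)) *
    Complex.exp (((1 / 500 : ℝ) : ℂ) * (z - s) ^ 2)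

lemma norm_localizedLFunction (g : ℂ → ℂ) {X : ℝ} (hX : 0 < X) (s z : ℂ) :
    ‖localizedLFunction g X s z‖ = ‖g z‖ / ‖z - 3‖ * X ^ (7 / 10 * (z.re - 2)) *
      (Real.exp (1 / 500 * (z.re - s.re) ^ 2) * Real.exp (-(1 / 500 * (z.im - s.im) ^ 2))) := by
  have re_sq : ((z - s) ^ 2).re = (z.re - s.re) ^ 2 - (z.im - s.im) ^ 2 := by
    simp only [sq, Complex.mul_re, Complex.sub_re, Complex.sub_im]
  rw [localizedLFunction, norm_mul, norm_mul, norm_div, Complex.norm_cpow_eq_rpow_re_of_pos hX,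
    Complex.norm_exp, ← Real.exp_add, Complex.re_ofReal_mul, Complex.re_ofReal_mul, re_sq,
    Complex.sub_re, Complex.re_ofNat]
  congr 2
  ring

lemma sub_three_ne_zero {z : ℂ} (hz : z.re ≤ 2) : z - 3 ≠ 0 := fun h ↦ by
  have := congrArg Complex.re h
  norm_num at this
  linarith

lemma one_le_norm_sub_three {z : ℂ} (hz : z.re ≤ 2) : 1 ≤ ‖z - 3‖ := by
  refine le_trans ?_ (Complex.abs_re_le_norm (z - 3))
  rw [Complex.sub_re, Complex.re_ofNat, abs_sub_comm]
  exact (by linarith : 1 ≤ 3 - z.re).trans (le_abs_self _)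

lemma norm_sub_one_le_norm_sub_three {z : ℂ} (hz : z.re ≤ 2) : ‖z - 1‖ ≤ ‖z - 3‖ := by
  rw [← sq_le_sq₀ (norm_nonneg _) (norm_nonneg _), ← Complex.normSq_eq_norm_sq,
    ← Complex.normSq_eq_norm_sq, Complex.normSq_apply, Complex.normSq_apply]
  simp only [Complex.sub_re, Complex.sub_im, Complex.one_re, Complex.one_im, Complex.re_ofNat,
    Complex.im_ofNat]
  nlinarith

lemma diffContOnCl_localizedLFunction {g : ℂ → ℂ} (hg : Differentiable ℂ g) {X : ℝ} (hX : 0 < X)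
    (s : ℂ) (a : ℝ) : DiffContOnCl ℂ (localizedLFunction g X s) (verticalStrip a 2) := by
  refine DifferentiableOn.diffContOnCl fun z hz ↦ DifferentiableAt.differentiableWithinAt ?_
  have closure_subset : closure (verticalStrip a 2) ⊆ Complex.re ⁻¹' Icc a 2 :=
    closure_minimal (preimage_mono Ioo_subset_Icc_self)
      (isClosed_Icc.preimage Complex.continuous_re)
  have denominator_ne := sub_three_ne_zero (closure_subset hz).2
  have X_ne : (X : ℂ) ≠ 0 := by exact_mod_cast hX.ne'
  refine (((hg z).div (by fun_prop) denominator_ne).mul ?_).mul (by fun_prop)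
  exact DifferentiableAt.const_cpow (by fun_prop) (Or.inl X_ne)

lemma three_mul_abs_sub_gaussian_le (u t : ℝ) :
    3 * |u| - 1 / 500 * (u - t) ^ 2 ≤ 3 * |t| + 1500 := by
  have triangle : |u| ≤ |u - t| + |t| := by simpa using abs_add_le (u - t) t
  rw [← sq_abs (u - t)]
  nlinarith [sq_nonneg (|u - t| - 750)]

lemma gaussian_exponent_le {x y : ℝ} (hx : x ∈ Icc (-3) 2) (hy : y ∈ Icc (-3) 2) :
    1 / 500 * (x - y) ^ 2 ≤ 0.05 := by
  nlinarith [sq_le_sq' (by linarith [hx.1, hy.2] : -5 ≤ x - y) (by linarith [hx.2, hy.1])]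

lemma rpow_ratio_mul_gaussian_le_one {u t Y : ℝ} (ht : 95 ≤ t) (hY : t + 8 ≤ Y) :
    ((|u| + 3) / Y) ^ (7 / 2 : ℝ) * Real.exp (-(1 / 500 * (u - t) ^ 2)) ≤ 1 := by
  have Y_pos : 0 < Y := by linarith
  have triangle : |u| ≤ |u - t| + t := by
    simpa [abs_of_nonneg (by linarith : 0 ≤ t)] using abs_add_le (u - t) t
  rw [← sq_abs (u - t)]
  set x := |u - t|
  have ratio_le : (|u| + 3) / Y ≤ Real.exp ((x - 5) / Y) := by
    refine le_trans ?_ (Real.add_one_le_exp _)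
    rw [div_add_one Y_pos.ne']
    exact div_le_div_of_nonneg_right (by linarith) Y_pos.le
  have exponent_le : (x - 5) / Y * (7 / 2) ≤ 1 / 500 * x ^ 2 := by
    rw [div_mul_eq_mul_div, div_le_iff₀ Y_pos]
    nlinarith [sq_nonneg (x - 10),
      mul_le_mul_of_nonneg_left (by linarith : 103 ≤ Y) (sq_nonneg x)]
  calc _ ≤ Real.exp ((x - 5) / Y) ^ (7 / 2 : ℝ) * Real.exp (-(1 / 500 * x ^ 2)) := by gcongr
    _ = Real.exp ((x - 5) / Y * (7 / 2) - 1 / 500 * x ^ 2) := by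
        rw [← Real.exp_mul, ← Real.exp_add, ← sub_eq_add_neg]
    _ ≤ 1 := Real.exp_le_one_iff.mpr (by linarith)

variable {q : ℕ} [NeZero q] {χ : DirichletCharacter ℂ q} {g : ℂ → ℂ}
  {s z : ℂ} {X Y : ℝ}

lemma bddAbove_norm_localizedLFunction (hg : Differentiable ℂ g)
    (hgL : ∀ z, z ≠ 1 → g z = (z - 1) * χ.LFunction z) (hX : 1 ≤ X) (hs : s.re ∈ Icc (-3) 2) :
    BddAbove ((norm ∘ localizedLFunction g X s) '' verticalClosedStrip (-3) 2) := by
  obtain ⟨K, K_nonneg, hK⟩ := exists_norm_le_exp_of_eq_sub_one_mul_LFunction hg hgL (-3)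
  refine ⟨K * Real.exp (3 * |s.im| + 1500) * Real.exp 0.05, ?_⟩
  rintro _ ⟨z, ⟨hz3, hz2⟩, rfl⟩
  rw [Function.comp_apply, norm_localizedLFunction g (by linarith)]
  have g_le : ‖g z‖ / ‖z - 3‖ ≤ K * Real.exp (3 * |z.im|) :=
    (div_le_self (norm_nonneg _) (one_le_norm_sub_three hz2)).trans (hK z hz3 hz2)
  have power_le : X ^ (7 / 10 * (z.re - 2)) ≤ 1 :=
    Real.rpow_le_one_of_one_le_of_nonpos hX (by linarith)
  calc _ ≤ K * Real.exp (3 * |z.im|) * 1 *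
        (Real.exp 0.05 * Real.exp (-(1 / 500 * (z.im - s.im) ^ 2))) := by
          gcongr
          exact gaussian_exponent_le ⟨hz3, hz2⟩ hs
    _ = K * Real.exp (3 * |z.im| - 1 / 500 * (z.im - s.im) ^ 2) * Real.exp 0.05 := by
        rw [sub_eq_add_neg (3 * |z.im|), Real.exp_add]
        ring
    _ ≤ _ := by
        gcongr
        exact three_mul_abs_sub_gaussian_le z.im s.im

lemma norm_div_sub_three_le_norm_LFunction
    (hgL : ∀ z, z ≠ 1 → g z = (z - 1) * χ.LFunction z)
    (hz : z.re ≤ 2) (hz_ne : z ≠ 1) : ‖g z‖ / ‖z - 3‖ ≤ ‖χ.LFunction z‖ := by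
  rw [hgL z hz_ne, norm_mul, mul_div_right_comm]
  exact mul_le_of_le_one_left (norm_nonneg _)
    (div_le_one_of_le₀ (norm_sub_one_le_norm_sub_three hz) (norm_nonneg _))

lemma norm_localizedLFunction_le_of_re_eq_neg_three (hχ : χ.IsPrimitive)
    (hgL : ∀ z, z ≠ 1 → g z = (z - 1) * χ.LFunction z) (hs : s.re ∈ Icc (-3) 2)
    (ht : 95 ≤ s.im) (hY : s.im + 8 ≤ Y) (hz : z.re = -3) :
    ‖localizedLFunction g (q * Y / (2 * π)) s z‖ ≤ π ^ 2 / 6 * Real.exp 0.05 := by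
  have q_pos : (0 : ℝ) < q := by exact_mod_cast NeZero.pos q
  have Y_pos : 0 < Y := by linarith
  set X : ℝ := q * Y / (2 * π) with hX
  have X_pos : 0 < X := by positivity
  have z_ne_one : z ≠ 1 := fun h ↦ by norm_num [h] at hz
  have z_eq : z = -(3 : ℕ) + z.im * I := by apply Complex.ext <;> simp [hz]
  have L_le : ‖χ.LFunction z‖ ≤ (q * (|z.im| + 3) / (2 * π)) ^ (7 / 2 : ℝ) * (π ^ 2 / 6) := by
    have := norm_LFunction_neg_natCast_add_le hχ (k := 3) (by norm_num) z.im
    rwa [← z_eq, Nat.cast_ofNat, show (3 + 1 / 2 : ℝ) = 7 / 2 by norm_num] at this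
  have power_eq : X ^ (7 / 10 * (z.re - 2)) = (X ^ (7 / 2 : ℝ))⁻¹ := by
    rw [← Real.rpow_neg X_pos.le, hz]
    norm_num
  have ratio_eq : (q * (|z.im| + 3) / (2 * π)) ^ (7 / 2 : ℝ) * (X ^ (7 / 2 : ℝ))⁻¹ =
      ((|z.im| + 3) / Y) ^ (7 / 2 : ℝ) := by
    rw [← Real.inv_rpow X_pos.le, ← Real.mul_rpow (by positivity) (by positivity), hX]
    congr 1
    field_simp
  rw [norm_localizedLFunction g X_pos, power_eq]
  calc _ ≤ (q * (|z.im| + 3) / (2 * π)) ^ (7 / 2 : ℝ) * (π ^ 2 / 6) * (X ^ (7 / 2 : ℝ))⁻¹ *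
        (Real.exp 0.05 * Real.exp (-(1 / 500 * (z.im - s.im) ^ 2))) := by
          gcongr
          · exact (norm_div_sub_three_le_norm_LFunction hgL (by linarith) z_ne_one).trans L_le
          · exact gaussian_exponent_le ⟨by linarith, by linarith⟩ hs
    _ = π ^ 2 / 6 * Real.exp 0.05 * (((|z.im| + 3) / Y) ^ (7 / 2 : ℝ) *
        Real.exp (-(1 / 500 * (z.im - s.im) ^ 2))) := by
          rw [← ratio_eq]
          ring
    _ ≤ _ := mul_le_of_le_one_right (by positivity) (rpow_ratio_mul_gaussian_le_one ht hY)

lemma norm_localizedLFunction_le_of_re_eq_two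
    (hgL : ∀ z, z ≠ 1 → g z = (z - 1) * χ.LFunction z) (hX : 0 < X) (hs : s.re ∈ Icc (-3) 2)
    (hz : z.re = 2) : ‖localizedLFunction g X s z‖ ≤ π ^ 2 / 6 * Real.exp 0.05 := by
  have z_ne_one : z ≠ 1 := fun h ↦ by norm_num [h] at hz
  have g_le : ‖g z‖ / ‖z - 3‖ ≤ π ^ 2 / 6 :=
    (norm_div_sub_three_le_norm_LFunction hgL hz.le z_ne_one).trans (norm_LFunction_le χ hz.ge)
  have power_eq : X ^ (7 / 10 * (z.re - 2)) = 1 := by rw [hz, sub_self, mul_zero, Real.rpow_zero]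
  rw [norm_localizedLFunction g hX, power_eq]
  calc _ ≤ π ^ 2 / 6 * 1 * (Real.exp 0.05 * 1) := by
        gcongr
        · exact gaussian_exponent_le ⟨by linarith, by linarith⟩ hs
        · exact Real.exp_le_one_iff.mpr (neg_nonpos.mpr (by positivity))
    _ = _ := by ring

lemma norm_localizedLFunction_self_le (hχ : χ.IsPrimitive) (hg : Differentiable ℂ g)
    (hgL : ∀ z, z ≠ 1 → g z = (z - 1) * χ.LFunction z) (hs : s.re ∈ Icc (-3) 2)
    (ht : 95 ≤ s.im) (hY : s.im + 8 ≤ Y) :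
    ‖localizedLFunction g (q * Y / (2 * π)) s s‖ ≤ π ^ 2 / 6 * Real.exp 0.05 := by
  have one_le_q : (1 : ℝ) ≤ q := by exact_mod_cast NeZero.pos q
  have one_le_X : 1 ≤ q * Y / (2 * π) := by
    rw [one_le_div (by positivity)]
    nlinarith [Real.pi_lt_four]
  have bound_pos : 0 < π ^ 2 / 6 * Real.exp 0.05 := by positivity
  have interp := norm_le_interp_of_mem_verticalClosedStrip' (by norm_num : (-3 : ℝ) < 2) hs
    (diffContOnCl_localizedLFunction hg (by linarith) s (-3))
    (bddAbove_norm_localizedLFunction hg hgL one_le_X hs)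
    (fun z hz ↦ norm_localizedLFunction_le_of_re_eq_neg_three hχ hgL hs ht hY hz)
    (fun z hz ↦ norm_localizedLFunction_le_of_re_eq_two hgL (by linarith) hs hz)
  rwa [← Real.rpow_add bound_pos, sub_add_cancel, Real.rpow_one] at interp

lemma norm_sub_three_le_exp_mul_norm_sub_one (hs : 95 ≤ s.im) :
    ‖s - 3‖ ≤ Real.exp 0.023 * ‖s - 1‖ := by
  have norm_ge : 95 ≤ ‖s - 1‖ := by
    refine (hs.trans (le_abs_self _)).trans ?_
    simpa using Complex.abs_im_le_norm (s - 1)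
  have triangle : ‖s - 3‖ ≤ ‖s - 1‖ + 2 := by
    refine (norm_sub_le_norm_sub_add_norm_sub s 1 3).trans_eq ?_
    norm_num
  nlinarith [Real.add_one_le_exp (0.023 : ℝ)]

lemma norm_LFunction_le_rpow_of_im_ge (hχ : χ.IsPrimitive) (hs : s.re ∈ Icc (-3) 2)
    (ht : 95 ≤ s.im) (hY : s.im + 8 ≤ Y) :
    ‖χ.LFunction s‖ ≤
      π ^ 2 / 6 * Real.exp 0.073 * (q * Y / (2 * π)) ^ (7 / 10 * (2 - s.re)) := by
  obtain ⟨g, hg, hgL⟩ := exists_differentiable_eq_sub_one_mul_LFunction χ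
  have q_pos : (0 : ℝ) < q := by exact_mod_cast NeZero.pos q
  have Y_pos : 0 < Y := by linarith
  have localized_le := norm_localizedLFunction_self_le hχ hg hgL hs ht hY
  set X : ℝ := q * Y / (2 * π)
  have X_pos : 0 < X := by positivity
  have s_ne_one : s ≠ 1 := fun h ↦ by norm_num [h] at ht
  have norm_pos : 0 < ‖s - 3‖ := norm_pos_iff.mpr (sub_three_ne_zero hs.2)
  rw [norm_localizedLFunction g X_pos, hgL s s_ne_one, norm_mul] at localized_le
  simp only [sub_self, ne_eq, OfNat.ofNat_ne_zero, not_false_eq_true, zero_pow, mul_zero,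
    neg_zero, Real.exp_zero, mul_one] at localized_le
  have power_mul : X ^ (7 / 10 * (s.re - 2)) * X ^ (7 / 10 * (2 - s.re)) = 1 := by
    rw [← Real.rpow_add X_pos, ← mul_add, sub_add_sub_cancel, sub_self, mul_zero, Real.rpow_zero]
  calc ‖χ.LFunction s‖
      = ‖s - 3‖ * ‖χ.LFunction s‖ / ‖s - 3‖ *
        (X ^ (7 / 10 * (s.re - 2)) * X ^ (7 / 10 * (2 - s.re))) := by
          rw [power_mul, mul_one, mul_div_cancel_left₀ _ norm_pos.ne']
    _ ≤ Real.exp 0.023 * ‖s - 1‖ * ‖χ.LFunction s‖ / ‖s - 3‖ *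
        (X ^ (7 / 10 * (s.re - 2)) * X ^ (7 / 10 * (2 - s.re))) := by
          gcongr
          exact norm_sub_three_le_exp_mul_norm_sub_one ht
    _ = Real.exp 0.023 * (‖s - 1‖ * ‖χ.LFunction s‖ / ‖s - 3‖ * X ^ (7 / 10 * (s.re - 2))) *
        X ^ (7 / 10 * (2 - s.re)) := by ring
    _ ≤ Real.exp 0.023 * (π ^ 2 / 6 * Real.exp 0.05) * X ^ (7 / 10 * (2 - s.re)) := by gcongr
    _ = _ := by
        rw [show (0.073 : ℝ) = 0.023 + 0.05 by norm_num, Real.exp_add]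
        ring

end Convexity

/-! ### Zeros counted with multiplicity: reflection and Jensen's formula -/

section AnalyticOrder

variable {f : ℂ → ℂ} {z : ℂ}

lemma analyticAt_conj_comp_conj (hf : AnalyticAt ℂ f (conj z)) :
    AnalyticAt ℂ (fun w ↦ conj (f (conj w))) z := by
  rw [Complex.analyticAt_iff_eventually_differentiableAt] at hf ⊢
  filter_upwards [Complex.continuous_conj.continuousAt.eventually hf] with w hw
  exact differentiableAt_conj_conj_iff.mpr hw

lemma analyticOrderAt_le_analyticOrderAt_conj_comp_conj (hf : AnalyticAt ℂ f (conj z)) :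
    analyticOrderAt f (conj z) ≤ analyticOrderAt (fun w ↦ conj (f (conj w))) z := by
  refine ENat.forall_natCast_le_iff_le.mp fun n hn ↦ ?_
  rw [natCast_le_analyticOrderAt hf] at hn
  rw [natCast_le_analyticOrderAt (analyticAt_conj_comp_conj hf)]
  obtain ⟨g, hg, f_eq⟩ := hn
  refine ⟨_, analyticAt_conj_comp_conj hg, ?_⟩
  filter_upwards [Complex.continuous_conj.continuousAt.eventually f_eq] with w hw
  simp only [hw, smul_eq_mul, map_mul, map_pow, map_sub, Complex.conj_conj]

lemma analyticOrderAt_conj_comp_conj (hf : AnalyticAt ℂ f (conj z)) :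
    analyticOrderAt (fun w ↦ conj (f (conj w))) z = analyticOrderAt f (conj z) := by
  refine le_antisymm ?_ (analyticOrderAt_le_analyticOrderAt_conj_comp_conj hf)
  have := analyticOrderAt_le_analyticOrderAt_conj_comp_conj (z := conj z)
    (f := fun w ↦ conj (f (conj w))) (by simpa using analyticAt_conj_comp_conj hf)
  simpa only [Complex.conj_conj] using this

lemma one_le_analyticOrderNatAt (hf : AnalyticAt ℂ f z) (hfz : f z = 0)
    (hne : analyticOrderAt f z ≠ ⊤) : 1 ≤ analyticOrderNatAt f z := by
  have : (analyticOrderNatAt f z : ℕ∞) ≠ 0 := by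
    rw [Nat.cast_analyticOrderNatAt hne]
    exact hf.analyticOrderAt_ne_zero.mpr hfz
  exact Nat.one_le_iff_ne_zero.mpr (by exact_mod_cast this)

end AnalyticOrder

section Jensen

variable {f : ℂ → ℂ} {c : ℂ} {R : ℝ}

lemma divisor_closedBall_eq_analyticOrderNatAt
    (hf : AnalyticOnNhd ℂ f (Metric.closedBall c R)) {z : ℂ} (hz : z ∈ Metric.closedBall c R) :
    MeromorphicOn.divisor f (Metric.closedBall c R) z = analyticOrderNatAt f z := by
  rw [MeromorphicOn.AnalyticOnNhd.divisor_apply hf hz, analyticOrderNatAt]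
  cases analyticOrderAt f z <;> rfl

lemma sum_analyticOrderNatAt_mul_log_le (hR : 0 < R)
    (hf : AnalyticOnNhd ℂ f (Metric.closedBall c R)) (hfc : f c ≠ 0) (Z : Finset ℂ) :
    ∑ z ∈ Z, analyticOrderNatAt f z * max 0 (Real.log (R / ‖c - z‖)) ≤
      Real.circleAverage (fun z ↦ Real.log ‖f z‖) c R - Real.log ‖f c‖ := by
  have jensen := AnalyticOnNhd.circleAverage_log_norm hR.ne' (by rwa [abs_of_pos hR]) hfc
  rw [abs_of_pos hR] at jensen
  rw [jensen, add_sub_cancel_right]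
  set D := MeromorphicOn.divisor f (Metric.closedBall c R)
  have finite_support : (D : ℂ → ℤ).support.Finite := D.finiteSupport (isCompact_closedBall c R)
  have log_eq_max {z : ℂ} (hz : z ∈ Metric.closedBall c R) :
      Real.log (R * ‖c - z‖⁻¹) = max 0 (Real.log (R / ‖c - z‖)) := by
    rw [div_eq_mul_inv, max_eq_right]
    rw [mem_closedBall_iff_norm'] at hz
    rcases (norm_nonneg (c - z)).eq_or_lt with h | h
    · simp [← h]
    · exact Real.log_nonneg (by rwa [← div_eq_mul_inv, one_le_div h])
  have term_eq (z : ℂ) : (D z : ℝ) * Real.log (R * ‖c - z‖⁻¹) =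
      analyticOrderNatAt f z * max 0 (Real.log (R / ‖c - z‖)) := by
    by_cases hz : z ∈ Metric.closedBall c R
    · rw [divisor_closedBall_eq_analyticOrderNatAt hf hz, log_eq_max hz, Int.cast_natCast]
    · rw [D.apply_eq_zero_of_notMem hz]
      rw [mem_closedBall_iff_norm', not_le] at hz
      have log_nonpos : Real.log (R / ‖c - z‖) ≤ 0 :=
        Real.log_nonpos (by positivity) ((div_le_one (by linarith)).mpr hz.le)
      rw [max_eq_left log_nonpos, Int.cast_zero, zero_mul, mul_zero]
  have support_subset : (Function.support fun z ↦ (D z : ℝ) * Real.log (R * ‖c - z‖⁻¹)) ⊆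
      (finite_support.toFinset ∪ Z : Finset ℂ) := fun z hz ↦ by
    have : D z ≠ 0 := fun h ↦ hz (by simp [h])
    simp [this]
  rw [finsum_eq_sum_of_support_subset _ support_subset, Finset.sum_congr rfl fun z _ ↦ term_eq z]
  exact Finset.sum_le_sum_of_subset_of_nonneg Finset.subset_union_right fun z _ _ ↦ by positivity

lemma integral_max_zero_sin : ∫ x in (0 : ℝ)..2 * π, max 0 (Real.sin x) = 2 := by
  have continuous_integrand : Continuous fun x : ℝ ↦ max 0 (Real.sin x) := by fun_prop
  have first_half : ∫ x in (0 : ℝ)..π, max 0 (Real.sin x) = ∫ x in (0 : ℝ)..π, Real.sin x := by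
    refine intervalIntegral.integral_congr fun x hx ↦ max_eq_right ?_
    rw [uIcc_of_le Real.pi_pos.le] at hx
    exact Real.sin_nonneg_of_mem_Icc hx
  have second_half : ∫ x in π..2 * π, max 0 (Real.sin x) = ∫ _ in π..2 * π, (0 : ℝ) := by
    refine intervalIntegral.integral_congr fun x hx ↦ max_eq_left ?_
    rw [uIcc_of_le (by linarith [Real.pi_pos])] at hx
    have := Real.sin_nonneg_of_mem_Icc (x := x - π) ⟨by linarith [hx.1], by linarith [hx.2]⟩
    rw [Real.sin_sub_pi] at this
    linarith
  rw [← intervalIntegral.integral_add_adjacent_intervals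
    (continuous_integrand.intervalIntegrable 0 π) (continuous_integrand.intervalIntegrable π _),
    first_half, second_half, integral_sin, intervalIntegral.integral_zero]
  norm_num

lemma circleAverage_max_zero_re_sub_re (c : ℂ) (hR : 0 ≤ R) :
    Real.circleAverage (fun z ↦ max 0 (c.re - z.re)) c R = R / π := by
  have integrand_eq (x : ℝ) :
      max 0 (c.re - (circleMap c R (x + π / 2)).re) = R * max 0 (Real.sin x) := by
    rw [mul_max_of_nonneg _ _ hR, mul_zero, ← sub_add_cancel (circleMap c R _) c,
      circleMap_sub_center, Complex.add_re, circleMap_zero_re, Real.cos_add_pi_div_two]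
    congr 1
    ring
  rw [Real.circleAverage_eq_integral_add (η := π / 2)]
  simp only [integrand_eq]
  rw [intervalIntegral.integral_const_mul, integral_max_zero_sin, smul_eq_mul]
  field_simp

end Jensen

section ZerosNearLine

variable {q : ℕ} [NeZero q] {χ : DirichletCharacter ℂ q} {t : ℝ}

lemma analyticAt_LFunction (χ : DirichletCharacter ℂ q) {z : ℂ} (hz : z ≠ 1) :
    AnalyticAt ℂ χ.LFunction z := by
  have differentiableOn : DifferentiableOn ℂ χ.LFunction {1}ᶜ := fun w hw ↦
    (DirichletCharacter.differentiableAt_LFunction χ w (Or.inl hw)).differentiableWithinAt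
  exact differentiableOn.analyticAt (isOpen_compl_singleton.mem_nhds hz)

lemma mem_box_of_mem_closedBall {c z : ℂ} {R : ℝ} (hz : z ∈ Metric.closedBall c R) :
    z.re ∈ Icc (c.re - R) (c.re + R) ∧ z.im ∈ Icc (c.im - R) (c.im + R) := by
  rw [mem_closedBall_iff_norm] at hz
  have re_le := abs_le.mp ((Complex.abs_re_le_norm (z - c)).trans hz)
  have im_le := abs_le.mp ((Complex.abs_im_le_norm (z - c)).trans hz)
  rw [Complex.sub_re] at re_le
  rw [Complex.sub_im] at im_le
  exact ⟨⟨by linarith, by linarith⟩, ⟨by linarith, by linarith⟩⟩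

lemma one_le_mul_div_two_pi (q : ℕ) [NeZero q] {y : ℝ} (hy : 8 ≤ y) :
    1 ≤ q * y / (2 * π) := by
  have hq : (1 : ℝ) ≤ q := by exact_mod_cast NeZero.pos q
  rw [one_le_div (by positivity)]
  nlinarith [Real.pi_lt_four]

lemma log_norm_LFunction_le (hχ : χ.IsPrimitive) (ht : 100 ≤ t) {z : ℂ} (hre : -3 ≤ z.re)
    (him : z.im ∈ Icc (t - 5) (t + 5)) :
    Real.log ‖χ.LFunction z‖ ≤ Real.log (π ^ 2 / 6) + 0.073 +
      0.7 * Real.log (q * (t + 13) / (2 * π)) * max 0 (2 - z.re) := by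
  set X : ℝ := q * (t + 13) / (2 * π) with hX
  have one_le_X : 1 ≤ X := one_le_mul_div_two_pi q (by linarith)
  have log_X_nonneg : 0 ≤ Real.log X := Real.log_nonneg one_le_X
  have log_zeta_nonneg : 0 ≤ Real.log (π ^ 2 / 6) :=
    Real.log_nonneg (by nlinarith [Real.pi_gt_three])
  have slope_nonneg : 0 ≤ 0.7 * Real.log X * max 0 (2 - z.re) := by positivity
  by_cases hz : χ.LFunction z = 0
  · rw [hz, norm_zero, Real.log_zero]
    positivity
  have norm_pos : 0 < ‖χ.LFunction z‖ := norm_pos_iff.mpr hz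
  rcases le_or_gt z.re 2 with re_le | re_gt
  · have convexity := Real.log_le_log norm_pos <|
      norm_LFunction_le_rpow_of_im_ge hχ (Y := t + 13) ⟨hre, re_le⟩ (by linarith [him.1])
        (by linarith [him.2])
    rw [← hX, Real.log_mul (by positivity) (by positivity),
      Real.log_mul (by positivity) (by positivity), Real.log_exp,
      Real.log_rpow (by positivity)] at convexity
    rw [max_eq_right (by linarith)]
    linarith
  · linarith [Real.log_le_log norm_pos (norm_LFunction_le χ re_gt.le)]

lemma circleAverage_const_add_mul_max (c : ℂ) {R : ℝ} (hR : 0 ≤ R) (a b : ℝ) :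
    Real.circleAverage (fun z ↦ a + b * max 0 (c.re - z.re)) c R = a + b * (R / π) := by
  have slope_integrable : CircleIntegrable (fun z : ℂ ↦ b * max 0 (c.re - z.re)) c R :=
    ContinuousOn.circleIntegrable' (by fun_prop)
  rw [Real.circleAverage_fun_add (circleIntegrable_const a c R) slope_integrable,
    Real.circleAverage_const]
  simp_rw [← smul_eq_mul (a := b)]
  rw [Real.circleAverage_fun_smul, circleAverage_max_zero_re_sub_re c hR]

lemma circleAverage_log_norm_LFunction_le (hχ : χ.IsPrimitive) (ht : 100 ≤ t) :
    Real.circleAverage (fun z ↦ Real.log ‖χ.LFunction z‖) (2 + t * I) 5 ≤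
      Real.log (π ^ 2 / 6) + 0.073 + 3.5 / π * Real.log (q * (t + 13) / (2 * π)) := by
  set c : ℂ := 2 + t * I with hc
  have c_re : c.re = 2 := by simp [hc]
  have c_im : c.im = t := by simp [hc]
  set a : ℝ := Real.log (π ^ 2 / 6) + 0.073
  set b : ℝ := 0.7 * Real.log (q * (t + 13) / (2 * π)) with hb
  have box {z : ℂ} (hz : z ∈ Metric.sphere c |5|) :
      z.re ∈ Icc (-3) 7 ∧ z.im ∈ Icc (t - 5) (t + 5) := by
    rw [abs_of_pos (by norm_num)] at hz
    have := mem_box_of_mem_closedBall (Metric.sphere_subset_closedBall hz)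
    rw [c_re, c_im] at this
    norm_num at this ⊢
    exact this
  have analyticOnNhd : AnalyticOnNhd ℂ χ.LFunction (Metric.sphere c |5|) := fun z hz ↦ by
    refine analyticAt_LFunction χ fun h ↦ ?_
    have := (box hz).2.1
    rw [h, Complex.one_im] at this
    linarith
  calc _ ≤ Real.circleAverage (fun z ↦ a + b * max 0 (c.re - z.re)) c 5 := by
        refine Real.circleAverage_mono
          (MeromorphicOn.circleIntegrable_log_norm analyticOnNhd.meromorphicOn)
          (ContinuousOn.circleIntegrable' (by fun_prop)) fun z hz ↦ ?_
        rw [c_re]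
        exact log_norm_LFunction_le hχ ht (box hz).1.1 (box hz).2
    _ = a + b * (5 / π) := circleAverage_const_add_mul_max c (by norm_num) a b
    _ = _ := by
        rw [hb]
        ring

lemma sum_analyticOrderNatAt_LFunction_mul_log_le (hχ : χ.IsPrimitive) (ht : 100 ≤ t)
    (Z : Finset ℂ) :
    ∑ z ∈ Z, analyticOrderNatAt χ.LFunction z * max 0 (Real.log (5 / ‖(2 + t * I) - z‖)) ≤
      3.5 / π * Real.log (q * (t + 13) / (2 * π)) + (2 * Real.log (π ^ 2 / 6) + 0.073) := by
  set c : ℂ := 2 + t * I with hc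
  have one_le : 1 ≤ ‖χ.LFunction c‖ * (π ^ 2 / 6) := one_le_norm_LFunction_mul χ (by simp [hc])
  have LFunction_ne_zero : χ.LFunction c ≠ 0 := fun h ↦ by norm_num [h] at one_le
  have neg_log_le : -Real.log ‖χ.LFunction c‖ ≤ Real.log (π ^ 2 / 6) := by
    have := Real.log_nonneg one_le
    rw [Real.log_mul (norm_ne_zero_iff.mpr LFunction_ne_zero) (by positivity)] at this
    linarith
  have analyticOnNhd : AnalyticOnNhd ℂ χ.LFunction (Metric.closedBall c 5) := fun z hz ↦ by
    refine analyticAt_LFunction χ fun h ↦ ?_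
    have := (mem_box_of_mem_closedBall hz).2.1
    simp only [hc, h, Complex.add_im, Complex.im_ofNat, Complex.mul_im, Complex.ofReal_re,
      Complex.I_im, Complex.ofReal_im, Complex.I_re, Complex.one_im] at this
    linarith
  linarith [sum_analyticOrderNatAt_mul_log_le (by norm_num) analyticOnNhd LFunction_ne_zero Z,
    circleAverage_log_norm_LFunction_le hχ ht]

end ZerosNearLine

/-! ### Reflection of zeros -/

section Reflection

variable {q : ℕ} {χ : DirichletCharacter ℂ q}

lemma isPrimitive_inv (hχ : χ.IsPrimitive) : χ⁻¹.IsPrimitive := by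
  rw [DirichletCharacter.isPrimitive_def] at hχ ⊢
  rw [DirichletCharacter.conductor_inv, hχ]

lemma conj_LSeries_conj (f : ℕ → ℂ) (s : ℂ) :
    conj (LSeries f (conj s)) = LSeries (fun n ↦ conj (f n)) s := by
  rw [LSeries, LSeries, Complex.conj_tsum]
  congr 1 with n
  rcases eq_or_ne n 0 with rfl | hn
  · simp
  · have arg_ne : (n : ℂ).arg ≠ π := by
      rw [Complex.natCast_arg]
      exact Real.pi_pos.ne
    rw [LSeries.term_of_ne_zero hn, LSeries.term_of_ne_zero hn, map_div₀,
      Complex.cpow_conj _ _ arg_ne, Complex.conj_natCast, Complex.conj_conj]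

lemma gammaFactor_ne_zero (χ : DirichletCharacter ℂ q) {s : ℂ} (hs : 0 < s.re) :
    χ.gammaFactor s ≠ 0 := by
  rcases χ.even_or_odd with h | h <;> rw [h.gammaFactor_def]
  · exact Complex.Gammaℝ_ne_zero_of_re_pos hs
  · refine Complex.Gammaℝ_ne_zero_of_re_pos ?_
    rw [Complex.add_re, Complex.one_re]
    linarith

lemma differentiable_inv_gammaFactor (χ : DirichletCharacter ℂ q) :
    Differentiable ℂ fun s ↦ (χ.gammaFactor s)⁻¹ := by
  rcases χ.even_or_odd with h | h <;> simp only [h.gammaFactor_def]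
  · exact Complex.differentiable_Gammaℝ_inv
  · exact Complex.differentiable_Gammaℝ_inv.comp (differentiable_id.add_const 1)

lemma analyticAt_gammaFactor (χ : DirichletCharacter ℂ q) {s : ℂ} (hs : 0 < s.re) :
    AnalyticAt ℂ χ.gammaFactor s := by
  simpa using ((differentiable_inv_gammaFactor χ).analyticAt s).fun_inv
    (inv_ne_zero (gammaFactor_ne_zero χ hs))

variable [NeZero q]

lemma isPreconnected_compl_one : IsPreconnected ({1}ᶜ : Set ℂ) :=
  (isConnected_compl_singleton_of_one_lt_rank (by simp) 1).isPreconnected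

lemma conj_ne_one {s : ℂ} (hs : s ≠ 1) : conj s ≠ 1 :=
  (map_ne_one_iff _ (starRingEnd ℂ).injective).mpr hs

lemma LFunction_inv_eq_conj (χ : DirichletCharacter ℂ q) {s : ℂ} (hs : s ≠ 1) :
    χ⁻¹.LFunction s = conj (χ.LFunction (conj s)) := by
  have eq_of_one_lt_re {z : ℂ} (hz : 1 < z.re) :
      χ⁻¹.LFunction z = conj (χ.LFunction (conj z)) := by
    rw [DirichletCharacter.LFunction_eq_LSeries _ hz,
      DirichletCharacter.LFunction_eq_LSeries _ (by rwa [Complex.conj_re]), conj_LSeries_conj]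
    congr 1 with n
    rw [← MulChar.star_eq_inv]
    rfl
  have half_plane_mem_nhds : {z : ℂ | 1 < z.re} ∈ nhds (2 : ℂ) :=
    (isOpen_lt continuous_const Complex.continuous_re).mem_nhds (by simp)
  have eqOn : EqOn χ⁻¹.LFunction (fun z ↦ conj (χ.LFunction (conj z))) {1}ᶜ :=
    AnalyticOnNhd.eqOn_of_preconnected_of_eventuallyEq (z₀ := 2)
      (fun z hz ↦ analyticAt_LFunction χ⁻¹ hz)
      (fun z hz ↦ analyticAt_conj_comp_conj (analyticAt_LFunction χ (conj_ne_one hz)))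
      isPreconnected_compl_one (by norm_num)
      (Filter.eventuallyEq_of_mem half_plane_mem_nhds fun z hz ↦ eq_of_one_lt_re hz)
  exact eqOn hs

lemma analyticOrderAt_LFunction_inv (χ : DirichletCharacter ℂ q) {s : ℂ} (hs : s ≠ 1) :
    analyticOrderAt χ⁻¹.LFunction s = analyticOrderAt χ.LFunction (conj s) := by
  rw [← analyticOrderAt_conj_comp_conj (analyticAt_LFunction χ (conj_ne_one hs))]
  refine analyticOrderAt_congr ?_
  filter_upwards [isOpen_compl_singleton.mem_nhds hs] with w hw
  exact LFunction_inv_eq_conj χ hw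

lemma LFunction_one_sub_eq (hχ : χ.IsPrimitive) {s : ℂ} (h0 : 0 < s.re) (h1 : s.re < 1) :
    χ.LFunction (1 - s) =
      q ^ (s - 1 / 2) * χ.rootNumber * χ⁻¹.gammaFactor s * (χ.gammaFactor (1 - s))⁻¹ *
        χ⁻¹.LFunction s := by
  have ne_zero {z : ℂ} (hz : 0 < z.re) : z ≠ 0 := fun h ↦ by simp [h] at hz
  have one_sub_re : 0 < (1 - s).re := by simpa using h1
  rw [DirichletCharacter.LFunction_eq_completed_div_gammaFactor _ _ (.inl (ne_zero one_sub_re)),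
    DirichletCharacter.LFunction_eq_completed_div_gammaFactor _ _ (.inl (ne_zero h0)),
    DirichletCharacter.IsPrimitive.completedLFunction_one_sub hχ]
  field_simp [gammaFactor_ne_zero χ⁻¹ h0, gammaFactor_ne_zero χ one_sub_re]

lemma analyticOrderAt_LFunction_inv_le (hχ : χ.IsPrimitive) {s : ℂ} (h0 : 0 < s.re)
    (h1 : s.re < 1) :
    analyticOrderAt χ⁻¹.LFunction s ≤ analyticOrderAt χ.LFunction (1 - s) := by
  have deriv_one_sub : deriv (fun w : ℂ ↦ 1 - w) s ≠ 0 := by simp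
  have order_comp := analyticOrderAt_comp_of_deriv_ne_zero (f := χ.LFunction)
    (g := fun w ↦ 1 - w) (z₀ := s) (by fun_prop) deriv_one_sub
  set factor : ℂ → ℂ := fun w ↦ q ^ (w - 1 / 2) * χ.rootNumber * χ⁻¹.gammaFactor w *
    (χ.gammaFactor (1 - w))⁻¹
  have analyticAt_factor : AnalyticAt ℂ factor s := by
    have analyticAt_inv : AnalyticAt ℂ (fun w ↦ (χ.gammaFactor (1 - w))⁻¹) s :=
      ((differentiable_inv_gammaFactor χ).comp (differentiable_const 1 |>.sub
        differentiable_id)).analyticAt s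
    have analyticAt_pow : AnalyticAt ℂ (fun w ↦ (q : ℂ) ^ (w - 1 / 2)) s :=
      Differentiable.analyticAt (fun w ↦ by
        refine DifferentiableAt.const_cpow (by fun_prop) (.inl ?_)
        exact_mod_cast NeZero.ne q) s
    exact ((analyticAt_pow.mul analyticAt_const).mul (analyticAt_gammaFactor χ⁻¹ h0)).mul
      analyticAt_inv
  have eventuallyEq : χ.LFunction ∘ (fun w ↦ 1 - w) =ᶠ[nhds s] factor * χ⁻¹.LFunction := by
    have strip_mem_nhds : {w : ℂ | 0 < w.re ∧ w.re < 1} ∈ nhds s :=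
      ((isOpen_lt continuous_const Complex.continuous_re).inter
        (isOpen_lt Complex.continuous_re continuous_const)).mem_nhds ⟨h0, h1⟩
    filter_upwards [strip_mem_nhds] with w hw
    exact LFunction_one_sub_eq hχ hw.1 hw.2
  have ne_one : s ≠ 1 := fun h ↦ by simp [h] at h1
  rw [← order_comp, analyticOrderAt_congr eventuallyEq,
    analyticOrderAt_mul analyticAt_factor (analyticAt_LFunction χ⁻¹ ne_one)]
  exact le_add_self

lemma analyticOrderAt_LFunction_one_sub_conj (hχ : χ.IsPrimitive) {s : ℂ} (h0 : 0 < s.re)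
    (h1 : s.re < 1) :
    analyticOrderAt χ.LFunction (1 - conj s) = analyticOrderAt χ.LFunction s := by
  have le_reflection {z : ℂ} (hz0 : 0 < z.re) (hz1 : z.re < 1) :
      analyticOrderAt χ.LFunction z ≤ analyticOrderAt χ.LFunction (1 - conj z) := by
    have ne_one : conj z ≠ 1 := conj_ne_one fun h ↦ by simp [h] at hz1
    have := analyticOrderAt_LFunction_inv_le hχ (s := conj z) (by simpa) (by simpa)
    rwa [analyticOrderAt_LFunction_inv χ ne_one, Complex.conj_conj] at this
  refine le_antisymm ?_ (le_reflection h0 h1)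
  simpa using le_reflection (z := 1 - conj s) (by simpa) (by simpa)

lemma analyticOrderAt_LFunction_ne_top (χ : DirichletCharacter ℂ q) {s : ℂ} (hs : s ≠ 1) :
    analyticOrderAt χ.LFunction s ≠ ⊤ := by
  have LFunction_two_ne_zero : χ.LFunction 2 ≠ 0 := fun h ↦ by
    have := one_le_norm_LFunction_mul χ (s := 2) (by simp)
    norm_num [h] at this
  have order_two : analyticOrderAt χ.LFunction 2 ≠ ⊤ := by
    rw [(analyticAt_LFunction χ (by norm_num)).analyticOrderAt_eq_zero.mpr LFunction_two_ne_zero]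
    exact ENat.zero_ne_top
  exact AnalyticOnNhd.analyticOrderAt_ne_top_of_isPreconnected (U := {1}ᶜ)
    (fun z hz ↦ analyticAt_LFunction χ hz) isPreconnected_compl_one (by norm_num) hs order_two

end Reflection

/-! ### The averaged Jensen weight -/

section NumericalBounds

variable {x c : ℝ}

lemma exp_le_taylor_seven (h0 : 0 ≤ x) (h1 : x ≤ 1) :
    Real.exp x ≤ 1 + x + x ^ 2 / 2 + x ^ 3 / 6 + x ^ 4 / 24 + x ^ 5 / 120 + x ^ 6 / 720 +
      x ^ 7 * 8 / 35280 := by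
  have := Real.exp_bound' h0 h1 (n := 7) (by norm_num)
  simp only [Finset.sum_range_succ, Finset.sum_range_zero] at this
  norm_num [Nat.factorial] at this
  linarith

lemma taylor_seven_le_exp (h0 : 0 ≤ x) :
    1 + x + x ^ 2 / 2 + x ^ 3 / 6 + x ^ 4 / 24 + x ^ 5 / 120 + x ^ 6 / 720 + x ^ 7 / 5040 ≤
      Real.exp x := by
  have := Real.sum_le_exp_of_nonneg h0 8
  simp only [Finset.sum_range_succ, Finset.sum_range_zero] at this
  norm_num [Nat.factorial] at this
  linarith

lemma exp_four_mul (c : ℝ) : Real.exp (4 * c) = Real.exp c ^ 4 := by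
  rw [← Real.exp_nat_mul]
  norm_num

lemma four_mul_le_log (h0 : 0 ≤ c) (h1 : c ≤ 1)
    (h : (1 + c + c ^ 2 / 2 + c ^ 3 / 6 + c ^ 4 / 24 + c ^ 5 / 120 + c ^ 6 / 720 +
      c ^ 7 * 8 / 35280) ^ 4 ≤ x) :
    4 * c ≤ Real.log x := by
  rw [Real.le_log_iff_exp_le (h.trans_lt' (by positivity)), exp_four_mul]
  exact (pow_le_pow_left₀ (Real.exp_pos c).le (exp_le_taylor_seven h0 h1) 4).trans h

lemma log_le_four_mul (h0 : 0 ≤ c) (hx : 0 < x)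
    (h : x ≤ (1 + c + c ^ 2 / 2 + c ^ 3 / 6 + c ^ 4 / 24 + c ^ 5 / 120 + c ^ 6 / 720 +
      c ^ 7 / 5040) ^ 4) :
    Real.log x ≤ 4 * c := by
  rw [Real.log_le_iff_le_exp hx, exp_four_mul]
  exact h.trans (pow_le_pow_left₀ (by positivity) (taylor_seven_le_exp h0) 4)

end NumericalBounds

/-- Half the total weight that Jensen's formula on the disc of radius `5` about `2 + t * I` gives,
at worst, to a pair of zeros `ρ` and `1 - conj ρ` of the critical strip at height `t + y`. -/
noncomputable def jensenWeight (y : ℝ) : ℝ := Real.log (25 / (2.5 + y ^ 2)) / 2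

section JensenWeight

variable {y : ℝ}

lemma jensenWeight_neg (y : ℝ) : jensenWeight (-y) = jensenWeight y := by simp [jensenWeight]

lemma jensenWeight_tangent_le (y y₀ : ℝ) :
    jensenWeight y₀ + (y₀ ^ 2 - y ^ 2) / (2 * (2.5 + y₀ ^ 2)) ≤ jensenWeight y := by
  have h₀ : 0 < 2.5 + y₀ ^ 2 := by positivity
  have h : 0 < 2.5 + y ^ 2 := by positivity
  have log_ratio_le := Real.log_le_sub_one_of_pos (div_pos h h₀)
  rw [Real.log_div h.ne' h₀.ne'] at log_ratio_le
  have slope_eq : (y₀ ^ 2 - y ^ 2) / (2 * (2.5 + y₀ ^ 2)) =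
      -((2.5 + y ^ 2) / (2.5 + y₀ ^ 2) - 1) / 2 := by
    field_simp
    ring
  rw [jensenWeight, jensenWeight, Real.log_div (by norm_num) h₀.ne',
    Real.log_div (by norm_num) h.ne', slope_eq]
  linarith

lemma jensenWeight_nonneg (h0 : 0 ≤ y) (h1 : y ≤ 4.5) : 0 ≤ jensenWeight y := by
  refine div_nonneg (Real.log_nonneg ?_) zero_le_two
  rw [one_le_div (by positivity)]
  nlinarith

lemma antitoneOn_jensenWeight : AntitoneOn jensenWeight (Ici 0) := fun y hy z _ hyz ↦ by
  have y_nonneg : 0 ≤ y := hy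
  unfold jensenWeight
  gcongr

lemma two_mul_le_jensenWeight {c : ℝ} (h0 : 0 ≤ c) (h1 : c ≤ 1)
    (h : (1 + c + c ^ 2 / 2 + c ^ 3 / 6 + c ^ 4 / 24 + c ^ 5 / 120 + c ^ 6 / 720 +
      c ^ 7 * 8 / 35280) ^ 4 ≤ 25 / (2.5 + y ^ 2)) :
    2 * c ≤ jensenWeight y := by
  have := four_mul_le_log h0 h1 h
  unfold jensenWeight
  linarith

lemma jensenWeight_le_two_mul {c : ℝ} (h0 : 0 ≤ c)
    (h : 25 / (2.5 + y ^ 2) ≤ (1 + c + c ^ 2 / 2 + c ^ 3 / 6 + c ^ 4 / 24 + c ^ 5 / 120 +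
      c ^ 6 / 720 + c ^ 7 / 5040) ^ 4) :
    jensenWeight y ≤ 2 * c := by
  have := log_le_four_mul h0 (by positivity) h
  unfold jensenWeight
  linarith

lemma jensenWeight_add_ge (h0 : 0 ≤ y) (h1 : y ≤ 4.5) :
    1.19 ≤ jensenWeight y + jensenWeight (4.5 - y) := by
  have product_le : (2.5 + y ^ 2) * (2.5 + (4.5 - y) ^ 2) ≤ 57.2 := by
    have sq_le : (y - 2.25) ^ 2 ≤ 5.0625 := by nlinarith
    nlinarith [mul_nonneg (sq_nonneg (y - 2.25)) (sub_nonneg.mpr sq_le)]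
  have quotient_ge : 625 / 57.2 ≤ 25 / (2.5 + y ^ 2) * (25 / (2.5 + (4.5 - y) ^ 2)) := by
    rw [div_mul_div_comm, show (25 : ℝ) * 25 = 625 by norm_num]
    exact div_le_div_of_nonneg_left (by norm_num) (by positivity) product_le
  have log_ge := four_mul_le_log (c := 0.595) (by norm_num) (by norm_num)
    (le_trans (by norm_num) quotient_ge)
  rw [Real.log_mul (by positivity) (by positivity)] at log_ge
  unfold jensenWeight
  linarith

lemma jensenWeight_combination_ge {y₀ a b c d : ℝ} (ha : 0 ≤ a) (hb : 0 ≤ b)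
    (hc : c ≤ jensenWeight y₀) (hd : d ≤ jensenWeight (4.5 - y₀)) :
    a * (c + (y₀ ^ 2 - y ^ 2) / (2 * (2.5 + y₀ ^ 2))) +
        b * (d + ((4.5 - y₀) ^ 2 - (4.5 - y) ^ 2) / (2 * (2.5 + (4.5 - y₀) ^ 2))) ≤
      a * jensenWeight y + b * jensenWeight (4.5 - y) := by
  gcongr
  · linarith [jensenWeight_tangent_le y y₀]
  · linarith [jensenWeight_tangent_le (4.5 - y) (4.5 - y₀)]

lemma cubic_bernstein_nonneg {l r : ℝ} (hl : l ≤ y) (hr : y ≤ r) :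
    0 ≤ (y - l) ^ 3 ∧ 0 ≤ (y - l) ^ 2 * (r - y) ∧ 0 ≤ (y - l) * (r - y) ^ 2 ∧
      0 ≤ (r - y) ^ 3 := by
  rw [← sub_nonneg] at hl hr
  refine ⟨?_, ?_, ?_, ?_⟩ <;> positivity

-- The weights are replaced by tangents at `y₀ = 2, 3, 4`; each resulting cubic is then a
-- nonnegative combination of Bernstein polynomials on its interval.
lemma jensenWeight_combination_ge_of_ge (h0 : 0.958 ≤ y) (h1 : y ≤ 4.5) :
    1.11 ≤ (1 + 0.2823 * y) * jensenWeight y +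
      (1 - 0.2823 * (4.5 - y)) * jensenWeight (4.5 - y) := by
  have ha : 0 ≤ 1 + 0.2823 * y := by linarith
  have hb : 0 ≤ 1 - 0.2823 * (4.5 - y) := by linarith
  rcases le_total y 2.5 with hy | hy
  · refine le_trans ?_ (jensenWeight_combination_ge (y₀ := 2) (c := 2 * 0.336) (d := 2 * 0.262)
      ha hb (two_mul_le_jensenWeight (by norm_num) (by norm_num) (by norm_num))
      (two_mul_le_jensenWeight (by norm_num) (by norm_num) (by norm_num)))
    obtain ⟨b₃, b₂, b₁, b₀⟩ := cubic_bernstein_nonneg h0 hy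
    norm_num at b₀ b₁ b₂ b₃ ⊢
    nlinarith [b₀, b₁, b₂, b₃]
  rcases le_total y 3.8 with hy' | hy'
  · refine le_trans ?_ (jensenWeight_combination_ge (y₀ := 3) (c := 2 * 0.194) (d := 2 * 0.415)
      ha hb (two_mul_le_jensenWeight (by norm_num) (by norm_num) (by norm_num))
      (two_mul_le_jensenWeight (by norm_num) (by norm_num) (by norm_num)))
    obtain ⟨b₃, b₂, b₁, b₀⟩ := cubic_bernstein_nonneg hy hy'
    norm_num at b₀ b₁ b₂ b₃ ⊢
    nlinarith [b₀, b₁, b₂, b₃]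
  · refine le_trans ?_ (jensenWeight_combination_ge (y₀ := 4) (c := 2 * 0.075) (d := 2 * 0.551)
      ha hb (two_mul_le_jensenWeight (by norm_num) (by norm_num) (by norm_num))
      (two_mul_le_jensenWeight (by norm_num) (by norm_num) (by norm_num)))
    obtain ⟨b₃, b₂, b₁, b₀⟩ := cubic_bernstein_nonneg hy' h1
    norm_num at b₀ b₁ b₂ b₃ ⊢
    nlinarith [b₀, b₁, b₂, b₃]

lemma jensenWeight_combination_ge_of_le (h0 : 0 ≤ y) (h1 : y ≤ 0.958) :
    1.11 ≤ (1 + 0.2823 * y) * jensenWeight y +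
      (1 - 0.2823 * (4.5 - y)) * jensenWeight (4.5 - y) := by
  have weight_nonneg := jensenWeight_nonneg (y := 4.5 - y) (by linarith) (by linarith)
  have weight_ge : 1.15 - y ^ 2 / 5 ≤ jensenWeight y := by
    have weight_zero_ge : 2 * 0.575 ≤ jensenWeight 0 :=
      two_mul_le_jensenWeight (by norm_num) (by norm_num) (by norm_num)
    have tangent := jensenWeight_tangent_le y 0
    norm_num at tangent weight_zero_ge ⊢
    linarith
  have first_ge := mul_le_mul_of_nonneg_left weight_ge (by positivity : 0 ≤ 1 + 0.2823 * y)
  rcases le_total y 0.1 with hy | hy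
  · have weight_le : jensenWeight (4.5 - y) ≤ 2 * 0.034 :=
      (antitoneOn_jensenWeight (a := 4.4) (by norm_num) (mem_Ici.mpr (by linarith))
        (by linarith)).trans (jensenWeight_le_two_mul (by norm_num) (by norm_num))
    have second_ge :
        -(0.271 * 0.068) ≤ (1 - 0.2823 * (4.5 - y)) * jensenWeight (4.5 - y) := by nlinarith
    nlinarith [mul_nonneg h0 h0]
  · have weight_le : jensenWeight (4.5 - y) ≤ 2 * 0.1325 :=
      (antitoneOn_jensenWeight (a := 3.5) (by norm_num) (mem_Ici.mpr (by linarith))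
        (by linarith)).trans (jensenWeight_le_two_mul (by norm_num) (by norm_num))
    have second_ge :
        -(0.2422 * 0.265) ≤ (1 - 0.2823 * (4.5 - y)) * jensenWeight (4.5 - y) := by nlinarith
    have product_nonneg := mul_nonneg (sub_nonneg.mpr hy) (sub_nonneg.mpr h1)
    nlinarith [mul_nonneg product_nonneg h0]

lemma exp_mul_jensenWeight_add_ge {θ : ℝ} (h0 : 0 ≤ y) (h1 : y ≤ 4.5) (hθ0 : 0 ≤ θ)
    (hθ1 : θ ≤ 0.2823) :
    1.11 ≤ Real.exp (θ * y) * jensenWeight y +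
      Real.exp (-θ * (4.5 - y)) * jensenWeight (4.5 - y) := by
  have at_zero := jensenWeight_add_ge h0 h1
  have at_max : 1.11 ≤ (1 + 0.2823 * y) * jensenWeight y +
      (1 - 0.2823 * (4.5 - y)) * jensenWeight (4.5 - y) :=
    (le_total y 0.958).elim (jensenWeight_combination_ge_of_le h0)
      (jensenWeight_combination_ge_of_ge · h1)
  -- The bound `1 + x ≤ exp x` leaves an affine function of `θ`, checked at the two endpoints.
  have linearized : 1.11 ≤ (θ * y + 1) * jensenWeight y +
      (-θ * (4.5 - y) + 1) * jensenWeight (4.5 - y) := by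
    have interpolation : 0.2823 * ((θ * y + 1) * jensenWeight y +
          (-θ * (4.5 - y) + 1) * jensenWeight (4.5 - y)) =
        (0.2823 - θ) * (jensenWeight y + jensenWeight (4.5 - y)) +
          θ * ((1 + 0.2823 * y) * jensenWeight y +
            (1 - 0.2823 * (4.5 - y)) * jensenWeight (4.5 - y)) := by ring
    linarith [interpolation, mul_le_mul_of_nonneg_left at_zero (sub_nonneg.mpr hθ1),
      mul_le_mul_of_nonneg_left at_max hθ0]
  refine linearized.trans (add_le_add ?_ ?_)
  · exact mul_le_mul_of_nonneg_right (Real.add_one_le_exp _) (jensenWeight_nonneg h0 h1)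
  · exact mul_le_mul_of_nonneg_right (Real.add_one_le_exp _)
      (jensenWeight_nonneg (by linarith) (by linarith))

end JensenWeight

/-! ### Exponential sums over high zeros -/

section GeometricSeries

variable {x : ℝ}

lemma one_sub_exp_neg_pos (hx : 0 < x) : 0 < 1 - Real.exp (-x) :=
  sub_pos.mpr (Real.exp_lt_one_iff.mpr (neg_neg_of_pos hx))

-- The `[2/2]` Padé approximant of `exp` bounds `exp x` from below.
lemma one_div_one_sub_exp_neg_le (hx : 0 < x) :
    1 / (1 - Real.exp (-x)) ≤ 1 / x + 1 / 2 + x / 12 := by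
  have taylor_le := Real.sum_le_exp_of_nonneg hx.le 6
  simp only [Finset.sum_range_succ, Finset.sum_range_zero, Nat.factorial] at taylor_le
  have denominator_pos : 0 < 12 - 6 * x + x ^ 2 := by nlinarith [sq_nonneg (x - 3)]
  have pade_le : 12 + 6 * x + x ^ 2 ≤ (12 - 6 * x + x ^ 2) * Real.exp x := by
    have := mul_le_mul_of_nonneg_left taylor_le denominator_pos.le
    have remainder_nonneg : 0 ≤ x ^ 5 * (2 - x + x ^ 2) :=
      mul_nonneg (by positivity) (by nlinarith [sq_nonneg (x - 1 / 2)])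
    norm_num at this
    nlinarith
  have pade_neg_le : (12 + 6 * x + x ^ 2) * Real.exp (-x) ≤ 12 - 6 * x + x ^ 2 := by
    rw [Real.exp_neg, ← div_eq_mul_inv, div_le_iff₀ (Real.exp_pos x)]
    exact pade_le
  have rhs_eq : 1 / x + 1 / 2 + x / 12 = (12 + 6 * x + x ^ 2) / (12 * x) := by
    field_simp
    ring
  rw [div_le_iff₀ (one_sub_exp_neg_pos hx), rhs_eq, div_mul_eq_mul_div,
    le_div_iff₀ (by positivity)]
  nlinarith

lemma exp_neg_div_one_sub_exp_neg_sq_le (hx : 0 < x) :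
    Real.exp (-x) / (1 - Real.exp (-x)) ^ 2 ≤ 1 / x ^ 2 := by
  have denominator_pos := one_sub_exp_neg_pos hx
  rw [div_le_div_iff₀ (by positivity) (by positivity), one_mul]
  have exp_neg_eq : Real.exp (-x) = Real.exp (-(x / 2)) ^ 2 := by
    rw [← Real.exp_nat_mul]
    congr 1
    push_cast
    ring
  have mul_exp_le : x * Real.exp (-(x / 2)) ≤ 1 - Real.exp (-x) := by
    have le_sinh : x / 2 ≤ Real.sinh (x / 2) := Real.self_le_sinh_iff.mpr (by linarith)
    rw [Real.sinh_eq] at le_sinh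
    have exp_mul_exp_neg : Real.exp (x / 2) * Real.exp (-(x / 2)) = 1 := by
      rw [← Real.exp_add, add_neg_cancel, Real.exp_zero]
    rw [exp_neg_eq]
    nlinarith [mul_le_mul_of_nonneg_right le_sinh (Real.exp_pos (-(x / 2))).le]
  calc Real.exp (-x) * x ^ 2 = (x * Real.exp (-(x / 2))) ^ 2 := by
        rw [mul_pow, exp_neg_eq]
        ring
    _ ≤ (1 - Real.exp (-x)) ^ 2 := by gcongr

lemma sum_pow_mul_affine_le {w a b : ℝ} (hw0 : 0 ≤ w) (hw1 : w < 1) (ha : 0 ≤ a) (hb : 0 ≤ b)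
    (N : ℕ) :
    ∑ k ∈ Finset.range N, w ^ k * (a + b * k) ≤ a * (1 / (1 - w)) + b * (w / (1 - w) ^ 2) := by
  have norm_lt : ‖w‖ < 1 := by rwa [Real.norm_of_nonneg hw0]
  have hasSum := ((hasSum_geometric_of_lt_one hw0 hw1).mul_left a).add
    ((hasSum_coe_mul_geometric_of_norm_lt_one norm_lt).mul_left b)
  rw [one_div]
  refine le_trans (le_of_eq ?_)
    (sum_le_hasSum (Finset.range N) (fun k _ ↦ by positivity) hasSum)
  exact Finset.sum_congr rfl fun k _ ↦ by ring

end GeometricSeries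

section PairedZeros

lemma norm_mul_norm_reflection_le {z : ℂ} (a : ℝ) (h0 : 0 < z.re) (h1 : z.re < 1) :
    0 < ‖(2 + a * I) - z‖ ∧ 0 < ‖(2 + a * I) - (1 - conj z)‖ ∧
      ‖(2 + a * I) - z‖ * ‖(2 + a * I) - (1 - conj z)‖ ≤ 2.5 + (z.im - a) ^ 2 := by
  set p := ‖(2 + a * I) - z‖ with hp
  set r := ‖(2 + a * I) - (1 - conj z)‖ with hr
  have p_sq : p ^ 2 = (2 - z.re) ^ 2 + (z.im - a) ^ 2 := by
    rw [hp, Complex.sq_norm, Complex.normSq_apply]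
    simp only [Complex.sub_re, Complex.add_re, Complex.re_ofNat, Complex.mul_re, Complex.ofReal_re,
      Complex.I_re, mul_zero, Complex.ofReal_im, Complex.I_im, mul_one, sub_self, add_zero,
      Complex.sub_im, Complex.add_im, Complex.im_ofNat, Complex.mul_im, zero_add]
    ring
  have r_sq : r ^ 2 = (1 + z.re) ^ 2 + (z.im - a) ^ 2 := by
    rw [hr, Complex.sq_norm, Complex.normSq_apply]
    simp only [Complex.sub_re, Complex.add_re, Complex.re_ofNat, Complex.mul_re, Complex.ofReal_re,
      Complex.I_re, mul_zero, Complex.ofReal_im, Complex.I_im, mul_one, sub_self, add_zero,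
      Complex.one_re, Complex.conj_re, Complex.sub_im, Complex.add_im, Complex.im_ofNat,
      Complex.mul_im, zero_add, Complex.one_im, Complex.conj_im, sub_neg_eq_add]
    ring
  have pos_of_sq {x : ℝ} (hx : 0 ≤ x) (hx2 : 0 < x ^ 2) : 0 < x :=
    hx.lt_of_ne' (sq_pos_iff.mp hx2)
  refine ⟨pos_of_sq (norm_nonneg _) ?_, pos_of_sq (norm_nonneg _) ?_, ?_⟩
  · nlinarith [sq_nonneg (z.im - a)]
  · nlinarith [sq_nonneg (z.im - a)]
  · nlinarith [sq_nonneg (p - r), mul_pos h0 (sub_pos.mpr h1)]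

lemma two_mul_jensenWeight_le {z : ℂ} (a : ℝ) (h0 : 0 < z.re) (h1 : z.re < 1) :
    2 * max 0 (jensenWeight (z.im - a)) ≤
      max 0 (Real.log (5 / ‖(2 + a * I) - z‖)) +
        max 0 (Real.log (5 / ‖(2 + a * I) - (1 - conj z)‖)) := by
  rcases le_or_gt (jensenWeight (z.im - a)) 0 with h | h
  · rw [max_eq_left h, mul_zero]
    positivity
  rw [max_eq_right h.le]
  refine le_trans ?_ (add_le_add (le_max_right _ _) (le_max_right _ _))
  obtain ⟨p_pos, r_pos, product_le⟩ := norm_mul_norm_reflection_le a h0 h1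
  rw [jensenWeight, mul_div_cancel₀ _ two_ne_zero,
    ← Real.log_mul (by positivity) (by positivity), div_mul_div_comm,
    show (5 : ℝ) * 5 = 25 by norm_num]
  gcongr

lemma sum_reflection (Z : Finset ℂ) (hZ : ∀ z ∈ Z, 1 - conj z ∈ Z) (f : ℂ → ℝ) :
    ∑ z ∈ Z, f (1 - conj z) = ∑ z ∈ Z, f z := by
  refine Finset.sum_bij' (fun z _ ↦ 1 - conj z) (fun z _ ↦ 1 - conj z) hZ hZ ?_ ?_ ?_ <;> simp

variable {q : ℕ} [NeZero q] {χ : DirichletCharacter ℂ q}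

lemma sum_jensenWeight_le (hχ : χ.IsPrimitive) {t : ℝ} (ht : 100 ≤ t) (Z : Finset ℂ)
    (hZ : ∀ z ∈ Z, 0 < z.re ∧ z.re < 1) (hZ_symm : ∀ z ∈ Z, 1 - conj z ∈ Z) :
    ∑ z ∈ Z, analyticOrderNatAt χ.LFunction z * max 0 (jensenWeight (z.im - t)) ≤
      3.5 / π * Real.log (q * (t + 13) / (2 * π)) + (2 * Real.log (π ^ 2 / 6) + 0.073) := by
  set m : ℂ → ℝ := fun z ↦ analyticOrderNatAt χ.LFunction z
  set g : ℂ → ℝ := fun z ↦ max 0 (Real.log (5 / ‖(2 + t * I) - z‖))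
  have m_symm {z : ℂ} (hz : z ∈ Z) : m (1 - conj z) = m z := by
    simp only [m, analyticOrderNatAt,
      analyticOrderAt_LFunction_one_sub_conj hχ (hZ z hz).1 (hZ z hz).2]
  have two_mul_le : 2 * ∑ z ∈ Z, m z * max 0 (jensenWeight (z.im - t)) ≤
      2 * ∑ z ∈ Z, m z * g z :=
    calc _ = ∑ z ∈ Z, m z * (2 * max 0 (jensenWeight (z.im - t))) := by
          rw [Finset.mul_sum]
          exact Finset.sum_congr rfl fun z _ ↦ by ring
      _ ≤ ∑ z ∈ Z, (m z * g z + m (1 - conj z) * g (1 - conj z)) := by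
          refine Finset.sum_le_sum fun z hz ↦ ?_
          rw [m_symm hz, ← mul_add]
          exact mul_le_mul_of_nonneg_left (two_mul_jensenWeight_le t (hZ z hz).1 (hZ z hz).2)
            (Nat.cast_nonneg _)
      _ = 2 * ∑ z ∈ Z, m z * g z := by
          rw [Finset.sum_add_distrib, sum_reflection Z hZ_symm (fun z ↦ m z * g z), two_mul]
  linarith [sum_analyticOrderNatAt_LFunction_mul_log_le hχ ht Z]

end PairedZeros

lemma exp_le_sum_jensenWeight {y θ : ℝ} (hy : 0 ≤ y) (h0 : 0 ≤ θ) (h1 : θ ≤ 0.2823) {N : ℕ}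
    (hN : ⌊y / 4.5⌋₊ + 1 < N) :
    1.11 * Real.exp (-θ * y) ≤
      ∑ k ∈ Finset.range N, Real.exp (-(4.5 * θ)) ^ k * max 0 (jensenWeight (y - 4.5 * k)) := by
  set k := ⌊y / 4.5⌋₊ with hk
  have floor_le := Nat.floor_le (div_nonneg hy (by norm_num : (0 : ℝ) ≤ 4.5))
  have lt_floor_add_one := Nat.lt_floor_add_one (y / 4.5)
  rw [← hk, le_div_iff₀ (by norm_num)] at floor_le
  rw [← hk, div_lt_iff₀ (by norm_num)] at lt_floor_add_one
  set r := y - 4.5 * k with hr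
  have pair_subset : ({k, k + 1} : Finset ℕ) ⊆ Finset.range N := fun j hj ↦ by
    simp only [Finset.mem_insert, Finset.mem_singleton] at hj
    exact Finset.mem_range.mpr (by omega)
  have pow_eq : Real.exp (-(4.5 * θ)) ^ k = Real.exp (-θ * y) * Real.exp (θ * r) := by
    rw [← Real.exp_nat_mul, ← Real.exp_add, hr]
    ring_nf
  have pow_succ_eq : Real.exp (-(4.5 * θ)) ^ (k + 1) =
      Real.exp (-θ * y) * Real.exp (-θ * (4.5 - r)) := by
    rw [← Real.exp_nat_mul, ← Real.exp_add, hr]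
    push_cast
    ring_nf
  have sub_succ_eq : y - 4.5 * (k + 1 : ℕ) = -(4.5 - r) := by
    rw [hr]
    push_cast
    ring
  calc 1.11 * Real.exp (-θ * y)
      ≤ Real.exp (-θ * y) * (Real.exp (θ * r) * jensenWeight r +
          Real.exp (-θ * (4.5 - r)) * jensenWeight (4.5 - r)) := by
        rw [mul_comm]
        gcongr
        exact exp_mul_jensenWeight_add_ge (by linarith) (by linarith) h0 h1
    _ ≤ Real.exp (-θ * y) * (Real.exp (θ * r) * max 0 (jensenWeight r) +
          Real.exp (-θ * (4.5 - r)) * max 0 (jensenWeight (4.5 - r))) := by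
        gcongr <;> exact le_max_right _ _
    _ = ∑ j ∈ {k, k + 1}, Real.exp (-(4.5 * θ)) ^ j * max 0 (jensenWeight (y - 4.5 * j)) := by
        rw [Finset.sum_pair (by omega), pow_eq, pow_succ_eq, sub_succ_eq, jensenWeight_neg, ← hr]
        ring
    _ ≤ _ := Finset.sum_le_sum_of_subset_of_nonneg pair_subset fun j _ _ ↦ by positivity

/-- The factor by which `log (q T / 2π)` is multiplied in the bound for
`∑ exp (-θ (Im ρ - T))` over the zeros `ρ` above height `T`. -/
noncomputable def expSumFactor (θ T : ℝ) : ℝ :=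
  0.3109 / θ + 0.6995 + 0.5246 * θ + 0.0807 / (T * θ ^ 2)

section ExpSum

variable {q : ℕ} [NeZero q] {T θ : ℝ}

lemma log_conductor_mul_ge (q : ℕ) [NeZero q] (hT : 100 ≤ T) :
    2.767 ≤ Real.log (q * T / (2 * π)) := by
  have hq : (1 : ℝ) ≤ q := by exact_mod_cast NeZero.one_le
  have quotient_ge : 15.915 ≤ q * T / (2 * π) := by
    rw [le_div_iff₀ (by positivity)]
    nlinarith [Real.pi_lt_d4]
  linarith [four_mul_le_log (c := 0.69175) (by norm_num) (by norm_num)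
    (quotient_ge.trans' (by norm_num))]

lemma two_mul_log_pi_sq_div_six_le : 2 * Real.log (π ^ 2 / 6) + 0.073 ≤ 1.0685 := by
  have zeta_two_le : π ^ 2 / 6 ≤ 1.64494 := by nlinarith [Real.pi_lt_d6, Real.pi_pos]
  linarith [log_le_four_mul (c := 0.49771 / 4) (by norm_num) (by positivity)
    (zeta_two_le.trans (by norm_num))]

lemma log_conductor_mul_shift_le (q : ℕ) [NeZero q] (hT : 0 < T) {x : ℝ} (hx : 0 ≤ x) :
    Real.log (q * (T + x) / (2 * π)) ≤ Real.log (q * T / (2 * π)) + x / T := by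
  have hq : (0 : ℝ) < q := by exact_mod_cast NeZero.pos q
  have factorization : q * (T + x) / (2 * π) = q * T / (2 * π) * (1 + x / T) := by
    field_simp
  rw [factorization, Real.log_mul (by positivity) (by positivity)]
  linarith [Real.log_le_sub_one_of_pos (x := 1 + x / T) (by positivity)]

lemma jensenBound_le (q : ℕ) [NeZero q] (hT : 100 ≤ T) {k : ℝ} (hk : 0 ≤ k) :
    3.5 / π * Real.log (q * (T + 4.5 * k + 13) / (2 * π)) +
        (2 * Real.log (π ^ 2 / 6) + 0.073) ≤
      Real.log (q * T / (2 * π)) * 1.5526 + Real.log (q * T / (2 * π)) * (1.8119 / T) * k := by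
  set L := Real.log (q * T / (2 * π))
  have L_ge : 2.767 ≤ L := log_conductor_mul_ge q hT
  have slope_le : 3.5 / π ≤ 1.11409 := by
    rw [div_le_iff₀ Real.pi_pos]
    nlinarith [Real.pi_gt_d6]
  have shift := log_conductor_mul_shift_le q (T := T) (by linarith)
    (by positivity : 0 ≤ 4.5 * k + 13)
  have thirteen_div_le : 13 / T ≤ 0.13 := by
    rw [div_le_iff₀ (by linarith)]
    linarith
  have k_div_nonneg : 0 ≤ k / T := div_nonneg hk (by linarith)
  calc _ ≤ 1.11409 * (L + (4.5 * k + 13) / T) + 1.0685 := by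
        have sum_nonneg : 0 ≤ L + (4.5 * k + 13) / T :=
          add_nonneg (by linarith) (div_nonneg (by linarith) (by linarith))
        rw [add_assoc T]
        refine add_le_add ?_ two_mul_log_pi_sq_div_six_le
        calc _ ≤ 3.5 / π * (L + (4.5 * k + 13) / T) := by gcongr
          _ ≤ _ := mul_le_mul_of_nonneg_right slope_le sum_nonneg
    _ = 1.11409 * L + 1.0685 + 1.11409 * (13 / T) + 1.11409 * 4.5 * (k / T) := by ring
    _ ≤ L * 1.5526 + L * 1.8119 * (k / T) := by nlinarith
    _ = _ := by ring

lemma geometric_majorant_le (hT : 0 < T) (hθ : 0 < θ) :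
    1.5526 * (1 / (1 - Real.exp (-(4.5 * θ)))) + 1.8119 / T *
        (Real.exp (-(4.5 * θ)) / (1 - Real.exp (-(4.5 * θ))) ^ 2) ≤
      1.11 * expSumFactor θ T := by
  calc _ ≤ 1.5526 * (1 / (4.5 * θ) + 1 / 2 + 4.5 * θ / 12) +
        1.8119 / T * (1 / (4.5 * θ) ^ 2) := by
        have := one_div_one_sub_exp_neg_le (x := 4.5 * θ) (by positivity)
        have := exp_neg_div_one_sub_exp_neg_sq_le (x := 4.5 * θ) (by positivity)
        gcongr
    _ = 1.5526 / 4.5 * (1 / θ) + 1.5526 / 2 + 1.5526 * 4.5 / 12 * θ +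
        1.8119 / 20.25 * (1 / (T * θ ^ 2)) := by
        field_simp
        ring
    _ ≤ 1.11 * 0.3109 * (1 / θ) + 1.11 * 0.6995 + 1.11 * 0.5246 * θ +
        1.11 * 0.0807 * (1 / (T * θ ^ 2)) := by gcongr <;> norm_num
    _ = _ := by
        rw [expSumFactor]
        ring

lemma sum_exp_le {χ : DirichletCharacter ℂ q} (hχ : χ.IsPrimitive) (hT : 100 ≤ T) (h0 : 0 < θ)
    (h1 : θ ≤ 0.2823) (Z : Finset ℂ) (hZ : ∀ z ∈ Z, 0 < z.re ∧ z.re < 1 ∧ T < z.im)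
    (hZ_symm : ∀ z ∈ Z, 1 - conj z ∈ Z) :
    ∑ z ∈ Z, analyticOrderNatAt χ.LFunction z * Real.exp (-θ * (z.im - T)) ≤
      Real.log (q * T / (2 * π)) * expSumFactor θ T := by
  set L := Real.log (q * T / (2 * π))
  have L_ge : 2.767 ≤ L := log_conductor_mul_ge q hT
  have T_pos : 0 < T := by linarith
  set m : ℂ → ℝ := fun z ↦ analyticOrderNatAt χ.LFunction z
  set w := Real.exp (-(4.5 * θ))
  have w_lt_one : w < 1 := Real.exp_lt_one_iff.mpr (by linarith)
  obtain ⟨N, hN⟩ : ∃ N : ℕ, ∀ z ∈ Z, ⌊(z.im - T) / 4.5⌋₊ + 1 < N := by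
    refine ⟨Z.sup (fun z ↦ ⌊(z.im - T) / 4.5⌋₊) + 2, fun z hz ↦ ?_⟩
    have := Finset.le_sup (f := fun z : ℂ ↦ ⌊(z.im - T) / 4.5⌋₊) hz
    omega
  have height_bound (k : ℕ) : ∑ z ∈ Z, m z * max 0 (jensenWeight (z.im - T - 4.5 * k)) ≤
      L * 1.5526 + L * (1.8119 / T) * k := by
    simp only [sub_sub]
    have k_nonneg : (0 : ℝ) ≤ k := k.cast_nonneg
    exact (sum_jensenWeight_le hχ (by linarith) Z (fun z hz ↦ ⟨(hZ z hz).1, (hZ z hz).2.1⟩)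
      hZ_symm).trans (jensenBound_le q hT k_nonneg)
  have scaled : 1.11 * ∑ z ∈ Z, m z * Real.exp (-θ * (z.im - T)) ≤ L * (1.11 * expSumFactor θ T) :=
    calc _ = ∑ z ∈ Z, m z * (1.11 * Real.exp (-θ * (z.im - T))) := by
          rw [Finset.mul_sum]
          exact Finset.sum_congr rfl fun z _ ↦ by ring
      _ ≤ ∑ z ∈ Z, m z * ∑ k ∈ Finset.range N,
            w ^ k * max 0 (jensenWeight (z.im - T - 4.5 * k)) :=
          Finset.sum_le_sum fun z hz ↦ mul_le_mul_of_nonneg_left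
            (exp_le_sum_jensenWeight (by linarith [(hZ z hz).2.2]) h0.le h1 (hN z hz))
            (Nat.cast_nonneg _)
      _ = ∑ k ∈ Finset.range N,
            w ^ k * ∑ z ∈ Z, m z * max 0 (jensenWeight (z.im - T - 4.5 * k)) := by
          simp_rw [Finset.mul_sum]
          rw [Finset.sum_comm]
          exact Finset.sum_congr rfl fun k _ ↦ Finset.sum_congr rfl fun z _ ↦ by ring
      _ ≤ ∑ k ∈ Finset.range N, w ^ k * (L * 1.5526 + L * (1.8119 / T) * k) := by
          gcongr with k
          exact height_bound k
      _ ≤ L * 1.5526 * (1 / (1 - w)) + L * (1.8119 / T) * (w / (1 - w) ^ 2) :=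
          sum_pow_mul_affine_le (Real.exp_pos _).le w_lt_one (by positivity) (by positivity) N
      _ = L * (1.5526 * (1 / (1 - w)) + 1.8119 / T * (w / (1 - w) ^ 2)) := by ring
      _ ≤ L * (1.11 * expSumFactor θ T) := by
          gcongr
          exact geometric_majorant_le T_pos h0
  linarith

end ExpSum

/-! ### Moments of a Gaussian with a linear exponential factor -/

section GaussianMoment

open Filter Topology

/-- The half-line moment `∫₀^∞ r ^ a * exp (-c r² / 2 + b r) dr`, which dominates the Mellin
transform of `exp (-t² / 2 + i l t)` after rotation of the contour. -/
noncomputable def gaussianMoment (c b a : ℝ) : ℝ :=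
  ∫ r in Ioi (0 : ℝ), r ^ a * Real.exp (-c * r ^ 2 / 2 + b * r)

variable {c : ℝ}

lemma exp_neg_sq_add_le (hc : 0 < c) (b r : ℝ) :
    Real.exp (-c * r ^ 2 / 2 + b * r) ≤
      Real.exp (b ^ 2 / c) * Real.exp (-(c / 4) * r ^ 2) := by
  rw [← Real.exp_add, Real.exp_le_exp, ← sub_nonneg]
  have completed_square :
      b ^ 2 / c + -(c / 4) * r ^ 2 - (-c * r ^ 2 / 2 + b * r) = (b - c * r / 2) ^ 2 / c := by
    field_simp
    ring
  rw [completed_square]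
  positivity

lemma rpow_mul_exp_neg_sq_add_le (hc : 0 < c) (b a : ℝ) {r : ℝ} (hr : 0 < r) :
    r ^ a * Real.exp (-c * r ^ 2 / 2 + b * r) ≤
      Real.exp (b ^ 2 / c) * (r ^ a * Real.exp (-(c / 4) * r ^ 2)) := by
  rw [mul_left_comm]
  exact mul_le_mul_of_nonneg_left (exp_neg_sq_add_le hc b r) (Real.rpow_nonneg hr.le a)

lemma integrableOn_rpow_mul_exp (hc : 0 < c) (b : ℝ) {a : ℝ} (ha : -1 < a) :
    IntegrableOn (fun r : ℝ ↦ r ^ a * Real.exp (-c * r ^ 2 / 2 + b * r)) (Ioi 0) := by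
  have bound_integrable := ((integrable_rpow_mul_exp_neg_mul_sq (b := c / 4) (by positivity)
    ha).integrableOn (s := Ioi (0 : ℝ))).const_mul (Real.exp (b ^ 2 / c))
  refine bound_integrable.mono' (by fun_prop) ?_
  filter_upwards [ae_restrict_mem measurableSet_Ioi] with r (hr : 0 < r)
  rw [Real.norm_of_nonneg (by positivity)]
  exact rpow_mul_exp_neg_sq_add_le hc b a hr

lemma tendsto_rpow_mul_exp_atTop (hc : 0 < c) (b a : ℝ) :
    Tendsto (fun r : ℝ ↦ r ^ a * Real.exp (-c * r ^ 2 / 2 + b * r)) atTop (𝓝 0) := by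
  have exp_tendsto : Tendsto (fun r : ℝ ↦ Real.exp (-(1 / 2) * r)) atTop (𝓝 0) :=
    Real.tendsto_exp_atBot.comp (tendsto_id.const_mul_atTop_of_neg (by norm_num))
  have bound_tendsto := ((rpow_mul_exp_neg_mul_sq_isLittleO_exp_neg (b := c / 4) (by positivity)
    a).trans_tendsto exp_tendsto).const_mul (Real.exp (b ^ 2 / c))
  rw [mul_zero] at bound_tendsto
  refine squeeze_zero' ?_ ?_ bound_tendsto <;>
    filter_upwards [eventually_gt_atTop 0] with r hr
  · positivity
  · exact rpow_mul_exp_neg_sq_add_le hc b a hr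

lemma gaussianMoment_nonneg (c b a : ℝ) : 0 ≤ gaussianMoment c b a :=
  setIntegral_nonneg measurableSet_Ioi fun r (hr : 0 < r) ↦ by positivity

lemma hasDerivAt_exp_neg_sq_add (c b r : ℝ) :
    HasDerivAt (fun r : ℝ ↦ Real.exp (-c * r ^ 2 / 2 + b * r))
      ((-c * r + b) * Real.exp (-c * r ^ 2 / 2 + b * r)) r := by
  have exponent : HasDerivAt (fun r : ℝ ↦ -c * r ^ 2 / 2 + b * r) (-c * r + b) r := by
    refine ((((hasDerivAt_pow 2 r).const_mul (-c)).div_const 2).add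
      ((hasDerivAt_id r).const_mul b)).congr_deriv ?_
    push_cast
    ring
  exact exponent.exp.congr_deriv (mul_comm _ _)

lemma mul_gaussianMoment_one (hc : 0 < c) (b : ℝ) :
    c * gaussianMoment c b 1 = b * gaussianMoment c b 0 + 1 := by
  have int0 := integrableOn_rpow_mul_exp hc b (a := 0) (by norm_num)
  have int1 := integrableOn_rpow_mul_exp hc b (a := 1) (by norm_num)
  have limit := tendsto_rpow_mul_exp_atTop hc b 0
  simp only [gaussianMoment, Real.rpow_zero, one_mul, Real.rpow_one] at int0 int1 limit ⊢
  have deriv (r : ℝ) (_ : r ∈ Ici (0 : ℝ)) :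
      HasDerivAt (fun r : ℝ ↦ Real.exp (-c * r ^ 2 / 2 + b * r))
        (-c * (r * Real.exp (-c * r ^ 2 / 2 + b * r)) +
          b * Real.exp (-c * r ^ 2 / 2 + b * r)) r :=
    (hasDerivAt_exp_neg_sq_add c b r).congr_deriv (by ring)
  have ftc := integral_Ioi_of_hasDerivAt_of_tendsto' deriv
    ((int1.const_mul (-c)).add (int0.const_mul b)) limit
  rw [integral_add (int1.const_mul (-c)) (int0.const_mul b), integral_const_mul,
    integral_const_mul, zero_pow two_ne_zero, mul_zero, mul_zero, zero_div, add_zero,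
    Real.exp_zero] at ftc
  linarith

lemma hasDerivAt_rpow_mul_exp (c b a : ℝ) {r : ℝ} (hr : 0 < r) :
    HasDerivAt (fun r : ℝ ↦ r ^ a * Real.exp (-c * r ^ 2 / 2 + b * r))
      (a * (r ^ (a - 1) * Real.exp (-c * r ^ 2 / 2 + b * r)) +
        -c * (r ^ (a + 1) * Real.exp (-c * r ^ 2 / 2 + b * r)) +
        b * (r ^ a * Real.exp (-c * r ^ 2 / 2 + b * r))) r := by
  refine ((Real.hasDerivAt_rpow_const (.inl hr.ne')).mul
    (hasDerivAt_exp_neg_sq_add c b r)).congr_deriv ?_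
  rw [Real.rpow_add_one hr.ne']
  ring

lemma mul_gaussianMoment_add_one (hc : 0 < c) (b : ℝ) {a : ℝ} (ha : 0 < a) :
    c * gaussianMoment c b (a + 1) =
      a * gaussianMoment c b (a - 1) + b * gaussianMoment c b a := by
  have int_sub := (integrableOn_rpow_mul_exp hc b (a := a - 1) (by linarith)).const_mul a
  have int := (integrableOn_rpow_mul_exp hc b (a := a) (by linarith)).const_mul b
  have int_add := (integrableOn_rpow_mul_exp hc b (a := a + 1) (by linarith)).const_mul (-c)
  have cont : ContinuousWithinAt (fun r : ℝ ↦ r ^ a * Real.exp (-c * r ^ 2 / 2 + b * r))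
      (Ici 0) 0 :=
    ((Real.continuousAt_rpow_const _ _ (.inr ha.le)).mul (by fun_prop)).continuousWithinAt
  have ftc := integral_Ioi_of_hasDerivAt_of_tendsto cont
    (fun r hr ↦ hasDerivAt_rpow_mul_exp c b a hr) ((int_sub.add int_add).add int)
    (tendsto_rpow_mul_exp_atTop hc b a)
  rw [integral_add (by exact int_sub.add int_add) int, integral_add int_sub int_add,
    integral_const_mul, integral_const_mul, integral_const_mul, Real.zero_rpow ha.ne',
    zero_mul, sub_zero] at ftc
  simp only [gaussianMoment]
  linarith

lemma gaussianMoment_zero_le (hc : 0 < c) (b : ℝ) :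
    gaussianMoment c b 0 ≤ √(2 * π / c) * Real.exp (b ^ 2 / (2 * c)) := by
  have completed_square (r : ℝ) : r ^ (0 : ℝ) * Real.exp (-c * r ^ 2 / 2 + b * r) =
      Real.exp (b ^ 2 / (2 * c)) * Real.exp (-(c / 2) * (r - b / c) ^ 2) := by
    rw [Real.rpow_zero, one_mul, ← Real.exp_add]
    congr 1
    field_simp
    ring
  have int : Integrable (fun r : ℝ ↦ Real.exp (-(c / 2) * (r - b / c) ^ 2)) :=
    (integrable_exp_neg_mul_sq (b := c / 2) (by positivity)).comp_sub_right (b / c)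
  simp_rw [gaussianMoment, completed_square]
  rw [integral_const_mul, mul_comm]
  gcongr
  calc ∫ r in Ioi 0, Real.exp (-(c / 2) * (r - b / c) ^ 2)
      ≤ ∫ r, Real.exp (-(c / 2) * (r - b / c) ^ 2) :=
        setIntegral_le_integral int (.of_forall fun r ↦ (Real.exp_pos _).le)
    _ = √(π / (c / 2)) := by
        rw [integral_sub_right_eq_self (fun r ↦ Real.exp (-(c / 2) * r ^ 2)) (b / c),
          integral_gaussian]
    _ = √(2 * π / c) := by
        congr 1
        field_simp

lemma rpow_add_le_convex_combination {r σ : ℝ} (hr : 0 < r) (h0 : 0 ≤ σ) (h1 : σ ≤ 1) (a : ℝ) :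
    r ^ (σ + a) ≤ (1 - σ) * r ^ a + σ * r ^ (a + 1) := by
  have weighted_am_gm := Real.geom_mean_le_arith_mean2_weighted (sub_nonneg.2 h1) h0 zero_le_one
    hr.le (by ring)
  rw [Real.one_rpow, one_mul, mul_one] at weighted_am_gm
  rw [Real.rpow_add hr, Real.rpow_add_one hr.ne']
  calc r ^ σ * r ^ a ≤ (1 - σ + σ * r) * r ^ a :=
        mul_le_mul_of_nonneg_right weighted_am_gm (Real.rpow_nonneg hr.le a)
    _ = (1 - σ) * r ^ a + σ * (r ^ a * r) := by ring

lemma gaussianMoment_add_le (hc : 0 < c) (b : ℝ) {σ a : ℝ} (h0 : 0 ≤ σ) (h1 : σ ≤ 1)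
    (ha : -1 < a) :
    gaussianMoment c b (σ + a) ≤
      (1 - σ) * gaussianMoment c b a + σ * gaussianMoment c b (a + 1) := by
  have int := (integrableOn_rpow_mul_exp hc b ha).const_mul (1 - σ)
  have int_add := (integrableOn_rpow_mul_exp hc b (a := a + 1) (by linarith)).const_mul σ
  simp only [gaussianMoment]
  rw [← integral_const_mul, ← integral_const_mul, ← integral_add int int_add]
  refine setIntegral_mono_on (integrableOn_rpow_mul_exp hc b (by linarith)) (int.add int_add)
    measurableSet_Ioi fun r (hr : 0 < r) ↦ ?_
  rw [← mul_assoc, ← mul_assoc, ← add_mul]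
  exact mul_le_mul_of_nonneg_right (rpow_add_le_convex_combination hr h0 h1 a)
    (Real.exp_pos _).le

end GaussianMoment

/-! ### The Mellin transform of the Gaussian along a rotated ray -/

section RotatedMellin

open Filter Topology

/-- The integrand of the Mellin transform at `s` of `t ↦ exp (-t² / 2 + i l t)`, restricted to the
ray `t = w r`, without the constant `w ^ s`. -/
noncomputable def rotatedIntegrand (l : ℝ) (s w : ℂ) (r : ℝ) : ℂ :=
  (r : ℂ) ^ (s - 1) * Complex.exp (-w ^ 2 * r ^ 2 / 2 + I * l * w * r)

/-- The Mellin transform at `s` of `r ↦ exp (-(w r)² / 2 + i l w r)`. By rotation of the contour,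
`w ^ s * rotatedMellin l s w` does not depend on `w`. -/
noncomputable def rotatedMellin (l : ℝ) (s w : ℂ) : ℂ :=
  ∫ r in Ioi (0 : ℝ), rotatedIntegrand l s w r

variable (l : ℝ) {s w : ℂ}

lemma norm_rotatedIntegrand (s w : ℂ) {r : ℝ} (hr : 0 < r) :
    ‖rotatedIntegrand l s w r‖ =
      r ^ (s.re - 1) * Real.exp (-(w ^ 2).re * r ^ 2 / 2 + -l * w.im * r) := by
  have real_multiples : -w ^ 2 * (r : ℂ) ^ 2 / 2 + I * l * w * r =
      ((r ^ 2 / 2 : ℝ) : ℂ) * (-w ^ 2) + ((l * r : ℝ) : ℂ) * (I * w) := by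
    push_cast
    ring
  rw [rotatedIntegrand, norm_mul, Complex.norm_cpow_eq_rpow_re_of_pos hr, Complex.norm_exp,
    real_multiples, Complex.add_re, Complex.re_ofReal_mul, Complex.re_ofReal_mul, Complex.neg_re,
    Complex.I_mul_re, Complex.sub_re, Complex.one_re]
  ring_nf

lemma measurable_rotatedIntegrand (s w : ℂ) : Measurable (rotatedIntegrand l s w) := by
  unfold rotatedIntegrand
  fun_prop

lemma integrableOn_rotatedIntegrand (hs : 0 < s.re) (hw : 0 < (w ^ 2).re) :
    IntegrableOn (rotatedIntegrand l s w) (Ioi 0) := by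
  refine (integrableOn_rpow_mul_exp hw (-l * w.im) (a := s.re - 1) (by linarith)).mono'
    (measurable_rotatedIntegrand l s w).aestronglyMeasurable ?_
  filter_upwards [ae_restrict_mem measurableSet_Ioi] with r (hr : 0 < r)
  exact (norm_rotatedIntegrand l s w hr).le

lemma hasDerivAt_rotatedIntegrand_direction (s w : ℂ) (r : ℝ) :
    HasDerivAt (fun v ↦ rotatedIntegrand l s v r)
      (rotatedIntegrand l s w r * (-w * r ^ 2 + I * l * r)) w := by
  have exponent : HasDerivAt (fun v : ℂ ↦ -v ^ 2 * (r : ℂ) ^ 2 / 2 + I * l * v * r)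
      (-w * r ^ 2 + I * l * r) w := by
    refine ((((hasDerivAt_pow 2 w).neg.mul_const ((r : ℂ) ^ 2)).div_const 2).add
      (((hasDerivAt_id w).const_mul (I * l)).mul_const (r : ℂ))).congr_deriv ?_
    push_cast
    ring
  exact (exponent.cexp.const_mul ((r : ℂ) ^ (s - 1))).congr_deriv (mul_assoc _ _ _).symm

lemma exp_direction_le {c B r : ℝ} (hw : c ≤ (w ^ 2).re) (hwB : ‖w‖ ≤ B) (hr : 0 < r) :
    Real.exp (-(w ^ 2).re * r ^ 2 / 2 + -l * w.im * r) ≤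
      Real.exp (-c * r ^ 2 / 2 + |l| * B * r) := by
  have quadratic : c * r ^ 2 ≤ (w ^ 2).re * r ^ 2 := by gcongr
  have linear : -l * w.im ≤ |l| * B :=
    calc -l * w.im ≤ |-l * w.im| := le_abs_self _
      _ = |l| * |w.im| := by rw [abs_mul, abs_neg]
      _ ≤ |l| * B :=
        mul_le_mul_of_nonneg_left ((Complex.abs_im_le_norm w).trans hwB) (abs_nonneg l)
  exact Real.exp_le_exp.2 (by linarith [mul_le_mul_of_nonneg_right linear hr.le])

lemma norm_rotatedIntegrand_mul_le (s : ℂ) {c B r : ℝ} (hw : c ≤ (w ^ 2).re) (hwB : ‖w‖ ≤ B)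
    (hr : 0 < r) :
    ‖rotatedIntegrand l s w r * (-w * r ^ 2 + I * l * r)‖ ≤
      B * (r ^ (s.re + 1) * Real.exp (-c * r ^ 2 / 2 + |l| * B * r)) +
        |l| * (r ^ s.re * Real.exp (-c * r ^ 2 / 2 + |l| * B * r)) := by
  have factor_le : ‖-w * (r : ℂ) ^ 2 + I * l * r‖ ≤ B * r ^ 2 + |l| * r := by
    refine (norm_add_le _ _).trans ?_
    simp only [norm_mul, norm_neg, norm_pow, Complex.norm_real, Complex.norm_I,
      Real.norm_eq_abs, abs_of_pos hr, one_mul]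
    gcongr
  have rpow_add_one : r ^ (s.re + 1) = r ^ (s.re - 1) * r ^ 2 := by
    rw [← Real.rpow_two, ← Real.rpow_add hr]
    ring_nf
  have rpow_self : r ^ s.re = r ^ (s.re - 1) * r := by
    rw [← Real.rpow_add_one hr.ne', sub_add_cancel]
  rw [norm_mul, norm_rotatedIntegrand l s w hr, rpow_add_one, rpow_self]
  calc _ ≤ r ^ (s.re - 1) * Real.exp (-c * r ^ 2 / 2 + |l| * B * r) * (B * r ^ 2 + |l| * r) :=
        mul_le_mul (mul_le_mul_of_nonneg_left (exp_direction_le l hw hwB hr) (by positivity))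
          factor_le (norm_nonneg _) (by positivity)
    _ = _ := by ring

lemma differentiableAt_rotatedMellin (hs : 0 < s.re) (hw : 0 < (w ^ 2).re) :
    DifferentiableAt ℂ (rotatedMellin l s) w := by
  have nhds_mem : {v : ℂ | (w ^ 2).re / 2 < (v ^ 2).re ∧ ‖v‖ < ‖w‖ + 1} ∈ 𝓝 w := by
    have re_continuous : ContinuousAt (fun v : ℂ ↦ (v ^ 2).re) w := by fun_prop
    exact (re_continuous.eventually_const_lt (half_lt_self hw)).and
      (continuous_norm.continuousAt.eventually_lt_const (lt_add_one ‖w‖))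
  have bound_integrable :=
    ((integrableOn_rpow_mul_exp (half_pos hw) (|l| * (‖w‖ + 1)) (a := s.re + 1)
      (by linarith)).const_mul (‖w‖ + 1)).add
    ((integrableOn_rpow_mul_exp (half_pos hw) (|l| * (‖w‖ + 1)) (a := s.re)
      (by linarith)).const_mul |l|)
  refine (hasDerivAt_integral_of_dominated_loc_of_deriv_le nhds_mem
    (.of_forall fun v ↦ (measurable_rotatedIntegrand l s v).aestronglyMeasurable)
    (integrableOn_rotatedIntegrand l hs hw)
    ((measurable_rotatedIntegrand l s w).mul (by fun_prop)).aestronglyMeasurable ?_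
    bound_integrable (.of_forall fun r v _ ↦
      hasDerivAt_rotatedIntegrand_direction l s v r)).2.differentiableAt
  filter_upwards [ae_restrict_mem measurableSet_Ioi] with r hr v hv
  exact norm_rotatedIntegrand_mul_le l s hv.1.le hv.2.le hr

lemma ofReal_cpow_mul_rotatedMellin (s : ℂ) {x : ℝ} (hx : 0 < x) :
    (x : ℂ) ^ s * rotatedMellin l s x = rotatedMellin l s 1 := by
  have hx0 : (x : ℂ) ≠ 0 := mod_cast hx.ne'
  have change_of_variable := integral_comp_mul_left_Ioi (rotatedIntegrand l s 1) 0 hx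
  have dilation : ∫ r in Ioi (0 : ℝ), rotatedIntegrand l s 1 (x * r) =
      (x : ℂ) ^ (s - 1) * rotatedMellin l s x := by
    rw [rotatedMellin, ← integral_const_mul]
    refine setIntegral_congr_fun measurableSet_Ioi fun r (hr : 0 < r) ↦ ?_
    simp only [rotatedIntegrand]
    rw [Complex.ofReal_mul, Complex.mul_cpow_ofReal_nonneg hx.le hr.le, mul_assoc]
    ring_nf
  rw [mul_zero, dilation, Complex.real_smul, Complex.ofReal_inv, ← rotatedMellin]
    at change_of_variable
  rw [← sub_add_cancel s 1, Complex.cpow_add _ _ hx0, Complex.cpow_one, mul_right_comm,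
    sub_add_cancel, change_of_variable, mul_comm, mul_inv_cancel_left₀ hx0]

lemma re_sq_pos_of_abs_im_lt_re (hw : |w.im| < w.re) : 0 < (w ^ 2).re := by
  rw [sq, Complex.mul_re, ← sq, ← sq, sub_pos]
  exact sq_lt_sq.2 (hw.trans_le (le_abs_self _))

lemma convex_abs_im_lt_re : Convex ℝ {w : ℂ | |w.im| < w.re} := by
  have h : ConvexOn ℝ univ fun w : ℂ ↦ |w.im| - w.re :=
    ((convexOn_norm convex_univ).comp_linearMap Complex.imLm).sub
      (Complex.reLm.concaveOn convex_univ)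
  simpa only [mem_univ, true_and, sub_neg] using h.convex_lt 0

lemma cpow_mul_rotatedMellin (hs : 0 < s.re) (hw : |w.im| < w.re) :
    w ^ s * rotatedMellin l s w = rotatedMellin l s 1 := by
  have isOpen_sector : IsOpen {v : ℂ | |v.im| < v.re} := isOpen_lt (by fun_prop) (by fun_prop)
  have differentiable : DifferentiableOn ℂ (fun v ↦ v ^ s * rotatedMellin l s v)
      {v : ℂ | |v.im| < v.re} := fun v hv ↦
    ((differentiableAt_id.cpow_const (.inl ((abs_nonneg _).trans_lt hv))).mul
      (differentiableAt_rotatedMellin l hs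
        (re_sq_pos_of_abs_im_lt_re hv))).differentiableWithinAt
  have ofReal_tendsto : Tendsto (fun x : ℝ ↦ (x : ℂ)) (𝓝[≠] (1 : ℝ)) (𝓝[≠] (1 : ℂ)) := by
    refine tendsto_nhdsWithin_of_tendsto_nhds_of_eventually_within _
      ((Complex.continuous_ofReal.tendsto' 1 1 Complex.ofReal_one).mono_left
        nhdsWithin_le_nhds) ?_
    filter_upwards [self_mem_nhdsWithin] with x hx
    exact fun h ↦ hx (Complex.ofReal_eq_one.1 h)
  have frequently_eq :
      ∃ᶠ v : ℂ in 𝓝[≠] (1 : ℂ), v ^ s * rotatedMellin l s v = rotatedMellin l s 1 := by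
    refine ofReal_tendsto.frequently (Eventually.frequently ?_)
    filter_upwards [nhdsWithin_le_nhds (Ioi_mem_nhds zero_lt_one)] with x hx
    exact ofReal_cpow_mul_rotatedMellin l s hx
  exact (differentiable.analyticOnNhd isOpen_sector).eqOn_of_preconnected_of_frequently_eq
    analyticOnNhd_const convex_abs_im_lt_re.isPreconnected (by simp) frequently_eq hw

lemma hasDerivAt_rotatedIntegrand (s w : ℂ) {r : ℝ} (hr : 0 < r) :
    HasDerivAt (rotatedIntegrand l (s + 1) w)
      (s * rotatedIntegrand l s w r + -w ^ 2 * rotatedIntegrand l (s + 2) w r +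
        I * l * w * rotatedIntegrand l (s + 1) w r) r := by
  have hr0 : (r : ℂ) ≠ 0 := mod_cast hr.ne'
  have exponent : HasDerivAt (fun z : ℂ ↦ -w ^ 2 * z ^ 2 / 2 + I * l * w * z)
      (-w ^ 2 * r + I * l * w) r := by
    refine ((((hasDerivAt_pow 2 (r : ℂ)).const_mul (-w ^ 2)).div_const 2).add
      ((hasDerivAt_id (r : ℂ)).const_mul (I * l * w))).congr_deriv ?_
    push_cast
    ring
  have power : HasDerivAt (fun z : ℂ ↦ z ^ (s + 1 - 1))
      ((s + 1 - 1) * (r : ℂ) ^ (s + 1 - 1 - 1) * 1) r :=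
    (hasDerivAt_id (r : ℂ)).cpow_const (.inl (by simpa using hr))
  refine (power.mul exponent.cexp).comp_ofReal.congr_deriv ?_
  have cpow_succ : (r : ℂ) ^ (s + 2 - 1) = (r : ℂ) ^ s * r := by
    rw [show s + 2 - 1 = s + 1 by ring, Complex.cpow_add _ _ hr0, Complex.cpow_one]
  simp only [rotatedIntegrand, cpow_succ, add_sub_cancel_right]
  ring

lemma continuousWithinAt_rotatedIntegrand_zero (hs : 0 < s.re) (w : ℂ) :
    ContinuousWithinAt (rotatedIntegrand l (s + 1) w) (Ici 0) 0 := by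
  refine ContinuousAt.continuousWithinAt ?_
  unfold rotatedIntegrand
  refine ContinuousAt.mul ?_ (by fun_prop)
  rw [add_sub_cancel_right]
  exact Complex.continuousAt_ofReal_cpow_const 0 s (.inl hs)

lemma tendsto_rotatedIntegrand_atTop (s : ℂ) (hw : 0 < (w ^ 2).re) :
    Tendsto (rotatedIntegrand l s w) atTop (𝓝 0) := by
  refine tendsto_zero_iff_norm_tendsto_zero.2
    ((tendsto_rpow_mul_exp_atTop hw (-l * w.im) (s.re - 1)).congr' ?_)
  filter_upwards [eventually_gt_atTop 0] with r hr
  exact (norm_rotatedIntegrand l s w hr).symm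

lemma mul_rotatedMellin (hs : 0 < s.re) (hw : 0 < (w ^ 2).re) :
    s * rotatedMellin l s w =
      w ^ 2 * rotatedMellin l (s + 2) w - I * l * w * rotatedMellin l (s + 1) w := by
  have re_add_one : 0 < (s + 1).re := by rw [Complex.add_re, Complex.one_re]; linarith
  have re_add_two : 0 < (s + 2).re := by rw [Complex.add_re, Complex.re_ofNat]; linarith
  have int := (integrableOn_rotatedIntegrand l hs hw).const_mul s
  have int_one := (integrableOn_rotatedIntegrand l re_add_one hw).const_mul (I * l * w)
  have int_two := (integrableOn_rotatedIntegrand l re_add_two hw).const_mul (-w ^ 2)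
  have vanish_zero : rotatedIntegrand l (s + 1) w 0 = 0 := by
    have hs0 : s ≠ 0 := fun h ↦ hs.ne' (h ▸ Complex.zero_re)
    simp [rotatedIntegrand, hs0]
  have ftc := integral_Ioi_of_hasDerivAt_of_tendsto
    (continuousWithinAt_rotatedIntegrand_zero l hs w)
    (fun r hr ↦ hasDerivAt_rotatedIntegrand l s w hr) ((int.add int_two).add int_one)
    (tendsto_rotatedIntegrand_atTop l (s + 1) hw)
  rw [integral_add (by exact int.add int_two) int_one, integral_add int int_two,
    integral_const_mul, integral_const_mul, integral_const_mul, vanish_zero] at ftc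
  simp only [rotatedMellin]
  linear_combination ftc

lemma norm_exp_mul_I_cpow {θ : ℝ} (h0 : 0 < θ) (h1 : θ < π / 4) (s : ℂ) :
    ‖Complex.exp (θ * I) ^ s‖ = Real.exp (-θ * s.im) := by
  have im_eq : (θ * I : ℂ).im = θ := by simp
  rw [Complex.cpow_def_of_ne_zero (Complex.exp_ne_zero _), Complex.log_exp, Complex.norm_exp]
  · simp
  · linarith [Real.pi_pos]
  · linarith [Real.pi_pos]

lemma cos_two_mul_pos {θ : ℝ} (h0 : 0 < θ) (h1 : θ < π / 4) : 0 < Real.cos (2 * θ) :=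
  Real.cos_pos_of_mem_Ioo ⟨by linarith [Real.pi_pos], by linarith⟩

variable {l} {θ b : ℝ}

lemma norm_rotatedMellin_le (hs : 0 < s.re) (h0 : 0 < θ) (h1 : θ < π / 4)
    (hb : -l * Real.sin θ ≤ b) :
    ‖rotatedMellin l s 1‖ ≤
      Real.exp (-θ * s.im) * gaussianMoment (Real.cos (2 * θ)) b (s.re - 1) := by
  set w := Complex.exp (θ * I)
  have re_eq : w.re = Real.cos θ := Complex.exp_ofReal_mul_I_re θ
  have im_eq : w.im = Real.sin θ := Complex.exp_ofReal_mul_I_im θ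
  have sq_re : (w ^ 2).re = Real.cos (2 * θ) := by
    rw [sq, Complex.mul_re, re_eq, im_eq, Real.cos_two_mul']
    ring
  have sector : |w.im| < w.re := by
    have cos_pos : 0 < Real.cos θ :=
      Real.cos_pos_of_mem_Ioo ⟨by linarith [Real.pi_pos], by linarith [Real.pi_pos]⟩
    have cos_two_pos := cos_two_mul_pos h0 h1
    rw [Real.cos_two_mul', sub_pos] at cos_two_pos
    rw [im_eq, re_eq]
    exact abs_lt_of_sq_lt_sq cos_two_pos cos_pos.le
  rw [← cpow_mul_rotatedMellin l hs sector, norm_mul, norm_exp_mul_I_cpow h0 h1]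
  refine mul_le_mul_of_nonneg_left (norm_integral_le_of_norm_le
    (integrableOn_rpow_mul_exp (cos_two_mul_pos h0 h1) b (by linarith)) ?_) (Real.exp_pos _).le
  filter_upwards [ae_restrict_mem measurableSet_Ioi] with r (hr : 0 < r)
  rw [norm_rotatedIntegrand l s w hr, sq_re, im_eq]
  gcongr

lemma im_mul_norm_rotatedMellin_le_norm_add (l : ℝ) (hs : 0 < s.re) :
    s.im * ‖rotatedMellin l s 1‖ ≤
      ‖rotatedMellin l (s + 2) 1‖ + |l| * ‖rotatedMellin l (s + 1) 1‖ := by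
  have recurrence := mul_rotatedMellin l (w := 1) hs (by simp)
  rw [one_pow, one_mul, mul_one] at recurrence
  calc s.im * ‖rotatedMellin l s 1‖ ≤ ‖s‖ * ‖rotatedMellin l s 1‖ := by
        gcongr
        exact (le_abs_self _).trans (Complex.abs_im_le_norm s)
    _ = ‖rotatedMellin l (s + 2) 1 - I * l * rotatedMellin l (s + 1) 1‖ := by
        rw [← norm_mul, recurrence]
    _ ≤ ‖rotatedMellin l (s + 2) 1‖ + ‖I * l * rotatedMellin l (s + 1) 1‖ := norm_sub_le _ _
    _ = _ := by
        rw [norm_mul, norm_mul, Complex.norm_I, one_mul, Complex.norm_real, Real.norm_eq_abs]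

lemma im_mul_norm_rotatedMellin_le (hs0 : 0 < s.re) (hs1 : s.re < 1) (h0 : 0 < θ)
    (h1 : θ < π / 4) (hb : -l * Real.sin θ ≤ b) :
    s.im * ‖rotatedMellin l s 1‖ ≤ Real.exp (-θ * s.im) *
      ((1 - s.re) * (gaussianMoment (Real.cos (2 * θ)) b 1
          + |l| * gaussianMoment (Real.cos (2 * θ)) b 0)
        + s.re * (gaussianMoment (Real.cos (2 * θ)) b 2
          + |l| * gaussianMoment (Real.cos (2 * θ)) b 1)) := by
  have bound (j : ℝ) (hj : 0 ≤ j) : ‖rotatedMellin l (s + (j + 1 : ℝ)) 1‖ ≤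
      Real.exp (-θ * s.im) * ((1 - s.re) * gaussianMoment (Real.cos (2 * θ)) b j
        + s.re * gaussianMoment (Real.cos (2 * θ)) b (j + 1)) := by
    have re_eq : (s + (j + 1 : ℝ)).re = s.re + j + 1 := by simp [add_assoc]
    have im_eq : (s + (j + 1 : ℝ)).im = s.im := by simp
    have norm_le := norm_rotatedMellin_le (s := s + (j + 1 : ℝ)) (by linarith) h0 h1 hb
    rw [re_eq, im_eq, add_sub_cancel_right] at norm_le
    exact norm_le.trans (mul_le_mul_of_nonneg_left (gaussianMoment_add_le (cos_two_mul_pos h0 h1)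
      b hs0.le hs1.le (by linarith)) (Real.exp_pos _).le)
  have bound_one := bound 0 le_rfl
  have bound_two := bound 1 zero_le_one
  rw [zero_add, Complex.ofReal_one] at bound_one
  rw [one_add_one_eq_two, Complex.ofReal_ofNat] at bound_two
  have weighted := mul_le_mul_of_nonneg_left bound_one (abs_nonneg l)
  linarith [im_mul_norm_rotatedMellin_le_norm_add l hs0]

end RotatedMellin

/-! ### The choice of the rotation angle -/

section ElementaryBounds

lemma re_sum_range_eight_mul_I (x : ℝ) :
    (∑ m ∈ Finset.range 8, ((x : ℂ) * I) ^ m / (m.factorial : ℂ)).re =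
      1 - x ^ 2 / 2 + x ^ 4 / 24 - x ^ 6 / 720 := by
  have sum_eq : ∑ m ∈ Finset.range 8, ((x : ℂ) * I) ^ m / (m.factorial : ℂ) =
      ((1 - x ^ 2 / 2 + x ^ 4 / 24 - x ^ 6 / 720 : ℝ) : ℂ) +
        ((x - x ^ 3 / 6 + x ^ 5 / 120 - x ^ 7 / 5040 : ℝ) : ℂ) * I := by
    have I_three : I ^ 3 = -I := Complex.I_pow_three
    have I_four : I ^ 4 = 1 := Complex.I_pow_four
    have I_five : I ^ 5 = I := by rw [pow_succ, I_four, one_mul]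
    have I_six : I ^ 6 = -1 := by rw [pow_succ, I_five, Complex.I_mul_I]
    have I_seven : I ^ 7 = -I := by rw [pow_succ, I_six, neg_one_mul]
    simp only [Finset.sum_range_succ, Finset.sum_range_zero, Nat.factorial, mul_pow,
      Complex.I_sq, I_three, I_four, I_five, I_six, I_seven]
    push_cast
    ring
  rw [sum_eq, Complex.add_re, Complex.ofReal_re, Complex.re_ofReal_mul, Complex.I_re, mul_zero,
    add_zero]

lemma taylor_eight_le_cos {x : ℝ} (h0 : 0 ≤ x) (h1 : x ≤ 1) :
    1 - x ^ 2 / 2 + x ^ 4 / 24 - x ^ 6 / 720 - x ^ 8 * (9 / 322560) ≤ Real.cos x := by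
  have norm_eq : ‖(x : ℂ) * I‖ = x := by simp [abs_of_nonneg h0]
  have remainder_le := (Complex.abs_re_le_norm _).trans
    (Complex.exp_bound (x := (x : ℂ) * I) (by rwa [norm_eq]) (n := 8) (by norm_num))
  rw [norm_eq, Complex.sub_re, Complex.exp_ofReal_mul_I_re, re_sum_range_eight_mul_I]
    at remainder_le
  have := (abs_le.1 remainder_le).1
  norm_num [Nat.factorial] at this
  linarith

lemma cubic_le_exp {x : ℝ} (hx : 0 ≤ x) : 1 + x + x ^ 2 / 2 + x ^ 3 / 6 ≤ Real.exp x := by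
  have := Real.sum_le_exp_of_nonneg hx 4
  simp only [Finset.sum_range_succ, Finset.sum_range_zero] at this
  norm_num [Nat.factorial] at this
  linarith

lemma exp_ge_of_eight_le {x : ℝ} (h : 8 ≤ x) : 2800 ≤ Real.exp x :=
  calc (2800 : ℝ) ≤ 2.7 ^ 8 := by norm_num
    _ ≤ Real.exp 1 ^ 8 := by gcongr; linarith [Real.exp_one_gt_d9]
    _ = Real.exp 8 := by rw [← Real.exp_nat_mul]; norm_num
    _ ≤ Real.exp x := Real.exp_le_exp.2 h

end ElementaryBounds

/-- The mean of the moment bounds of `im_mul_norm_rotatedMellin_le` for a zero `ρ` and its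
reflection `1 - conj ρ`. It no longer depends on the real part of `ρ`. -/
noncomputable def averagedMoment (c b l : ℝ) : ℝ :=
  (l * gaussianMoment c b 0 + (1 + l) * gaussianMoment c b 1 + gaussianMoment c b 2) / 2

lemma averagedMoment_nonneg (c b : ℝ) {l : ℝ} (hl : 0 ≤ l) : 0 ≤ averagedMoment c b l := by
  have := gaussianMoment_nonneg c b 0
  have := gaussianMoment_nonneg c b 1
  have := gaussianMoment_nonneg c b 2
  unfold averagedMoment
  positivity

lemma averagedMoment_eq {c : ℝ} (hc : 0 < c) (s l : ℝ) :
    averagedMoment c (l * s) l =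
      (gaussianMoment c (l * s) 0 *
          (l * (1 + s / c) + 1 / c + l ^ 2 * (s / c + (s / c) ^ 2)) +
        1 / c * (1 + l * (1 + s / c))) / 2 := by
  have first := mul_gaussianMoment_one hc (l * s)
  have second := mul_gaussianMoment_add_one hc (l * s) one_pos
  rw [one_add_one_eq_two, sub_self] at second
  rw [averagedMoment, eq_div_of_mul_eq hc.ne' ((mul_comm _ _).trans second),
    eq_div_of_mul_eq hc.ne' ((mul_comm _ _).trans first)]
  field_simp
  ring

lemma averagedMoment_le {c s l ε G : ℝ} (hc : 0 < c) (hc1 : c ≤ 1) (hl : 0 ≤ l) (hs : 0 ≤ s)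
    (hG : gaussianMoment c (l * s) 0 ≤ G) (hε : 1 / c ≤ ε * G) :
    averagedMoment c (l * s) l ≤
      G * ((1 + ε) * (l * (1 + s / c) + 1 / c) + l ^ 2 * (s / c + (s / c) ^ 2)) / 2 := by
  have one_le : 1 ≤ 1 / c := by rwa [le_div_iff₀ hc, one_mul]
  have main_le : gaussianMoment c (l * s) 0 *
        (l * (1 + s / c) + 1 / c + l ^ 2 * (s / c + (s / c) ^ 2)) ≤
      G * (l * (1 + s / c) + 1 / c + l ^ 2 * (s / c + (s / c) ^ 2)) := by
    gcongr
  have remainder_le : 1 / c * (1 + l * (1 + s / c)) ≤ ε * G * (1 / c + l * (1 + s / c)) := by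
    gcongr
    exact (one_pos.trans_le one_le).le.trans hε
  rw [averagedMoment_eq hc]
  linarith

/-- Numerical bounds for the quantities depending on the rotation angle `θ` alone: `c` is a lower
bound for `cos 2θ`, while `a`, `S` and `K` are upper bounds for `sin θ / cos 2θ`,
`sin² θ / cos 2θ` and `√(2π / cos 2θ)`. -/
structure AngleBounds (θ c a S K : ℝ) : Prop where
  pos : 0 < θ
  le : θ ≤ 0.2823
  c_pos : 0 < c
  le_cos : c ≤ Real.cos (2 * θ)
  sin_div_cos_le : Real.sin θ / Real.cos (2 * θ) ≤ a
  sin_sq_div_cos_le : Real.sin θ ^ 2 / Real.cos (2 * θ) ≤ S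
  sqrt_le : √(2 * π / Real.cos (2 * θ)) ≤ K

lemma angleBounds_of_taylor {θ c a S K : ℝ} (h0 : 0 < θ) (h1 : θ ≤ 0.2823) (hc0 : 0 < c)
    (hc : c ≤ 1 - (2 * θ) ^ 2 / 2 + (2 * θ) ^ 4 / 24 - (2 * θ) ^ 6 / 720 -
      (2 * θ) ^ 8 * (9 / 322560))
    (ha0 : 0 ≤ a) (ha : (1 - c) / 2 ≤ (a * c) ^ 2) (hS : (1 - c) / 2 ≤ S * c)
    (hK0 : 0 ≤ K) (hK : 6.2832 ≤ K ^ 2 * c) : AngleBounds θ c a S K := by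
  have le_cos := hc.trans (taylor_eight_le_cos (by linarith) (by linarith))
  have cos_pos := hc0.trans_le le_cos
  have sin_sq_le : Real.sin θ ^ 2 ≤ (1 - c) / 2 := by
    rw [Real.sin_sq_eq_half_sub]
    linarith
  have sin_le : Real.sin θ ≤ a * c :=
    (abs_le_of_sq_le_sq' (sin_sq_le.trans ha) (by positivity)).2
  have S_nonneg : 0 ≤ S := nonneg_of_mul_nonneg_left ((sq_nonneg _).trans (sin_sq_le.trans hS)) hc0
  refine ⟨h0, h1, hc0, le_cos, ?_, ?_, ?_⟩
  · rw [div_le_iff₀ cos_pos]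
    exact sin_le.trans (by gcongr)
  · rw [div_le_iff₀ cos_pos]
    exact (sin_sq_le.trans hS).trans (by gcongr)
  · rw [Real.sqrt_le_left hK0, div_le_iff₀ cos_pos]
    calc 2 * π ≤ 6.2832 := by linarith [Real.pi_lt_d4]
      _ ≤ K ^ 2 * c := hK
      _ ≤ K ^ 2 * Real.cos (2 * θ) := by gcongr

lemma mul_le_sin {θ : ℝ} (h0 : 0 < θ) (h1 : θ ≤ 0.2823) : 0.98 * θ ≤ Real.sin θ := by
  have sub_cube_lt := Real.sin_gt_sub_cube h0
  have cube_le : θ ^ 3 ≤ 0.2823 ^ 2 * θ := by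
    rw [pow_succ]
    gcongr
  linarith

/-- The bound, relative to `log (q * T / (2 * π))`, for the sum of `‖rotatedMellin (-l) ρ 1‖` over
the zeros `ρ` above height `T` that results from rotating the contour by `θ`. -/
noncomputable def rotationBound (θ T l : ℝ) : ℝ :=
  Real.exp (-θ * T) * expSumFactor θ T * averagedMoment (Real.cos (2 * θ)) (l * Real.sin θ) l / T

lemma expSumFactor_pos {θ T : ℝ} (h0 : 0 < θ) (hT : 0 < T) : 0 < expSumFactor θ T := by
  unfold expSumFactor
  positivity

lemma expSumFactor_anti_right {θ T T' : ℝ} (h0 : 0 < θ) (hT : 0 < T) (h : T ≤ T') :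
    expSumFactor θ T' ≤ expSumFactor θ T := by
  unfold expSumFactor
  gcongr

section RotationBound

variable {T l u θ c a S K lam ε : ℝ}

lemma exponent_ge (B : AngleBounds θ c a S K) (hu : l ^ 2 = u * T) :
    0.48 * u * T * θ ^ 2 ≤ (l * Real.sin θ) ^ 2 / (2 * Real.cos (2 * θ)) := by
  have cos_pos := B.c_pos.trans_le B.le_cos
  have nonneg : 0 ≤ u * T := hu ▸ sq_nonneg l
  have sin_sq_ge : (0.98 * θ) ^ 2 ≤ Real.sin θ ^ 2 :=
    pow_le_pow_left₀ (by linarith [B.pos]) (mul_le_sin B.pos B.le) 2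
  rw [mul_pow, hu, le_div_iff₀ (by positivity)]
  calc 0.48 * u * T * θ ^ 2 * (2 * Real.cos (2 * θ))
      = u * T * (0.96 * θ ^ 2 * Real.cos (2 * θ)) := by ring
    _ ≤ u * T * (0.96 * θ ^ 2 * 1) := by gcongr; exact Real.cos_le_one _
    _ ≤ u * T * Real.sin θ ^ 2 := by gcongr; linarith [sq_nonneg θ]

lemma exponent_le (B : AngleBounds θ c a S K) (hu : l ^ 2 = u * T) :
    (l * Real.sin θ) ^ 2 / (2 * Real.cos (2 * θ)) ≤ T * (u * S / 2) := by
  calc (l * Real.sin θ) ^ 2 / (2 * Real.cos (2 * θ))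
      = l ^ 2 / 2 * (Real.sin θ ^ 2 / Real.cos (2 * θ)) := by ring
    _ ≤ l ^ 2 / 2 * S := by gcongr; exact B.sin_sq_div_cos_le
    _ = T * (u * S / 2) := by rw [hu]; ring

lemma sqrt_two_pi_div_ge (hc : 0 < c) (hc1 : c ≤ 1) : 2.5 ≤ √(2 * π / c) := by
  apply Real.le_sqrt_of_sq_le
  rw [le_div_iff₀ hc]
  linarith [Real.pi_gt_d2]

lemma averagedMoment_angle_le (B : AngleBounds θ c a S K) (hl : 0 ≤ l)
    (hu : l ^ 2 = u * T) (hlam : l ≤ lam * T) (hε0 : 0 ≤ ε)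
    (hε : 1 / c ≤ ε * (2.5 * Real.exp (0.48 * u * T * θ ^ 2))) :
    averagedMoment (Real.cos (2 * θ)) (l * Real.sin θ) l ≤
      K * Real.exp (T * (u * S / 2)) *
        ((1 + ε) * (lam * T * (1 + a) + 1 / c) + u * T * (a + a ^ 2)) / 2 := by
  have cos_pos := B.c_pos.trans_le B.le_cos
  have cos_le := Real.cos_le_one (2 * θ)
  have sin_nonneg : 0 ≤ Real.sin θ := by linarith [mul_le_sin B.pos B.le, B.pos]
  have K_nonneg : 0 ≤ K := (Real.sqrt_nonneg _).trans B.sqrt_le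
  have lam_nonneg : 0 ≤ lam * T := hl.trans hlam
  set G := √(2 * π / Real.cos (2 * θ)) *
    Real.exp ((l * Real.sin θ) ^ 2 / (2 * Real.cos (2 * θ))) with hG
  have inv_le : 1 / Real.cos (2 * θ) ≤ 1 / c := one_div_le_one_div_of_le B.c_pos B.le_cos
  have inv_le_G : 1 / Real.cos (2 * θ) ≤ ε * G := by
    refine (inv_le.trans hε).trans ?_
    rw [hG]
    gcongr
    exacts [sqrt_two_pi_div_ge cos_pos cos_le, exponent_ge B hu]
  have G_le : G ≤ K * Real.exp (T * (u * S / 2)) := by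
    rw [hG]
    gcongr
    exacts [B.sqrt_le, exponent_le B hu]
  refine (averagedMoment_le cos_pos cos_le hl sin_nonneg
    (gaussianMoment_zero_le cos_pos _) inv_le_G).trans ?_
  rw [← hu]
  gcongr
  all_goals exact B.sin_div_cos_le

lemma rotationBound_le (B : AngleBounds θ c a S K) (hT : 0 < T) (hl : 0 ≤ l)
    (hu : l ^ 2 = u * T) (hlam : l ≤ lam * T) (hε0 : 0 ≤ ε)
    (hε : 1 / c ≤ ε * (2.5 * Real.exp (0.48 * u * T * θ ^ 2))) :
    rotationBound θ T l ≤
      K * expSumFactor θ T * ((1 + ε) * (lam * (1 + a) + 1 / (c * T)) + u * (a + a ^ 2)) / 2 *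
        Real.exp (T * (u * S / 2 - θ)) := by
  have factor_pos := expSumFactor_pos B.pos hT
  have exp_eq : Real.exp (T * (u * S / 2 - θ)) =
      Real.exp (T * (u * S / 2)) * Real.exp (-θ * T) := by
    rw [← Real.exp_add]
    ring_nf
  have c_ne := B.c_pos.ne'
  calc rotationBound θ T l
      ≤ Real.exp (-θ * T) * expSumFactor θ T * (K * Real.exp (T * (u * S / 2)) *
        ((1 + ε) * (lam * T * (1 + a) + 1 / c) + u * T * (a + a ^ 2)) / 2) / T := by
        unfold rotationBound
        gcongr
        exact averagedMoment_angle_le B hl hu hlam hε0 hε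
    _ = _ := by
        rw [exp_eq]
        field_simp

end RotationBound

/-- The bound, relative to `log (q * T / (2 * π))`, for the zeros on the side of the real axis where
the oscillation of `exp (i l t)` is resonant. -/
noncomputable def resonantBound (T l : ℝ) : ℝ :=
  4.328 * Real.exp (-0.1598 * T) +
    0.802 * (l / (2 * π)) * Real.exp (-0.1065 * (2 * T / l) ^ 2)

section ResonantBound

variable {T l u : ℝ}

lemma le_resonantBound {θ S Q X e₁ e₂ D : ℝ} (hT : 0 < T) (hl : 0 < l)
    (hu : l ^ 2 = u * T) (hX : X ≤ Q * Real.exp (T * (u * S / 2 - θ)))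
    (h₁ : e₁ ≤ Real.exp (-(T * (0.1598 - θ + u * S / 2))))
    (h₂ : e₂ ≤ Real.exp (T * (θ - u * S / 2 - 0.426 / u))) (he₂ : 0 ≤ e₂)
    (hD : (6.2832 * D) ^ 2 ≤ u * T) (hQ : Q ≤ 4.328 * e₁ + 0.802 * D * e₂) :
    X ≤ resonantBound T l := by
  have u_pos : 0 < u := pos_of_mul_pos_left (hu ▸ pow_pos hl 2) hT.le
  have D_le : D ≤ l / (2 * π) := by
    have mul_le : 6.2832 * D ≤ l := (abs_le_of_sq_le_sq' (hu ▸ hD) hl.le).2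
    rw [le_div_iff₀ (by positivity)]
    rcases le_total 0 D with h | h
    · calc D * (2 * π) ≤ D * 6.2832 := by gcongr; linarith [Real.pi_lt_d4]
        _ ≤ l := by linarith
    · exact (mul_nonpos_of_nonpos_of_nonneg h (by positivity)).trans hl.le
  have split₁ : Real.exp (-0.1598 * T) =
      Real.exp (-(T * (0.1598 - θ + u * S / 2))) * Real.exp (T * (u * S / 2 - θ)) := by
    rw [← Real.exp_add]
    ring_nf
  have split₂ : Real.exp (-0.1065 * (2 * T / l) ^ 2) =
      Real.exp (T * (θ - u * S / 2 - 0.426 / u)) * Real.exp (T * (u * S / 2 - θ)) := by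
    rw [← Real.exp_add, div_pow, hu]
    congr 1
    field_simp
    ring
  calc X ≤ Q * Real.exp (T * (u * S / 2 - θ)) := hX
    _ ≤ (4.328 * Real.exp (-(T * (0.1598 - θ + u * S / 2))) + 0.802 * (l / (2 * π)) *
          Real.exp (T * (θ - u * S / 2 - 0.426 / u))) * Real.exp (T * (u * S / 2 - θ)) := by
        gcongr
        refine hQ.trans ?_
        gcongr
    _ = resonantBound T l := by
        rw [resonantBound, split₁, split₂]
        ring

/-- Some angle in the range of `sum_exp_le` makes `rotationBound` small enough. -/
def HasAdmissibleAngle (T l : ℝ) : Prop :=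
  ∃ θ : ℝ, 0 < θ ∧ θ ≤ 0.2823 ∧ rotationBound θ T l ≤ resonantBound T l

lemma le_mul_of_sq_eq {lam uMax TMin : ℝ} (hT : 0 < T) (hu : l ^ 2 = u * T) (hu_le : u ≤ uMax)
    (hT_ge : TMin ≤ T) (hlam0 : 0 ≤ lam) (hlam : uMax ≤ lam ^ 2 * TMin) : l ≤ lam * T := by
  refine (abs_le_of_sq_le_sq' (b := lam * T) ?_ (by positivity)).2
  calc l ^ 2 = u * T := hu
    _ ≤ lam ^ 2 * T * T := by
        gcongr
        exact (hu_le.trans hlam).trans (by gcongr)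
    _ = (lam * T) ^ 2 := by ring

lemma angleBounds_max : AngleBounds 0.2823 0.84478 0.32984 0.091872 2.7274 := by
  apply angleBounds_of_taylor <;> norm_num

lemma expSumFactor_max_le (hT : 100 ≤ T) : expSumFactor 0.2823 T ≤ 1.9592 :=
  (expSumFactor_anti_right (by norm_num) (by norm_num) hT).trans (by norm_num [expSumFactor])

lemma hasAdmissibleAngle_of_max {lam ε uMax : ℝ} (hT : 100 ≤ T) (hl : 0 ≤ l)
    (hu : l ^ 2 = u * T) (hu_le : u ≤ uMax) (huMax : uMax ≤ 2.6666) (hlam0 : 0 ≤ lam)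
    (hlam : l ≤ lam * T) (hε0 : 0 ≤ ε)
    (hε : 1 / 0.84478 ≤ ε * (2.5 * Real.exp (0.48 * u * T * 0.2823 ^ 2)))
    (hQ : 2.7274 * 1.9592 * ((1 + ε) * (lam * (1 + 0.32984) + 0.01184) +
      uMax * (0.32984 + 0.32984 ^ 2)) / 2 ≤ 4.328) :
    HasAdmissibleAngle T l := by
  have T_pos : 0 < T := by linarith
  have u_nonneg : 0 ≤ u := nonneg_of_mul_nonneg_left (hu ▸ sq_nonneg l) T_pos
  have uMax_nonneg : 0 ≤ uMax := u_nonneg.trans hu_le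
  have inv_le : 1 / (0.84478 * T) ≤ 0.01184 := by
    rw [div_le_iff₀ (by positivity)]
    linarith
  have exp_le : Real.exp (T * (u * 0.091872 / 2 - 0.2823)) ≤ Real.exp (-0.1598 * T) := by
    rw [Real.exp_le_exp, mul_comm]
    gcongr
    linarith
  refine ⟨0.2823, by norm_num, le_rfl, ?_⟩
  calc rotationBound 0.2823 T l
      ≤ 2.7274 * expSumFactor 0.2823 T * ((1 + ε) * (lam * (1 + 0.32984) + 1 / (0.84478 * T)) +
          u * (0.32984 + 0.32984 ^ 2)) / 2 * Real.exp (T * (u * 0.091872 / 2 - 0.2823)) :=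
        rotationBound_le angleBounds_max T_pos hl hu hlam hε0 hε
    _ ≤ 2.7274 * 1.9592 * ((1 + ε) * (lam * (1 + 0.32984) + 0.01184) +
          uMax * (0.32984 + 0.32984 ^ 2)) / 2 * Real.exp (-0.1598 * T) := by
        gcongr
        exact expSumFactor_max_le hT
    _ ≤ 4.328 * Real.exp (-0.1598 * T) := by gcongr
    _ ≤ resonantBound T l := le_add_of_nonneg_right (by positivity)

lemma hasAdmissibleAngle_of_le (hT : 100 ≤ T) (hl : 0 ≤ l) (hu : l ^ 2 = u * T)
    (hlam : l ≤ 0.15916 * T) (hu_le : u ≤ 2.6666) : HasAdmissibleAngle T l := by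
  have T_pos : 0 < T := by linarith
  rcases le_total u 1.3333 with h | h
  · have one_le : 1 ≤ Real.exp (0.48 * u * T * 0.2823 ^ 2) := by
      rw [mul_assoc 0.48, ← hu]
      exact Real.one_le_exp (by positivity)
    exact hasAdmissibleAngle_of_max (lam := 0.1155) (ε := 0.475) hT hl hu h (by norm_num)
      (by norm_num) (le_mul_of_sq_eq T_pos hu h hT (by norm_num) (by norm_num)) (by norm_num)
      (by linarith) (by norm_num)
  · have five_le : 5 ≤ 0.48 * u * T * 0.2823 ^ 2 := by
      have : 1.3333 * 100 ≤ u * T := by gcongr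
      norm_num at this ⊢
      linarith
    have exp_ge := (cubic_le_exp (x := 5) (by norm_num)).trans (Real.exp_le_exp.2 five_le)
    exact hasAdmissibleAngle_of_max (ε := 0.02) hT hl hu hu_le le_rfl (by norm_num) hlam
      (by norm_num) (by linarith) (by norm_num)

end ResonantBound

/-- Numerical data for one rectangle `uMin ≤ u ≤ uMax`, `TMin ≤ T ≤ TMax` of the transition range
of `u = l ^ 2 / T`: the angle `θ` with the bounds `c`, `a`, `K` of `AngleBounds`, an upper bound
`lam` for `l / T`, a lower bound `β` for the exponent gained by the second term of `resonantBound`,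
and lower bounds `D` for `l / (2 * π)` and `e₁` for the relative size of the first term. A rectangle
unbounded in `T` is encoded by `e₁ = 0`, and then `TMax` is irrelevant. -/
structure Cell where
  (uMin uMax TMin TMax θ c a K lam β D e₁ : ℝ)

namespace Cell

/-- The exact upper bound for `sin² θ / cos 2θ` that follows from `C.c ≤ cos 2θ`. -/
noncomputable def S (C : Cell) : ℝ := (1 - C.c) / (2 * C.c)

/-- The largest exponential rate at which the first term of `resonantBound` loses against the
rotated integral. -/
noncomputable def rate (C : Cell) : ℝ := 0.1598 - C.θ + C.uMax * C.S / 2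

/-- The numerical inequalities under which `C.θ` is admissible throughout the cell. -/
structure IsCertified (C : Cell) : Prop where
  uMin_pos : 0 < C.uMin
  TMin_pos : 0 < C.TMin
  θ_pos : 0 < C.θ
  θ_le : C.θ ≤ 0.2823
  le_c : 0.8 ≤ C.c
  c_le : C.c ≤ 1 - (2 * C.θ) ^ 2 / 2 + (2 * C.θ) ^ 4 / 24 - (2 * C.θ) ^ 6 / 720 -
    (2 * C.θ) ^ 8 * (9 / 322560)
  a_nonneg : 0 ≤ C.a
  sq_a : (1 - C.c) / 2 ≤ (C.a * C.c) ^ 2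
  K_nonneg : 0 ≤ C.K
  sq_K : 6.2832 ≤ C.K ^ 2 * C.c
  lam_nonneg : 0 ≤ C.lam
  sq_lam : C.uMax ≤ C.lam ^ 2 * C.TMin
  exponent : 8 ≤ 0.48 * C.uMin * C.TMin * C.θ ^ 2
  β_nonneg : 0 ≤ C.β
  β_uMin : 0 ≤ (C.θ - C.β) * C.uMin - C.S / 2 * C.uMin ^ 2 - 0.426
  β_uMax : 0 ≤ (C.θ - C.β) * C.uMax - C.S / 2 * C.uMax ^ 2 - 0.426
  sq_D : (6.2832 * C.D) ^ 2 ≤ C.uMin * C.TMin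
  rate_nonneg : 0 ≤ C.rate
  rate_le : C.rate * C.TMax ≤ 64
  e₁_le : C.e₁ ≤ (1 - C.rate * C.TMax / 64) ^ 64
  total_le : C.K * expSumFactor C.θ C.TMin * ((1 + 0.001) * (C.lam * (1 + C.a) +
      1 / (C.c * C.TMin)) + C.uMax * (C.a + C.a ^ 2)) / 2 ≤
    4.328 * C.e₁ + 0.802 * C.D *
      (1 + C.β * C.TMin + (C.β * C.TMin) ^ 2 / 2 + (C.β * C.TMin) ^ 3 / 6)

end Cell

lemma concave_quadratic_nonneg {A B D x y u : ℝ} (hB : 0 ≤ B) (hx : 0 ≤ A * x - B * x ^ 2 - D)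
    (hy : 0 ≤ A * y - B * y ^ 2 - D) (hxu : x ≤ u) (huy : u ≤ y) :
    0 ≤ A * u - B * u ^ 2 - D := by
  rcases hxu.eq_or_lt with rfl | hlt
  · exact hx
  have weighted : (y - x) * (A * u - B * u ^ 2 - D) =
      (y - u) * (A * x - B * x ^ 2 - D) + (u - x) * (A * y - B * y ^ 2 - D) +
        B * ((u - x) * (y - u) * (y - x)) := by ring
  have ux_nonneg := sub_nonneg.2 hxu
  have yu_nonneg := sub_nonneg.2 huy
  have yx_pos : 0 < y - x := sub_pos.2 (hlt.trans_le huy)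
  refine nonneg_of_mul_nonneg_right (weighted ▸ ?_) yx_pos
  exact add_nonneg (add_nonneg (mul_nonneg yu_nonneg hx) (mul_nonneg ux_nonneg hy))
    (mul_nonneg hB (mul_nonneg (mul_nonneg ux_nonneg yu_nonneg) yx_pos.le))

namespace Cell.IsCertified

variable {C : Cell} {T l u : ℝ}

lemma c_pos (hC : C.IsCertified) : 0 < C.c := by linarith [hC.le_c]

lemma angleBounds (hC : C.IsCertified) : AngleBounds C.θ C.c C.a C.S C.K :=
  angleBounds_of_taylor hC.θ_pos hC.θ_le hC.c_pos hC.c_le hC.a_nonneg hC.sq_a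
    (by rw [Cell.S]; have := hC.c_pos; field_simp; rfl) hC.K_nonneg hC.sq_K

lemma S_nonneg (hC : C.IsCertified) : 0 ≤ C.S :=
  (div_nonneg (sq_nonneg _) (hC.c_pos.le.trans hC.angleBounds.le_cos)).trans
    hC.angleBounds.sin_sq_div_cos_le

lemma uMin_mul_TMin_le (hC : C.IsCertified) (hu : C.uMin ≤ u) (hT : C.TMin ≤ T) :
    C.uMin * C.TMin ≤ u * T :=
  mul_le_mul hu hT hC.TMin_pos.le (hC.uMin_pos.le.trans hu)

lemma inv_c_le (hC : C.IsCertified) (hu : C.uMin ≤ u) (hT : C.TMin ≤ T) :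
    1 / C.c ≤ 0.001 * (2.5 * Real.exp (0.48 * u * T * C.θ ^ 2)) := by
  have eight_le : 8 ≤ 0.48 * u * T * C.θ ^ 2 := by
    have := mul_le_mul_of_nonneg_right (hC.uMin_mul_TMin_le hu hT) (sq_nonneg C.θ)
    linarith [hC.exponent]
  have inv_le : 1 / C.c ≤ 1.25 := by
    rw [div_le_iff₀ hC.c_pos]
    linarith [hC.le_c]
  linarith [exp_ge_of_eight_le eight_le]

lemma e₁_le_exp (hC : C.IsCertified) (hu : u ≤ C.uMax) (hT0 : 0 ≤ T) (hT : T ≤ C.TMax) :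
    C.e₁ ≤ Real.exp (-(T * (0.1598 - C.θ + u * C.S / 2))) := by
  refine hC.e₁_le.trans ((Real.one_sub_div_pow_le_exp_neg (by exact_mod_cast hC.rate_le)).trans ?_)
  rw [Real.exp_le_exp, neg_le_neg_iff]
  calc T * (0.1598 - C.θ + u * C.S / 2) ≤ T * C.rate := by
        unfold Cell.rate
        gcongr
        exact hC.S_nonneg
    _ ≤ C.rate * C.TMax := by
        rw [mul_comm]
        exact mul_le_mul_of_nonneg_left hT hC.rate_nonneg

lemma cubic_le_exp_gain (hC : C.IsCertified) (hu_ge : C.uMin ≤ u) (hu_le : u ≤ C.uMax)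
    (hT : C.TMin ≤ T) :
    1 + C.β * C.TMin + (C.β * C.TMin) ^ 2 / 2 + (C.β * C.TMin) ^ 3 / 6 ≤
      Real.exp (T * (C.θ - u * C.S / 2 - 0.426 / u)) := by
  have u_pos := hC.uMin_pos.trans_le hu_ge
  have T_nonneg := hC.TMin_pos.le.trans hT
  have gain_eq : C.θ - u * C.S / 2 - 0.426 / u - C.β =
      ((C.θ - C.β) * u - C.S / 2 * u ^ 2 - 0.426) / u := by
    field_simp
    ring
  have gain_ge : C.β ≤ C.θ - u * C.S / 2 - 0.426 / u := by
    rw [← sub_nonneg, gain_eq]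
    exact div_nonneg (concave_quadratic_nonneg (div_nonneg hC.S_nonneg zero_le_two) hC.β_uMin
      hC.β_uMax hu_ge hu_le) u_pos.le
  refine (cubic_le_exp (mul_nonneg hC.β_nonneg hC.TMin_pos.le)).trans (Real.exp_le_exp.2 ?_)
  calc C.β * C.TMin ≤ C.β * T := mul_le_mul_of_nonneg_left hT hC.β_nonneg
    _ ≤ T * (C.θ - u * C.S / 2 - 0.426 / u) := by
        rw [mul_comm]
        gcongr

lemma hasAdmissibleAngle (hC : C.IsCertified) (hl : 0 < l) (hu : l ^ 2 = u * T)
    (hu_ge : C.uMin ≤ u) (hu_le : u ≤ C.uMax) (hT_ge : C.TMin ≤ T)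
    (hT_le : T ≤ C.TMax ∨ C.e₁ ≤ 0) : HasAdmissibleAngle T l := by
  have T_pos := hC.TMin_pos.trans_le hT_ge
  have rotationBound_le := rotationBound_le hC.angleBounds T_pos hl.le hu
    (le_mul_of_sq_eq T_pos hu hu_le hT_ge hC.lam_nonneg hC.sq_lam) (by norm_num)
    (hC.inv_c_le hu_ge hT_ge)
  have e₁_le : C.e₁ ≤ Real.exp (-(T * (0.1598 - C.θ + u * C.S / 2))) :=
    hT_le.elim (hC.e₁_le_exp hu_le T_pos.le) fun h ↦ h.trans (Real.exp_pos _).le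
  refine ⟨C.θ, hC.θ_pos, hC.θ_le, le_resonantBound T_pos hl hu rotationBound_le e₁_le
    (hC.cubic_le_exp_gain hu_ge hu_le hT_ge) ?_
    (hC.sq_D.trans (hC.uMin_mul_TMin_le hu_ge hT_ge)) (le_trans ?_ hC.total_le)⟩
  · have := mul_nonneg hC.β_nonneg hC.TMin_pos.le
    positivity
  · have := hC.K_nonneg
    have := hC.a_nonneg
    have := hC.lam_nonneg
    have := hC.c_pos
    have := hC.TMin_pos
    have := hC.uMin_pos.trans_le hu_ge
    have := expSumFactor_pos hC.θ_pos hC.TMin_pos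
    have := expSumFactor_anti_right hC.θ_pos hC.TMin_pos hT_ge
    gcongr

end Cell.IsCertified

section TransitionRange

variable {T l u : ℝ}

lemma hasAdmissibleAngle_of_T_le (hl : 0 < l) (hu : l ^ 2 = u * T)
    (hTu : 39.478 * u ≤ T) (hT_le : T ≤ 160)
    (hu_ge : 2.6666 ≤ u) (hu_le : u ≤ 3.077) : HasAdmissibleAngle T l := by
  rcases le_total u 2.798 with hu_le' | hu_ge
  · refine Cell.IsCertified.hasAdmissibleAngle (C :=
      { uMin := 2.6666, uMax := 2.798, TMin := 105.27, TMax := 160, θ := 0.278, c := 0.84937,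
        a := 0.32311, K := 2.7199, lam := 0.16304, β := 0.00002, D := 2.6665, e₁ := 0.3893 })
      ?_ hl hu hu_ge hu_le' (by linarith) (.inl hT_le)
    constructor <;> norm_num [Cell.S, Cell.rate, expSumFactor]
  rcases le_total u 2.867 with hu_le' | hu_ge
  · refine Cell.IsCertified.hasAdmissibleAngle (C :=
      { uMin := 2.798, uMax := 2.867, TMin := 110.45, TMax := 160, θ := 0.266, c := 0.86179,
        a := 0.30504, K := 2.7002, lam := 0.16112, β := 0.001565, D := 2.7978, e₁ := 0.2428 })
      ?_ hl hu hu_ge hu_le' (by linarith) (.inl hT_le)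
    constructor <;> norm_num [Cell.S, Cell.rate, expSumFactor]
  rcases le_total u 2.923 with hu_le' | hu_ge
  · refine Cell.IsCertified.hasAdmissibleAngle (C :=
      { uMin := 2.867, uMax := 2.923, TMin := 113.18, TMax := 160, θ := 0.263, c := 0.86482,
        a := 0.30062, K := 2.6955, lam := 0.16071, β := 0.002377, D := 2.8669, e₁ := 0.1672 })
      ?_ hl hu hu_ge hu_le' (by linarith) (.inl hT_le)
    constructor <;> norm_num [Cell.S, Cell.rate, expSumFactor]
  rcases le_total u 2.991 with hu_le' | hu_ge
  · refine Cell.IsCertified.hasAdmissibleAngle (C :=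
      { uMin := 2.923, uMax := 2.991, TMin := 115.39, TMax := 160, θ := 0.259, c := 0.86881,
        a := 0.29479, K := 2.6893, lam := 0.161, β := 0.002916, D := 2.9229, e₁ := 0.1073 })
      ?_ hl hu hu_ge hu_le' (by linarith) (.inl hT_le)
    constructor <;> norm_num [Cell.S, Cell.rate, expSumFactor]
  refine Cell.IsCertified.hasAdmissibleAngle (C :=
    { uMin := 2.991, uMax := 3.077, TMin := 118.07, TMax := 160, θ := 0.257, c := 0.87078,
      a := 0.29191, K := 2.6862, lam := 0.16144, β := 0.003609, D := 2.9908, e₁ := 0.0625 })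
    ?_ hl hu hu_ge hu_le (by linarith) (.inl hT_le)
  constructor <;> norm_num [Cell.S, Cell.rate, expSumFactor]

lemma hasAdmissibleAngle_of_T_mem (hl : 0 < l) (hu : l ^ 2 = u * T)
    (hT_ge : 160 ≤ T) (hT_le : T ≤ 340)
    (hu_ge : 2.6666 ≤ u) (hu_le : u ≤ 3.077) : HasAdmissibleAngle T l := by
  rcases le_total u 2.761 with hu_le' | hu_ge
  · refine Cell.IsCertified.hasAdmissibleAngle (C :=
      { uMin := 2.6666, uMax := 2.761, TMin := 160, TMax := 340, θ := 0.278, c := 0.84937,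
        a := 0.32311, K := 2.7199, lam := 0.13137, β := 0.00002, D := 3.2874, e₁ := 0.235 })
      ?_ hl hu hu_ge hu_le' hT_ge (.inl hT_le)
    constructor <;> norm_num [Cell.S, Cell.rate, expSumFactor]
  rcases le_total u 2.828 with hu_le' | hu_ge
  · refine Cell.IsCertified.hasAdmissibleAngle (C :=
      { uMin := 2.761, uMax := 2.828, TMin := 160, TMax := 340, θ := 0.272, c := 0.85564,
        a := 0.314, K := 2.7099, lam := 0.13295, β := 0.001251, D := 3.3451, e₁ := 0.0859 })
      ?_ hl hu hu_ge hu_le' hT_ge (.inl hT_le)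
    constructor <;> norm_num [Cell.S, Cell.rate, expSumFactor]
  rcases le_total u 2.998 with hu_le' | hu_ge
  · refine Cell.IsCertified.hasAdmissibleAngle (C :=
      { uMin := 2.828, uMax := 2.998, TMin := 160, TMax := 340, θ := 0.268, c := 0.85975,
        a := 0.30801, K := 2.7034, lam := 0.13689, β := 0.002031, D := 3.3854, e₁ := 0.0069 })
      ?_ hl hu hu_ge hu_le' hT_ge (.inl hT_le)
    constructor <;> norm_num [Cell.S, Cell.rate, expSumFactor]
  refine Cell.IsCertified.hasAdmissibleAngle (C :=
    { uMin := 2.998, uMax := 3.077, TMin := 160, TMax := 340, θ := 0.259, c := 0.86881,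
      a := 0.29479, K := 2.6893, lam := 0.13868, β := 0.003731, D := 3.4857, e₁ := 0.0023 })
    ?_ hl hu hu_ge hu_le hT_ge (.inl hT_le)
  constructor <;> norm_num [Cell.S, Cell.rate, expSumFactor]

lemma hasAdmissibleAngle_of_T_ge (hl : 0 < l) (hu : l ^ 2 = u * T) (hT_ge : 340 ≤ T)
    (hu_ge : 2.6666 ≤ u) (hu_le : u ≤ 3.077) : HasAdmissibleAngle T l := by
  refine Cell.IsCertified.hasAdmissibleAngle (C :=
    { uMin := 2.6666, uMax := 3.077, TMin := 340, TMax := 0, θ := 0.281, c := 0.84619,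
      a := 0.32773, K := 2.725, lam := 0.09514, β := 0.00007, D := 4.7922, e₁ := 0 })
    ?_ hl hu hu_ge hu_le hT_ge (.inr le_rfl)
  constructor <;> norm_num [Cell.S, Cell.rate, expSumFactor]

lemma hasAdmissibleAngle_of_mem_transition (hl : 0 < l) (hu : l ^ 2 = u * T)
    (hTu : 39.478 * u ≤ T) (hu_ge : 2.6666 ≤ u) (hu_le : u ≤ 3.077) : HasAdmissibleAngle T l := by
  rcases le_total T 160 with h | h
  · exact hasAdmissibleAngle_of_T_le hl hu hTu h hu_ge hu_le
  rcases le_total T 340 with h' | h'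
  · exact hasAdmissibleAngle_of_T_mem hl hu h h' hu_ge hu_le
  · exact hasAdmissibleAngle_of_T_ge hl hu h' hu_ge hu_le

end TransitionRange

section LargeParameter

lemma one_sub_quadratic_le_sq {x : ℝ} (h0 : 0 ≤ x) (h1 : x ≤ 0.06761) :
    (1 - (1 - 2 * x + 0.66 * x ^ 2)) / 2 ≤ 1.145 ^ 2 * ((1 - 2 * x + 0.66 * x ^ 2) ^ 2 * x) := by
  have tangent_le : 0.9969 - 1.911 * x ≤ 1 - 2 * x + 0.66 * x ^ 2 := by
    nlinarith [sq_nonneg (x - 0.0676)]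
  have sq_tangent_ge : 1 - 0.33 * x ≤ 1.145 ^ 2 * (0.9969 - 1.911 * x) ^ 2 := by
    nlinarith [sq_nonneg (x - 0.06761)]
  calc (1 - (1 - 2 * x + 0.66 * x ^ 2)) / 2 = (1 - 0.33 * x) * x := by ring
    _ ≤ 1.145 ^ 2 * (0.9969 - 1.911 * x) ^ 2 * x := by gcongr
    _ ≤ 1.145 ^ 2 * (1 - 2 * x + 0.66 * x ^ 2) ^ 2 * x := by gcongr; linarith
    _ = _ := by ring

lemma one_sub_quadratic_le_mul {x : ℝ} (h0 : 0 ≤ x) (h1 : x ≤ 0.06761) :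
    (1 - (1 - 2 * x + 0.66 * x ^ 2)) / 2 ≤ 1.128 * x * (1 - 2 * x + 0.66 * x ^ 2) := by
  have factor_le : 1 - 0.33 * x ≤ 1.128 * (1 - 2 * x + 0.66 * x ^ 2) := by nlinarith
  calc (1 - (1 - 2 * x + 0.66 * x ^ 2)) / 2 = x * (1 - 0.33 * x) := by ring
    _ ≤ x * (1.128 * (1 - 2 * x + 0.66 * x ^ 2)) := by gcongr
    _ = _ := by ring

lemma le_one_sub_quadratic {x : ℝ} (h1 : x ≤ 0.06761) :
    0.8677 ≤ 1 - 2 * x + 0.66 * x ^ 2 := by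
  nlinarith [sq_nonneg (x - 0.06761)]

lemma angleBounds_of_le {θ : ℝ} (h0 : 0 < θ) (h1 : θ ≤ 0.26001) :
    AngleBounds θ (1 - 2 * θ ^ 2 + 0.66 * (θ ^ 2) ^ 2) (1.145 * θ) (1.128 * θ ^ 2) 2.691 := by
  obtain ⟨x, hx⟩ : ∃ x, x = θ ^ 2 := ⟨_, rfl⟩
  have x_nonneg : 0 ≤ x := hx ▸ sq_nonneg θ
  have x_le : x ≤ 0.06761 := by nlinarith
  have taylor_eq : 1 - (2 * θ) ^ 2 / 2 + (2 * θ) ^ 4 / 24 - (2 * θ) ^ 6 / 720 -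
      (2 * θ) ^ 8 * (9 / 322560) =
        1 - 2 * x + 0.66 * x ^ 2 + x ^ 2 * (1 / 150 - 4 / 45 * x - x ^ 2 / 140) := by
    rw [hx]
    ring
  rw [← hx]
  have c_ge := le_one_sub_quadratic x_le
  refine angleBounds_of_taylor h0 (by linarith) (by linarith) ?_ (by positivity) ?_
    (one_sub_quadratic_le_mul x_nonneg x_le) (by norm_num) (by linarith)
  · rw [taylor_eq]
    exact le_add_of_nonneg_right (mul_nonneg (sq_nonneg x) (by nlinarith))
  · refine (one_sub_quadratic_le_sq x_nonneg x_le).trans_eq ?_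
    rw [hx]
    ring

variable {T l u θ : ℝ}

lemma expSumFactor_le_of_mul_eq (h0 : 0 < θ) (h1 : θ ≤ 0.26001) (huθ : u * θ = 0.8)
    (hTθ : 31.58 ≤ T * θ) : expSumFactor θ T ≤ 0.6636 * u := by
  have last_le : 0.0807 / (T * θ) ≤ 0.00256 := by
    rw [div_le_iff₀ (by linarith)]
    linarith
  have factor_eq : expSumFactor θ T =
      (0.3109 + 0.6995 * θ + 0.5246 * θ ^ 2 + 0.0807 / (T * θ)) / θ := by
    unfold expSumFactor
    field_simp
  rw [factor_eq, div_le_iff₀ h0, mul_assoc, huθ]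
  nlinarith

lemma momentFactor_le_of_mul_eq (h0 : 0 < θ) (h1 : θ ≤ 0.26001) (huθ : u * θ = 0.8)
    (hT : 121 ≤ T) :
    (1 + 0.001) * (0.15916 * (1 + 1.145 * θ) + 1 / ((1 - 2 * θ ^ 2 + 0.66 * (θ ^ 2) ^ 2) * T)) +
      u * (1.145 * θ + (1.145 * θ) ^ 2) ≤ 1.406 := by
  have c_ge := le_one_sub_quadratic (x := θ ^ 2) (by nlinarith)
  have inv_le : 1 / ((1 - 2 * θ ^ 2 + 0.66 * (θ ^ 2) ^ 2) * T) ≤ 0.00953 := by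
    rw [div_le_iff₀ (mul_pos (by linarith) (by linarith))]
    have : 0.8677 * 121 ≤ (1 - 2 * θ ^ 2 + 0.66 * (θ ^ 2) ^ 2) * T := by gcongr
    linarith
  have second_eq : u * (1.145 * θ + (1.145 * θ) ^ 2) = u * θ * (1.145 + 1.145 ^ 2 * θ) := by ring
  rw [second_eq, huθ]
  linarith

lemma rotationBound_le_of_mul_eq (hl : 0 ≤ l) (hu : l ^ 2 = u * T) (hlam : l ≤ 0.15916 * T)
    (hT : 121 ≤ T) (h0 : 0 < θ) (h1 : θ ≤ 0.26001) (huθ : u * θ = 0.8) (hTθ : 31.58 ≤ T * θ) :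
    rotationBound θ T l ≤
      2.691 * (0.6636 * u) * 1.406 / 2 * Real.exp (T * (u * (1.128 * θ ^ 2) / 2 - θ)) := by
  have c_ge := le_one_sub_quadratic (x := θ ^ 2) (by nlinarith)
  have inv_c_le : 1 / (1 - 2 * θ ^ 2 + 0.66 * (θ ^ 2) ^ 2) ≤
      0.001 * (2.5 * Real.exp (0.48 * u * T * θ ^ 2)) := by
    have exponent_eq : 0.48 * u * T * θ ^ 2 = 0.48 * (u * θ) * (T * θ) := by ring
    have exp_ge : 2800 ≤ Real.exp (0.48 * u * T * θ ^ 2) :=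
      exp_ge_of_eight_le (by rw [exponent_eq, huθ]; linarith)
    have inv_le : 1 / (1 - 2 * θ ^ 2 + 0.66 * (θ ^ 2) ^ 2) ≤ 1.25 := by
      rw [div_le_iff₀ (by linarith)]
      linarith
    linarith
  refine (rotationBound_le (angleBounds_of_le h0 h1) (by linarith) hl hu hlam (by norm_num)
    inv_c_le).trans ?_
  have u_pos : 0 < u := pos_of_mul_pos_left (huθ ▸ by norm_num) h0.le
  gcongr
  · exact expSumFactor_le_of_mul_eq h0 h1 huθ hTθ
  · exact momentFactor_le_of_mul_eq h0 h1 huθ hT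

/- For large `u` the angle `0.8 / u` nearly minimises the exponent `u * θ ^ 2 / 2 - θ` while the
moment factor stays bounded. -/
lemma hasAdmissibleAngle_of_ge (hl : 0 < l) (hu : l ^ 2 = u * T) (hTu : 39.478 * u ≤ T)
    (hlam : l ≤ 0.15916 * T) (hu_ge : 3.0769 ≤ u) : HasAdmissibleAngle T l := by
  have u_pos : 0 < u := by linarith
  obtain ⟨θ, hθ⟩ : ∃ θ, θ = 0.8 / u := ⟨_, rfl⟩
  have θ_pos : 0 < θ := hθ ▸ by positivity
  have u_mul_θ : u * θ = 0.8 := by rw [hθ]; field_simp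
  have θ_le : θ ≤ 0.26001 := by
    rw [hθ, div_le_iff₀ u_pos]
    linarith
  have T_mul_θ : 31.58 ≤ T * θ := by
    have := mul_le_mul_of_nonneg_right hTu θ_pos.le
    linarith
  have gain_eq : T * (θ - u * (1.128 * θ ^ 2) / 2 - 0.426 / u) =
      T * θ * (1 - 0.564 * (u * θ) - 0.5325) := by
    have : 0.426 / u = 0.5325 * θ := by rw [hθ]; ring
    rw [this]
    ring
  have gain_ge : 1.668 ≤ Real.exp (T * (θ - u * (1.128 * θ ^ 2) / 2 - 0.426 / u)) := by
    refine le_trans (by norm_num) ((cubic_le_exp (x := 0.514) (by norm_num)).trans ?_)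
    rw [Real.exp_le_exp, gain_eq, u_mul_θ]
    linarith
  refine ⟨θ, θ_pos, by linarith, le_resonantBound (by linarith) hl hu
    (rotationBound_le_of_mul_eq hl.le hu hlam (by linarith) θ_pos θ_le u_mul_θ T_mul_θ)
    (e₁ := 0) (D := 0.9999 * u) (Real.exp_pos _).le gain_ge (by norm_num) ?_ (by linarith)⟩
  calc (6.2832 * (0.9999 * u)) ^ 2 = u * (6.2832 ^ 2 * 0.9999 ^ 2 * u) := by ring
    _ ≤ u * T := by gcongr; linarith

end LargeParameter

lemma exists_admissible_angle {T l : ℝ} (hT : 100 ≤ T) (hl : 0 ≤ l) (h : 2 * π * l ≤ T) :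
    HasAdmissibleAngle T l := by
  have T_pos : 0 < T := by linarith
  obtain ⟨u, hu⟩ : ∃ u, l ^ 2 = u * T := ⟨l ^ 2 / T, by field_simp⟩
  have mul_l_le : 2 * 3.141592 * l ≤ T := le_trans (by gcongr; exact Real.pi_gt_d6.le) h
  have l_le : l ≤ 0.15916 * T := by linarith
  have T_ge : 39.478 * u ≤ T := by
    refine le_of_mul_le_mul_right (a := T) ?_ T_pos
    calc 39.478 * u * T = 39.478 * l ^ 2 := by rw [hu]; ring
      _ ≤ (2 * 3.141592 * l) ^ 2 := by
          rw [mul_pow]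
          gcongr
          norm_num
      _ ≤ T * T := by
          rw [← sq]
          gcongr
  rcases le_total u 2.6666 with hu_le | hu_ge
  · exact hasAdmissibleAngle_of_le hT hl hu l_le hu_le
  have l_pos : 0 < l := by
    refine hl.lt_of_ne' fun l_eq ↦ ?_
    have : 0 < u * T := by positivity
    rw [← hu, l_eq] at this
    norm_num at this
  rcases le_total u 3.077 with hu_le | hu_ge'
  · exact hasAdmissibleAngle_of_mem_transition l_pos hu T_ge hu_ge hu_le
  · exact hasAdmissibleAngle_of_ge l_pos hu T_ge l_le (by linarith)

/-! ### Summation over the zeros -/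

section HighZeroSums

lemma Fdelta_eq_rotatedMellin (δ : ℝ) (s : ℂ) : Fdelta δ s = rotatedMellin (2 * π * δ) s 1 := by
  refine setIntegral_congr_fun measurableSet_Ioi fun r _ ↦ ?_
  simp only [rotatedIntegrand, e2pi, smul_eq_mul, Complex.ofReal_exp]
  rw [← Complex.exp_add]
  congr 2
  push_cast
  ring

lemma norm_rotatedMellin_conj (l : ℝ) (s : ℂ) :
    ‖rotatedMellin l (conj s) 1‖ = ‖rotatedMellin (-l) s 1‖ := by
  rw [← Complex.norm_conj (rotatedMellin (-l) s 1), rotatedMellin, rotatedMellin, ← integral_conj]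
  congr 1
  refine setIntegral_congr_fun measurableSet_Ioi fun r (hr : 0 < r) ↦ ?_
  have arg_ne_pi : Complex.arg (r : ℂ) ≠ π := by
    rw [Complex.arg_ofReal_of_nonneg hr.le]
    exact Real.pi_pos.ne
  have conj_cpow : (r : ℂ) ^ (conj s - 1) = conj ((r : ℂ) ^ (s - 1)) := by
    simpa using (Complex.cpow_conj (r : ℂ) (s - 1) arg_ne_pi)
  simp only [rotatedIntegrand, map_mul, ← Complex.exp_conj, conj_cpow]
  congr 2
  simp [Complex.conj_ofReal, Complex.conj_ofNat]

lemma sum_mul_interpolation_eq (Z : Finset ℂ) (hZ_symm : ∀ z ∈ Z, 1 - conj z ∈ Z) {f : ℂ → ℝ}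
    (hf : ∀ z ∈ Z, f (1 - conj z) = f z) (A B : ℝ) :
    ∑ z ∈ Z, f z * ((1 - z.re) * A + z.re * B) = (A + B) / 2 * ∑ z ∈ Z, f z := by
  have pair_sum : ∑ z ∈ Z, f z * ((1 - z.re) * A + z.re * B) +
      ∑ z ∈ Z, f (1 - conj z) * ((1 - (1 - conj z).re) * A + (1 - conj z).re * B) =
        (A + B) * ∑ z ∈ Z, f z := by
    rw [← Finset.sum_add_distrib, Finset.mul_sum]
    refine Finset.sum_congr rfl fun z hz ↦ ?_
    rw [hf z hz, Complex.sub_re, Complex.one_re, Complex.conj_re]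
    ring
  rw [sum_reflection Z hZ_symm fun z ↦ f z * ((1 - z.re) * A + z.re * B)] at pair_sum
  linarith

lemma norm_rotatedMellin_le_of_lt_im {T θ φ l b : ℝ} {z : ℂ} (hT : 0 < T) (h0 : 0 < φ)
    (hθ : θ ≤ φ) (h1 : φ < π / 4) (hb : -l * Real.sin φ ≤ b) (hz0 : 0 < z.re) (hz1 : z.re < 1)
    (hz : T < z.im) :
    ‖rotatedMellin l z 1‖ ≤ Real.exp (-φ * T) / T * (Real.exp (-θ * (z.im - T)) *
      ((1 - z.re) * (gaussianMoment (Real.cos (2 * φ)) b 1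
          + |l| * gaussianMoment (Real.cos (2 * φ)) b 0)
        + z.re * (gaussianMoment (Real.cos (2 * φ)) b 2
          + |l| * gaussianMoment (Real.cos (2 * φ)) b 1))) := by
  have norm_le := im_mul_norm_rotatedMellin_le hz0 hz1 h0 h1 hb
  set M := (1 - z.re) * (gaussianMoment (Real.cos (2 * φ)) b 1
          + |l| * gaussianMoment (Real.cos (2 * φ)) b 0)
        + z.re * (gaussianMoment (Real.cos (2 * φ)) b 2
          + |l| * gaussianMoment (Real.cos (2 * φ)) b 1)
  have M_nonneg : 0 ≤ M :=
    nonneg_of_mul_nonneg_right (norm_le.trans' (mul_nonneg (hT.trans hz).le (norm_nonneg _)))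
      (Real.exp_pos _)
  have exp_le : Real.exp (-φ * z.im) ≤ Real.exp (-φ * T) * Real.exp (-θ * (z.im - T)) := by
    rw [← Real.exp_add, Real.exp_le_exp]
    nlinarith
  rw [div_mul_eq_mul_div, le_div_iff₀' hT]
  calc T * ‖rotatedMellin l z 1‖ ≤ z.im * ‖rotatedMellin l z 1‖ := by gcongr
    _ ≤ Real.exp (-φ * z.im) * M := norm_le
    _ ≤ Real.exp (-φ * T) * Real.exp (-θ * (z.im - T)) * M := by gcongr
    _ = Real.exp (-φ * T) * (Real.exp (-θ * (z.im - T)) * M) := mul_assoc _ _ _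

variable {q : ℕ} [NeZero q] {χ : DirichletCharacter ℂ q} {T l : ℝ}

lemma sum_norm_rotatedMellin_le_of_angle (hχ : χ.IsPrimitive) {θ φ b : ℝ} (hT : 100 ≤ T)
    (h0 : 0 < θ) (h1 : θ ≤ 0.2823) (hθ : θ ≤ φ) (h2 : φ < π / 4) (hb : -l * Real.sin φ ≤ b)
    (Z : Finset ℂ) (hZ : ∀ z ∈ Z, 0 < z.re ∧ z.re < 1 ∧ T < z.im)
    (hZ_symm : ∀ z ∈ Z, 1 - conj z ∈ Z) :
    ∑ z ∈ Z, analyticOrderNatAt χ.LFunction z * ‖rotatedMellin l z 1‖ ≤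
      Real.log (q * T / (2 * π)) * (Real.exp (-φ * T) * expSumFactor θ T *
        averagedMoment (Real.cos (2 * φ)) b |l| / T) := by
  have T_pos : 0 < T := by linarith
  have average_nonneg := averagedMoment_nonneg (Real.cos (2 * φ)) b (abs_nonneg l)
  set A := gaussianMoment (Real.cos (2 * φ)) b 1 + |l| * gaussianMoment (Real.cos (2 * φ)) b 0
    with hA
  set B := gaussianMoment (Real.cos (2 * φ)) b 2 + |l| * gaussianMoment (Real.cos (2 * φ)) b 1
    with hB
  have average_eq : (A + B) / 2 = averagedMoment (Real.cos (2 * φ)) b |l| := by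
    rw [hA, hB, averagedMoment]
    ring
  set f : ℂ → ℝ := fun z ↦ analyticOrderNatAt χ.LFunction z * Real.exp (-θ * (z.im - T))
  have f_symm : ∀ z ∈ Z, f (1 - conj z) = f z := fun z hz ↦ by
    simp [f, analyticOrderNatAt,
      analyticOrderAt_LFunction_one_sub_conj hχ (hZ z hz).1 (hZ z hz).2.1]
  calc ∑ z ∈ Z, analyticOrderNatAt χ.LFunction z * ‖rotatedMellin l z 1‖
      ≤ ∑ z ∈ Z, Real.exp (-φ * T) / T * (f z * ((1 - z.re) * A + z.re * B)) := by
        refine Finset.sum_le_sum fun z hz ↦ ?_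
        obtain ⟨re_pos, re_lt_one, lt_im⟩ := hZ z hz
        refine (mul_le_mul_of_nonneg_left (norm_rotatedMellin_le_of_lt_im T_pos (h0.trans_le hθ)
          hθ h2 hb re_pos re_lt_one lt_im) (Nat.cast_nonneg _)).trans_eq ?_
        ring
    _ = Real.exp (-φ * T) / T * (averagedMoment (Real.cos (2 * φ)) b |l| * ∑ z ∈ Z, f z) := by
        rw [← Finset.mul_sum, sum_mul_interpolation_eq Z hZ_symm f_symm, average_eq]
    _ ≤ Real.exp (-φ * T) / T * (averagedMoment (Real.cos (2 * φ)) b |l| *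
          (Real.log (q * T / (2 * π)) * expSumFactor θ T)) := by
        gcongr
        exact sum_exp_le hχ hT h0 h1 Z hZ hZ_symm
    _ = _ := by ring

lemma sum_norm_rotatedMellin_neg_le (hχ : χ.IsPrimitive) (hT : 100 ≤ T) (hl : 0 ≤ l)
    (hlT : 2 * π * l ≤ T) (Z : Finset ℂ) (hZ : ∀ z ∈ Z, 0 < z.re ∧ z.re < 1 ∧ T < z.im)
    (hZ_symm : ∀ z ∈ Z, 1 - conj z ∈ Z) :
    ∑ z ∈ Z, analyticOrderNatAt χ.LFunction z * ‖rotatedMellin (-l) z 1‖ ≤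
      Real.log (q * T / (2 * π)) * resonantBound T l := by
  obtain ⟨θ, h0, h1, bound⟩ := exists_admissible_angle hT hl hlT
  have log_nonneg : 0 ≤ Real.log (q * T / (2 * π)) :=
    le_trans (by norm_num) (log_conductor_mul_ge q hT)
  refine (sum_norm_rotatedMellin_le_of_angle hχ hT h0 h1 le_rfl
    (by linarith [Real.pi_gt_three]) (b := l * Real.sin θ) (by simp) Z hZ hZ_symm).trans ?_
  rw [abs_neg, abs_of_nonneg hl]
  exact mul_le_mul_of_nonneg_left bound log_nonneg

lemma averagedMoment_zero_le {c : ℝ} (hc : 0.54 ≤ c) (hl : 0 ≤ l) :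
    averagedMoment c 0 l ≤ 2.64 * l + 4.1 := by
  have c_pos : 0 < c := by linarith
  have zeroth : gaussianMoment c 0 0 ≤ 3.42 := by
    refine (gaussianMoment_zero_le c_pos 0).trans ?_
    rw [zero_pow two_ne_zero, zero_div, Real.exp_zero, mul_one, Real.sqrt_le_iff,
      div_le_iff₀ c_pos]
    exact ⟨by norm_num, by nlinarith [Real.pi_lt_d4]⟩
  have first_eq := mul_gaussianMoment_one c_pos 0
  have second_eq := mul_gaussianMoment_add_one c_pos 0 one_pos
  rw [one_add_one_eq_two, sub_self] at second_eq
  have first : gaussianMoment c 0 1 ≤ 1.852 := by nlinarith [gaussianMoment_nonneg c 0 1]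
  have second : gaussianMoment c 0 2 ≤ 6.34 := by nlinarith [gaussianMoment_nonneg c 0 2]
  have zeroth_mul : l * gaussianMoment c 0 0 ≤ l * 3.42 := by gcongr
  have first_mul : (1 + l) * gaussianMoment c 0 1 ≤ (1 + l) * 1.852 := by gcongr
  rw [averagedMoment]
  linarith

lemma exp_neg_half_mul_le (hT : 100 ≤ T) :
    Real.exp (-0.5 * T) ≤ Real.exp (-0.1598 * T) / 2800 := by
  have exp_eq : Real.exp (-0.1598 * T) = Real.exp (-0.5 * T) * Real.exp (0.3402 * T) := by
    rw [← Real.exp_add]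
    ring_nf
  rw [le_div_iff₀ (by norm_num), exp_eq]
  exact mul_le_mul_of_nonneg_left (exp_ge_of_eight_le (by linarith)) (Real.exp_pos _).le

/-- When the phase of `exp (i l t)` turns with that of `t ^ (i Im s)`, there is no stationary point:
the exponent decays under rotation and the larger angle `1/2` is available. -/
lemma sum_norm_rotatedMellin_le (hχ : χ.IsPrimitive) (hT : 100 ≤ T) (hl : 0 ≤ l)
    (hlT : 2 * π * l ≤ T) (Z : Finset ℂ) (hZ : ∀ z ∈ Z, 0 < z.re ∧ z.re < 1 ∧ T < z.im)
    (hZ_symm : ∀ z ∈ Z, 1 - conj z ∈ Z) :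
    ∑ z ∈ Z, analyticOrderNatAt χ.LFunction z * ‖rotatedMellin l z 1‖ ≤
      Real.log (q * T / (2 * π)) * (0.001 * Real.exp (-0.1598 * T)) := by
  have T_pos : 0 < T := by linarith
  have log_nonneg : 0 ≤ Real.log (q * T / (2 * π)) :=
    le_trans (by norm_num) (log_conductor_mul_ge q hT)
  have sin_nonneg : 0 ≤ Real.sin 0.5 :=
    Real.sin_nonneg_of_nonneg_of_le_pi (by norm_num) (by linarith [Real.pi_gt_three])
  refine (sum_norm_rotatedMellin_le_of_angle hχ hT (θ := 0.2823) (φ := 0.5) (by norm_num) le_rfl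
    (by norm_num) (by linarith [Real.pi_gt_three]) (b := 0)
    (by nlinarith [mul_nonneg hl sin_nonneg]) Z hZ hZ_symm).trans ?_
  refine mul_le_mul_of_nonneg_left ?_ log_nonneg
  rw [abs_of_nonneg hl]
  have cos_ge : 0.54 ≤ Real.cos (2 * 0.5) :=
    le_trans (by norm_num) (taylor_eight_le_cos (by norm_num) (by norm_num))
  have average_nonneg := averagedMoment_nonneg (Real.cos (2 * 0.5)) 0 hl
  have factor_pos := expSumFactor_pos (θ := 0.2823) (by norm_num) T_pos
  have average_le : averagedMoment (Real.cos (2 * 0.5)) 0 l ≤ 0.5 * T := by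
    have : 2 * 3 * l ≤ T := hlT.trans' (by gcongr; exact Real.pi_gt_three.le)
    linarith [averagedMoment_zero_le cos_ge hl]
  calc Real.exp (-0.5 * T) * expSumFactor 0.2823 T * averagedMoment (Real.cos (2 * 0.5)) 0 l / T
      ≤ Real.exp (-0.1598 * T) / 2800 * 1.9592 * (0.5 * T) / T := by
        gcongr
        · exact exp_neg_half_mul_le hT
        · exact expSumFactor_max_le hT
    _ = (1.9592 / 5600) * Real.exp (-0.1598 * T) := by
        field_simp
        ring
    _ ≤ 0.001 * Real.exp (-0.1598 * T) := by
        gcongr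
        norm_num

end HighZeroSums

section BothHalfPlanes

variable {q : ℕ} [NeZero q] {χ : DirichletCharacter ℂ q} {T : ℝ}

lemma sum_norm_rotatedMellin_eq_sum_conj (χ : DirichletCharacter ℂ q) (l : ℝ) (Z : Finset ℂ)
    (hZ : ∀ z ∈ Z, z ≠ 1) :
    ∑ z ∈ Z, analyticOrderNatAt χ.LFunction z * ‖rotatedMellin l z 1‖ =
      ∑ z ∈ Z.image conj, analyticOrderNatAt χ⁻¹.LFunction z * ‖rotatedMellin (-l) z 1‖ := by
  rw [Finset.sum_image (starRingEnd ℂ).injective.injOn]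
  refine Finset.sum_congr rfl fun z hz ↦ ?_
  rw [norm_rotatedMellin_conj, neg_neg, analyticOrderNatAt, analyticOrderNatAt,
    analyticOrderAt_LFunction_inv χ (conj_ne_one (hZ z hz)), Complex.conj_conj]

lemma sum_norm_rotatedMellin_le_of_lt_abs_im_of_nonneg (hχ : χ.IsPrimitive) {l : ℝ}
    (hT : 100 ≤ T) (hl : 0 ≤ l) (hlT : 2 * π * l ≤ T) (Z : Finset ℂ)
    (hZ : ∀ z ∈ Z, 0 < z.re ∧ z.re < 1 ∧ T < |z.im|) (hZ_symm : ∀ z ∈ Z, 1 - conj z ∈ Z) :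
    ∑ z ∈ Z, analyticOrderNatAt χ.LFunction z * ‖rotatedMellin l z 1‖ ≤
      Real.log (q * T / (2 * π)) * (0.001 * Real.exp (-0.1598 * T) + resonantBound T l) := by
  set upper := Z.filter (T < ·.im)
  set lower := Z.filter (¬T < ·.im)
  have upper_high : ∀ z ∈ upper, 0 < z.re ∧ z.re < 1 ∧ T < z.im := fun z hz ↦ by
    obtain ⟨mem, lt_im⟩ := Finset.mem_filter.mp hz
    exact ⟨(hZ z mem).1, (hZ z mem).2.1, lt_im⟩
  have upper_symm : ∀ z ∈ upper, 1 - conj z ∈ upper := fun z hz ↦ by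
    obtain ⟨mem, lt_im⟩ := Finset.mem_filter.mp hz
    exact Finset.mem_filter.mpr ⟨hZ_symm z mem, by simpa using lt_im⟩
  have lower_ne_one : ∀ z ∈ lower, z ≠ 1 := fun z hz h ↦ by
    simpa [h] using (hZ z (Finset.mem_filter.mp hz).1).2.1
  have lower_high : ∀ z ∈ lower.image conj, 0 < z.re ∧ z.re < 1 ∧ T < z.im := by
    refine Finset.forall_mem_image.mpr fun z hz ↦ ?_
    obtain ⟨mem, not_lt_im⟩ := Finset.mem_filter.mp hz
    obtain ⟨re_pos, re_lt_one, lt_abs_im⟩ := hZ z mem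
    exact ⟨by simpa, by simpa, by simpa using (lt_abs.mp lt_abs_im).resolve_left not_lt_im⟩
  have lower_symm : ∀ z ∈ lower.image conj, 1 - conj z ∈ lower.image conj := by
    refine Finset.forall_mem_image.mpr fun z hz ↦ ?_
    obtain ⟨mem, not_lt_im⟩ := Finset.mem_filter.mp hz
    exact Finset.mem_image.mpr ⟨1 - conj z,
      Finset.mem_filter.mpr ⟨hZ_symm z mem, by simpa using not_lt_im⟩, by simp⟩
  rw [← Finset.sum_filter_add_sum_filter_not Z (T < ·.im),
    sum_norm_rotatedMellin_eq_sum_conj χ l lower lower_ne_one, mul_add]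
  exact add_le_add (sum_norm_rotatedMellin_le hχ hT hl hlT upper upper_high upper_symm)
    (sum_norm_rotatedMellin_neg_le (isPrimitive_inv hχ) hT hl hlT _ lower_high lower_symm)

lemma sum_norm_rotatedMellin_le_of_lt_abs_im (hχ : χ.IsPrimitive) {l : ℝ} (hT : 100 ≤ T)
    (hlT : 2 * π * |l| ≤ T) (Z : Finset ℂ) (hZ : ∀ z ∈ Z, 0 < z.re ∧ z.re < 1 ∧ T < |z.im|)
    (hZ_symm : ∀ z ∈ Z, 1 - conj z ∈ Z) :
    ∑ z ∈ Z, analyticOrderNatAt χ.LFunction z * ‖rotatedMellin l z 1‖ ≤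
      Real.log (q * T / (2 * π)) * (0.001 * Real.exp (-0.1598 * T) + resonantBound T |l|) := by
  rcases le_total 0 l with hl | hl
  · rw [abs_of_nonneg hl] at hlT ⊢
    exact sum_norm_rotatedMellin_le_of_lt_abs_im_of_nonneg hχ hT hl hlT Z hZ hZ_symm
  · rw [abs_of_nonpos hl] at hlT ⊢
    rw [sum_norm_rotatedMellin_eq_sum_conj χ l Z fun z hz h ↦ by simpa [h] using (hZ z hz).2.1]
    refine sum_norm_rotatedMellin_le_of_lt_abs_im_of_nonneg (isPrimitive_inv hχ) hT
      (neg_nonneg.mpr hl) hlT _ (Finset.forall_mem_image.mpr fun z hz ↦ by simpa using hZ z hz)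
      (Finset.forall_mem_image.mpr fun z hz ↦ ?_)
    exact Finset.mem_image.mpr ⟨1 - conj z, hZ_symm z hz, by simp⟩

lemma sum_mul_norm_Fdelta_le (hχ : χ.IsPrimitive) {δ : ℝ} (hT : 100 ≤ T)
    (hδT : 4 * π ^ 2 * |δ| ≤ T) (Z : Finset ℂ)
    (hZ : ∀ z ∈ Z, 0 < z.re ∧ z.re < 1 ∧ T < |z.im|) :
    ∑ z ∈ Z, analyticOrderNatAt χ.LFunction z * ‖Fdelta δ z‖ ≤
      Real.log (q * T / (2 * π)) * (4.329 * Real.exp (-0.1598 * T)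
        + 0.802 * |δ| * Real.exp (-0.1065 * (T / (π * |δ|)) ^ 2)) := by
  have abs_eq : |2 * π * δ| = 2 * π * |δ| := by rw [abs_mul, abs_of_pos Real.two_pi_pos]
  set Z' := Z ∪ Z.image (1 - conj ·)
  have high : ∀ z ∈ Z', 0 < z.re ∧ z.re < 1 ∧ T < |z.im| := by
    refine Finset.forall_mem_union.mpr ⟨hZ, Finset.forall_mem_image.mpr fun z hz ↦ ?_⟩
    obtain ⟨re_pos, re_lt_one, lt_abs_im⟩ := hZ z hz
    exact ⟨by simpa, by simpa, by simpa⟩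
  have symm : ∀ z ∈ Z', 1 - conj z ∈ Z' := by
    refine Finset.forall_mem_union.mpr ⟨fun z hz ↦ Finset.mem_union_right _
      (Finset.mem_image_of_mem _ hz), Finset.forall_mem_image.mpr fun z hz ↦ ?_⟩
    exact Finset.mem_union_left _ (by simpa using hz)
  have bound_eq : 0.001 * Real.exp (-0.1598 * T) + resonantBound T |2 * π * δ| =
      4.329 * Real.exp (-0.1598 * T)
        + 0.802 * |δ| * Real.exp (-0.1065 * (T / (π * |δ|)) ^ 2) := by
    rw [resonantBound, abs_eq, mul_div_cancel_left₀ _ Real.two_pi_pos.ne', mul_assoc 2 π |δ|,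
      mul_div_mul_left _ _ two_ne_zero]
    ring
  simp only [Fdelta_eq_rotatedMellin]
  rw [← bound_eq]
  exact (Finset.sum_le_sum_of_subset_of_nonneg Finset.subset_union_left
    fun _ _ _ ↦ by positivity).trans (sum_norm_rotatedMellin_le_of_lt_abs_im hχ hT
      (by rw [abs_eq]; linarith) Z' high symm)

lemma one_le_analyticOrderNatAt_LFunction (χ : DirichletCharacter ℂ q) {s : ℂ} (hs : s.re < 1)
    (h : χ.LFunction s = 0) : 1 ≤ analyticOrderNatAt χ.LFunction s :=
  have ne_one : s ≠ 1 := fun h ↦ by simp [h] at hs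
  one_le_analyticOrderNatAt (analyticAt_LFunction χ ne_one) h
    (analyticOrderAt_LFunction_ne_top χ ne_one)

end BothHalfPlanes

end HighZeros

theorem sum_Fdelta_high_zeros_bound_general
    (δ : ℝ) (q : ℕ) [NeZero q] (χ : DirichletCharacter ℂ q) (hχ : χ.IsPrimitive)
    (T₀ : ℝ) (hT₀ : max (4 * Real.pi ^ 2 * |δ|) 100 ≤ T₀) :
    Summable (fun ρ : {ρ : ℂ // χ.LFunction ρ = 0 ∧ 0 < ρ.re ∧ ρ.re < 1 ∧ T₀ < |ρ.im|} ↦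
        analyticOrderNatAt χ.LFunction ρ * ‖Fdelta δ ρ‖) ∧
      (∑' ρ : {ρ : ℂ // χ.LFunction ρ = 0 ∧ 0 < ρ.re ∧ ρ.re < 1 ∧ T₀ < |ρ.im|},
        analyticOrderNatAt χ.LFunction ρ * ‖Fdelta δ ρ‖)
      ≤ Real.log (q * T₀ / (2 * Real.pi))
          * (4.329 * Real.exp (-0.1598 * T₀)
            + 0.802 * |δ| * Real.exp (-0.1065 * (T₀ / (Real.pi * |δ|)) ^ 2)) := by
  obtain ⟨hδT, hT⟩ := max_le_iff.mp hT₀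
  have term_nonneg (ρ : {ρ : ℂ // χ.LFunction ρ = 0 ∧ 0 < ρ.re ∧ ρ.re < 1 ∧ T₀ < |ρ.im|}) :
      0 ≤ analyticOrderNatAt χ.LFunction ρ * ‖Fdelta δ ρ‖ := by positivity
  have sum_le (S : Finset {ρ : ℂ // χ.LFunction ρ = 0 ∧ 0 < ρ.re ∧ ρ.re < 1 ∧ T₀ < |ρ.im|}) :
      ∑ ρ ∈ S, analyticOrderNatAt χ.LFunction ρ * ‖Fdelta δ ρ‖ ≤ _ :=
    (Finset.sum_map S (.subtype _) fun ρ ↦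
        analyticOrderNatAt χ.LFunction ρ * ‖Fdelta δ ρ‖).symm.trans_le <|
      HighZeros.sum_mul_norm_Fdelta_le hχ hT hδT _ <|
        Finset.forall_mem_map.mpr fun ρ _ ↦ ρ.2.2
  exact ⟨summable_of_sum_le term_nonneg sum_le, Real.tsum_le_of_sum_le term_nonneg sum_le⟩

/-- **Lemma 4.5**: bound on the sum of `|F_δ(ρ)|` over high nontrivial zeros,
for the Gaussian smoothing. -/
theorem sum_Fdelta_high_zeros_bound
    (δ : ℝ) (q : ℕ) [NeZero q] (χ : DirichletCharacter ℂ q) (hχ : χ.IsPrimitive)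
    (T₀ : ℝ) (hT₀ : max (4 * Real.pi^2 * |δ|) 100 ≤ T₀)
    (hGRH : ∀ ρ : ℂ, χ.LFunction ρ = 0 → 0 < ρ.re → ρ.re < 1 → |ρ.im| ≤ T₀ →
      ρ.re = 1/2) :
    (∑' ρ : {ρ : ℂ // χ.LFunction ρ = 0 ∧ 0 < ρ.re ∧ ρ.re < 1 ∧ T₀ < |ρ.im|},
        ‖Fdelta δ ρ‖)
      ≤ Real.log (q * T₀ / (2 * Real.pi))
          * (4.329 * Real.exp (-0.1598 * T₀)
            + 0.802 * |δ| * Real.exp (-0.1065 * (T₀ / (Real.pi * |δ|))^2)) := by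
  obtain ⟨summable, tsum_le⟩ := sum_Fdelta_high_zeros_bound_general δ q χ hχ T₀ hT₀
  have le_weighted (ρ : {ρ : ℂ // χ.LFunction ρ = 0 ∧ 0 < ρ.re ∧ ρ.re < 1 ∧ T₀ < |ρ.im|}) :
      ‖Fdelta δ ρ‖ ≤ analyticOrderNatAt χ.LFunction ρ * ‖Fdelta δ ρ‖ :=
    le_mul_of_one_le_left (norm_nonneg _) <|
      mod_cast HighZeros.one_le_analyticOrderNatAt_LFunction χ ρ.2.2.2.1 ρ.2.1
  exact ((summable.of_nonneg_of_le (fun _ ↦ norm_nonneg _) le_weighted).tsum_le_tsum le_weighted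
    summable).trans tsum_le
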